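/- Every 30-connected graph is 4-linked. -/

import Mathlib

/-!
The theorem follows from a statement that survives deletion and contraction of edges. Call a pair
`(I, S)` of disjoint vertex sets *massed* if more than `15 |I|` edges of `G[I ∪ S]` have an end in
`I`, and no separation `(I', S')` with `I' ⊆ I` and `|S'| < |S|` has the same surplus of edges.
The claim (`Massed.knit`) is that in a massed pair with `|S| ≤ 8` the set `S` is *knitted*: any
prescribed disjoint pairs of vertices of `S` can be joined by disjoint paths in `G[I ∪ S]`. In a
30-connected graph all degrees are at least 30, and every set of eight vertices together with its
complement forms a massed pair (`massed_of_connected`).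

Take a counterexample with `|I|` minimal (`Bad`).

* A knitted piece `(I', S')` with few edges cannot occur: a largest one could be replaced by a
  clique on `S'` (`no_rigid`). Together with Menger's theorem this shows that no part of the graph
  in which small sets can be knitted exists (`no_target`): if the disjoint paths from `S` into it
  exist, they carry its linkages back to `S`; otherwise a small separation does the same and is
  replaced by a clique.
* Edges inside `I` can be deleted until at most one edge is superfluous (`exists_sparse`).
  Contraction of an edge must destroy the surplus (`cnt_contract_le`), so adjacent vertices have at
  least 15 common neighbours (`common_I`, with the variant `common_S` at `S`). A double count gives
  a vertex `v ∈ I` of degree at most 29 (`exists_low_degree`).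
* The closed neighbourhood `H` of `v` has at most 30 vertices and degrees at least 16 inside `H`.
  Such a dense set either links any four pairs or contains a *hub*, a set of at least eight
  vertices any four disjoint pairs of which are linked inside it (`knit_or_hub`). Pairs are joined
  one after another by shortest paths of length at most four, and the last pair goes through `v`.
  If after two links `m1`, `m2` the third pair `s, t` is stuck, then `s` and `t` see different
  components of what remains; since a vertex has at most three neighbours on a shortest link, the
  degree bound forces these components to be almost complete, and one of them yields a hub
  (`Cfg3.hub`).

Either outcome contradicts `no_target`.

Disjoint paths are encoded by colourings or by disjoint vertex sets: `Conn G Q a b` says that `a`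
and `b` are joined by a walk inside `Q`, and paths are extracted only at the very end. Edges are
counted as ordered pairs (`cnt`), which doubles all constants.
-/

open SimpleGraph

/-- `G` is `k`-linked: any `2k` distinct vertices, grouped into `k` pairs, can be joined
by `k` pairwise vertex-disjoint paths. -/
def Linked {V : Type} (G : SimpleGraph V) (k : ℕ) : Prop :=
  ∀ u v : Fin k → V,
    Function.Injective (Sum.elim u v) →
    ∃ P : (i : Fin k) → G.Walk (u i) (v i),
      (∀ i, (P i).IsPath) ∧
      ∀ i j, i ≠ j → ∀ x ∈ (P i).support, x ∉ (P j).support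

/-- `G` is `(2,…,2,1)`-knitted with `k` twos: any `k` pairs of vertices together with one
further vertex `u₀` (all distinct) can be linked by `k` pairwise vertex-disjoint paths,
each avoiding `u₀`. -/
def KnittedOne {V : Type} (G : SimpleGraph V) (k : ℕ) : Prop :=
  ∀ (u₀ : V) (u v : Fin k → V),
    Function.Injective (Sum.elim (Sum.elim u v) (fun _ : Unit => u₀)) →
    ∃ P : (i : Fin k) → G.Walk (u i) (v i),
      (∀ i, (P i).IsPath) ∧
      (∀ i, u₀ ∉ (P i).support) ∧
      ∀ i j, i ≠ j → ∀ x ∈ (P i).support, x ∉ (P j).support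

/-- `H` is a minor of `G`, witnessed by pairwise-disjoint nonempty connected branch sets. -/
def IsMinor {W V : Type} (H : SimpleGraph W) (G : SimpleGraph V) : Prop :=
  ∃ f : W → Set V,
    (∀ w, (f w).Nonempty) ∧
    (∀ w, (G.induce (f w)).Connected) ∧
    (Pairwise fun w w' => Disjoint (f w) (f w')) ∧
    (∀ ⦃w w'⦄, H.Adj w w' → ∃ a ∈ f w, ∃ b ∈ f w', G.Adj a b)

/-- `H` is a proper minor of `G`. -/
def IsProperMinor {W V : Type} (H : SimpleGraph W) (G : SimpleGraph V) : Prop :=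
  IsMinor H G ∧ ¬ IsMinor G H

/-- `G` is `k`-contraction-critical: its chromatic number is `k`, but every proper minor
is `(k-1)`-colorable. -/
def ContractionCritical {V : Type} (k : ℕ) (G : SimpleGraph V) : Prop :=
  G.chromaticNumber = (k : ENat) ∧
  ∀ (W : Type) (H : SimpleGraph W), IsProperMinor H G → H.Colorable (k - 1)

/-- `G` is `t`-connected: more than `t` vertices, and deleting any fewer than `t`
vertices leaves it connected. -/
def KConnected {V : Type} [Fintype V] (G : SimpleGraph V) (t : ℕ) : Prop :=
  t < Fintype.card V ∧
  ∀ S : Finset V, S.card < t → (G.induce {v : V | v ∉ S}).Connected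

/-- Independence number of the subgraph of `G` induced on `S`. -/
noncomputable def alphaOn {V : Type} (G : SimpleGraph V) (S : Set V) : ℕ :=
  sSup {n | ∃ t : Finset V, ↑t ⊆ S ∧ t.card = n ∧
    ∀ a ∈ t, ∀ b ∈ t, a ≠ b → ¬ G.Adj a b}

/-- Number of common neighbors of `a` and `b` in `G`. -/
noncomputable def commonNbrs {V : Type} (G : SimpleGraph V) (a b : V) : ℕ :=
  {x : V | G.Adj a x ∧ G.Adj b x}.ncard

/-! ### Connections and knitted sets -/

namespace LinkProof
section
open scoped Classical
variable {V : Type}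

/-- `Conn G Q a b`: some walk of `G` from `a` to `b` has all its vertices in `Q`. -/
inductive Conn (G : SimpleGraph V) (Q : Set V) : V → V → Prop
  | nil {a : V} : a ∈ Q → Conn G Q a a
  | cons {a b c : V} : a ∈ Q → G.Adj a b → Conn G Q b c → Conn G Q a c

namespace Conn
variable {G G' : SimpleGraph V} {Q Q' : Set V} {a b c : V}

theorem left (h : Conn G Q a b) : a ∈ Q := by cases h <;> assumption

theorem right (h : Conn G Q a b) : b ∈ Q := by
  induction h <;> assumption

theorem trans (h : Conn G Q a b) (h' : Conn G Q b c) : Conn G Q a c := by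
  induction h with
  | nil _ => exact h'
  | cons ha hab _ ih => exact cons ha hab (ih h')

theorem adj (ha : a ∈ Q) (hb : b ∈ Q) (h : G.Adj a b) : Conn G Q a b := cons ha h (nil hb)

theorem symm (h : Conn G Q a b) : Conn G Q b a := by
  induction h with
  | nil ha => exact nil ha
  | cons ha hab h ih => exact ih.trans (adj h.left ha hab.symm)

/-- Edges of a walk may be replaced by walks. -/
theorem lift (hE : ∀ x ∈ Q, ∀ y ∈ Q, G.Adj x y → Conn G' Q' x y) (hQ : Q ⊆ Q')
    (h : Conn G Q a b) : Conn G' Q' a b := by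
  induction h with
  | nil ha => exact nil (hQ ha)
  | cons ha hab h ih => exact (hE _ ha _ h.left hab).trans ih

theorem mono (hG : G ≤ G') (hQ : Q ⊆ Q') (h : Conn G Q a b) : Conn G' Q' a b :=
  h.lift (fun _ hx _ hy e => adj (hQ hx) (hQ hy) (hG e)) hQ

theorem monoQ (hQ : Q ⊆ Q') (h : Conn G Q a b) : Conn G Q' a b := h.mono le_rfl hQ

theorem exists_walk (h : Conn G Q a b) : ∃ w : G.Walk a b, ∀ x ∈ w.support, x ∈ Q := by
  induction h with
  | nil ha => exact ⟨.nil, by simpa using ha⟩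
  | cons ha hab h ih =>
    obtain ⟨w, hw⟩ := ih
    refine ⟨.cons hab w, ?_⟩
    intro x hx
    rw [SimpleGraph.Walk.support_cons, List.mem_cons] at hx
    rcases hx with rfl | hx
    · exact ha
    · exact hw x hx

theorem exists_path (h : Conn G Q a b) :
    ∃ w : G.Walk a b, w.IsPath ∧ ∀ x ∈ w.support, x ∈ Q := by
  obtain ⟨w, hw⟩ := h.exists_walk
  exact ⟨w.bypass, w.bypass_isPath, fun x hx => hw x (w.support_bypass_subset_support hx)⟩

theorem of_walk (w : G.Walk a b) (hw : ∀ x ∈ w.support, x ∈ Q) : Conn G Q a b := by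
  induction w with
  | nil => exact nil (hw _ (by simp))
  | cons h p ih =>
    exact cons (hw _ (by simp)) h (ih fun x hx => hw x (by simp [hx]))

/-- A walk from a member of `P` to a non-member leaves `P` along some edge. -/
theorem exists_boundary (P : Set V) (h : Conn G Q a b) (ha : a ∈ P) (hb : b ∉ P) :
    ∃ x y, x ∈ P ∧ y ∉ P ∧ x ∈ Q ∧ y ∈ Q ∧ G.Adj x y ∧ Conn G (Q ∩ P) a x := by
  induction h with
  | nil _ => exact absurd ha hb
  | @cons a b' c haQ hab h ih =>
    by_cases hb' : b' ∈ P
    · obtain ⟨x, y, hx, hy, hxQ, hyQ, hxy, hc⟩ := ih hb' hb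
      exact ⟨x, y, hx, hy, hxQ, hyQ, hxy, cons ⟨haQ, ha⟩ hab hc⟩
    · exact ⟨a, b', ha, hb', haQ, h.left, hab, nil ⟨haQ, ha⟩⟩

/-- The part of a walk up to its first vertex in `T`; every vertex but the last is recorded as
reachable outside `T`. -/
theorem exists_first (T : Set V) (h : Conn G Q a b) (hb : b ∈ T) :
    ∃ t ∈ T, t ∈ Q ∧ Conn G ({c | Conn G (Q \ T) a c} ∪ {t}) a t := by
  induction h with
  | nil ha => exact ⟨_, hb, ha, nil (by simp)⟩
  | @cons a b' c haQ hab h ih =>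
    by_cases ha : a ∈ T
    · exact ⟨a, ha, haQ, nil (by simp)⟩
    · obtain ⟨t, ht, htQ, hc⟩ := ih hb
      refine ⟨t, ht, htQ, cons (Or.inl (nil ⟨haQ, ha⟩)) hab (hc.monoQ ?_)⟩
      rintro x (hx | hx)
      · exact Or.inl (cons ⟨haQ, ha⟩ hab hx)
      · exact Or.inr hx

end Conn

/-- `Knit G A S`: for every colouring of `S` with colour classes of size at most two, the
vertices of each class can be joined inside `A`, different classes disjointly. The disjoint
paths are encoded by one colouring `col` of all vertices extending the given one: the path
for a class only uses vertices of that colour. -/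
def Knit (G : SimpleGraph V) (A S : Finset V) : Prop :=
  ∀ (K : Type) (κ : V → K),
    (∀ x ∈ S, ∀ y ∈ S, ∀ z ∈ S, κ x = κ y → κ y = κ z → x = y ∨ y = z ∨ x = z) →
    ∃ col : V → K, (∀ x ∈ S, col x = κ x) ∧
      ∀ x ∈ S, ∀ y ∈ S, κ x = κ y → Conn G {u | u ∈ A ∧ col u = κ x} x y

theorem Knit.mono {G G' : SimpleGraph V} {A A' S : Finset V} (hG : G ≤ G') (hA : A ⊆ A')
    (h : Knit G A S) : Knit G' A' S := by
  intro K κ hκ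
  obtain ⟨col, h1, h2⟩ := h K κ hκ
  exact ⟨col, h1, fun x hx y hy e => (h2 x hx y hy e).mono hG fun u hu => ⟨hA hu.1, hu.2⟩⟩

/-- `G` with all edges between the vertices of `S` added. -/
def addClique (G : SimpleGraph V) (S : Finset V) : SimpleGraph V where
  Adj a b := G.Adj a b ∨ (a ∈ S ∧ b ∈ S ∧ a ≠ b)
  symm := ⟨fun a b h => by
    rcases h with h | ⟨h1, h2, h3⟩
    · exact Or.inl h.symm
    · exact Or.inr ⟨h2, h1, h3.symm⟩⟩
  loopless := ⟨fun a h => by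
    rcases h with h | ⟨_, _, h3⟩
    · exact G.loopless.irrefl a h
    · exact h3 rfl⟩

theorem le_addClique (G : SimpleGraph V) (S : Finset V) : G ≤ addClique G S :=
  fun _ _ h => Or.inl h

/-- A walk using virtual edges inside `S'` can be shortcut to use only one of them. -/
theorem Conn.shortcut {G : SimpleGraph V} {S' : Finset V} {M : Set V} {x y : V}
    (h : Conn (addClique G S') M x y) :
    Conn G M x y ∨ ∃ p q, p ∈ S' ∧ q ∈ S' ∧ Conn G M x p ∧ Conn G M q y := by
  induction h with
  | nil ha => exact Or.inl (.nil ha)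
  | @cons a b c ha hab h ih =>
    rcases hab with hab | ⟨h1, h2, -⟩
    · rcases ih with ih | ⟨p, q, hp, hq, h3, h4⟩
      · exact Or.inl (.cons ha hab ih)
      · exact Or.inr ⟨p, q, hp, hq, .cons ha hab h3, h4⟩
    · rcases ih with ih | ⟨p, q, hp, hq, h3, h4⟩
      · exact Or.inr ⟨a, b, h1, h2, .nil ha, ih⟩
      · exact Or.inr ⟨a, q, h1, hq, .nil ha, h4⟩

/-- Virtual edges inside `S'` can be realised by paths through `I'` when `S'` is knit in
`I' ∪ S'`. -/
theorem Knit.of_addClique {G : SimpleGraph V} {A S I' S' : Finset V}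
    (h1 : Knit G (I' ∪ S') S') (h2 : Knit (addClique G S') A S) (hS : S ⊆ A) (hS' : S' ⊆ A)
    (hd : Disjoint A I') : Knit G (A ∪ I') S := by
  intro K κ hκ
  rcases isEmpty_or_nonempty V with hV | hV
  · exact ⟨κ, fun _ _ => rfl, fun x => isEmptyElim x⟩
  obtain ⟨col', hc1, hc2⟩ := h2 K κ hκ
  -- in each colour at most one virtual edge is needed; `p`, `q` are the vertices it bridges
  have key : ∀ i : K, ∃ p q : V, ∀ x ∈ S, ∀ y ∈ S, κ x = i → κ y = i →
      Conn G {u | u ∈ A ∧ col' u = i} x y ∨ (p ∈ S' ∧ q ∈ S' ∧ col' p = i ∧ col' q = i ∧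
        ((Conn G {u | u ∈ A ∧ col' u = i} x p ∧ Conn G {u | u ∈ A ∧ col' u = i} q y) ∨
        (Conn G {u | u ∈ A ∧ col' u = i} x q ∧ Conn G {u | u ∈ A ∧ col' u = i} p y))) := by
    intro i
    by_cases hi : ∃ x ∈ S, ∃ y ∈ S, κ x = i ∧ κ y = i ∧ x ≠ y
    · obtain ⟨x, hx, y, hy, hxi, hyi, hxy⟩ := hi
      have hc := hc2 x hx y hy (hxi.trans hyi.symm)
      rw [hxi] at hc
      have cases3 : ∀ z ∈ S, κ z = i → z = x ∨ z = y := by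
        intro z hz hzi
        rcases hκ x hx y hy z hz (hxi.trans hyi.symm) (hyi.trans hzi.symm) with h | h | h
        · exact absurd h hxy
        · exact Or.inr h.symm
        · exact Or.inl h.symm
      have hx0 : Conn G {u | u ∈ A ∧ col' u = i} x x := .nil ⟨hS hx, (hc1 x hx).trans hxi⟩
      have hy0 : Conn G {u | u ∈ A ∧ col' u = i} y y := .nil ⟨hS hy, (hc1 y hy).trans hyi⟩
      rcases hc.shortcut with h | ⟨p, q, hp, hq, h3, h4⟩
      · refine ⟨x, x, fun z hz w hw hzi hwi => Or.inl ?_⟩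
        rcases cases3 z hz hzi with rfl | rfl <;> rcases cases3 w hw hwi with rfl | rfl
        · exact hx0
        · exact h
        · exact h.symm
        · exact hy0
      · refine ⟨p, q, fun z hz w hw hzi hwi => ?_⟩
        rcases cases3 z hz hzi with rfl | rfl <;> rcases cases3 w hw hwi with rfl | rfl
        · exact Or.inl hx0
        · exact Or.inr ⟨hp, hq, h3.right.2, h4.left.2, Or.inl ⟨h3, h4⟩⟩
        · exact Or.inr ⟨hp, hq, h3.right.2, h4.left.2, Or.inr ⟨h4.symm, h3.symm⟩⟩
        · exact Or.inl hy0
    · obtain ⟨v0⟩ := hV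
      refine ⟨v0, v0, fun x hx y hy hxi hyi => Or.inl ?_⟩
      have : x = y := by
        by_contra hxy
        exact hi ⟨x, hx, y, hy, hxi, hyi, hxy⟩
      subst this
      exact .nil ⟨hS hx, (hc1 x hx).trans hxi⟩
  choose p q hpq using key
  -- colour `S'`: the selected ends keep their colour, all other vertices become singletons
  obtain ⟨col, hd1, hd2⟩ := h1 (K ⊕ V)
    (fun u => if u = p (col' u) ∨ u = q (col' u) then Sum.inl (col' u) else Sum.inr u) (by
      intro x _ y _ z _ hxy hyz
      split_ifs at hxy hyz with a1 a2 a3 a3 a2 a3 <;> simp_all <;> grind)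
  have hnew : ∀ u ∈ S', ∀ i, col u = Sum.inl i → col' u = i := by
    intro u hu i h
    rw [hd1 u hu] at h
    split_ifs at h with h'
    exact Sum.inl.inj h
  have hdA : ∀ u ∈ A, u ∉ I' := fun u hu hu' => Finset.disjoint_left.1 hd hu hu'
  -- inside `I'` the new colouring takes over, elsewhere the old one; a singleton colour `inr u` is
  -- replaced by an arbitrary one
  refine ⟨fun u => if u ∈ I' then Sum.elim id col' (col u) else col' u, ?_, ?_⟩
  · intro x hx
    simp only [hdA x (hS hx), if_false]
    exact hc1 x hx
  · intro x hx y hy hxy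
    have hsub : ∀ i, {u | u ∈ A ∧ col' u = i} ⊆ {u | u ∈ A ∪ I' ∧
        (if u ∈ I' then Sum.elim id col' (col u) else col' u) = i} := by
      intro i u hu
      refine ⟨Finset.mem_union_left _ hu.1, ?_⟩
      simp only [hdA u hu.1, if_false]
      exact hu.2
    have mid : ∀ p0 q0, p0 ∈ S' → q0 ∈ S' → ∀ i, col p0 = Sum.inl i → col q0 = Sum.inl i →
        Conn G {u | u ∈ A ∪ I' ∧
          (if u ∈ I' then Sum.elim id col' (col u) else col' u) = i} p0 q0 := by
      intro p0 q0 hp0 hq0 i h1 h2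
      have := hd2 p0 hp0 q0 hq0 (by rw [← hd1 p0 hp0, ← hd1 q0 hq0, h1, h2])
      refine this.monoQ ?_
      rintro u ⟨hu, hcu⟩
      have hcu' : col u = Sum.inl i := by rw [hcu, ← hd1 p0 hp0, h1]
      rcases Finset.mem_union.1 hu with hu | hu
      · refine ⟨Finset.mem_union_right _ hu, ?_⟩
        simp [hu, hcu']
      · refine ⟨Finset.mem_union_left _ (hS' hu), ?_⟩
        simp only [hdA u (hS' hu), if_false]
        exact hnew u hu i hcu'
    rcases hpq (κ x) x hx y hy rfl hxy.symm with h | ⟨hp, hq, hpi, hqi, h⟩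
    · exact h.monoQ (hsub _)
    · have e1 : col (p (κ x)) = Sum.inl (κ x) := by rw [hd1 _ hp]; simp [hpi]
      have e2 : col (q (κ x)) = Sum.inl (κ x) := by rw [hd1 _ hq]; simp [hqi]
      rcases h with ⟨h3, h4⟩ | ⟨h3, h4⟩
      · exact ((h3.monoQ (hsub _)).trans (mid _ _ hp hq _ e1 e2)).trans (h4.monoQ (hsub _))
      · exact ((h3.monoQ (hsub _)).trans (mid _ _ hq hp _ e2 e1)).trans (h4.monoQ (hsub _))

/-- `G` with the neighbours of `v` made adjacent to `u`: on the vertices other than `v` this is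
the contraction of `uv` into `u`. -/
def contract (G : SimpleGraph V) (u v : V) : SimpleGraph V where
  Adj a b := G.Adj a b ∨ (a ≠ b ∧ ((a = u ∧ G.Adj v b) ∨ (b = u ∧ G.Adj v a)))
  symm := ⟨fun a b h => by
    rcases h with h | ⟨h1, h2⟩
    · exact Or.inl h.symm
    · exact Or.inr ⟨h1.symm, h2.symm⟩⟩
  loopless := ⟨fun a h => by
    rcases h with h | ⟨h3, _⟩
    · exact G.loopless.irrefl a h
    · exact h3 rfl⟩

theorem le_contract (G : SimpleGraph V) (u v : V) : G ≤ contract G u v :=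
  fun _ _ h => Or.inl h

/-- Knittedness lifts from a contraction: `v` receives the colour of `u`, and each new edge at `u` is
replaced by the path through `v`. -/
theorem Knit.of_contract {G : SimpleGraph V} {A S : Finset V} {u v : V}
    (h : Knit (contract G u v) A S) (huv : G.Adj u v) (hv : v ∉ A) (hS : S ⊆ A) :
    Knit G (insert v A) S := by
  intro K κ hκ
  obtain ⟨col, h1, h2⟩ := h K κ hκ
  have hne : ∀ x ∈ A, x ≠ v := fun x hx e => hv (e ▸ hx)
  refine ⟨fun x => if x = v then col u else col x, ?_, ?_⟩
  · intro x hx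
    simp only [hne x (hS hx), if_false]
    exact h1 x hx
  · intro x hx y hy hxy
    have hsub : {w | w ∈ A ∧ col w = κ x} ⊆ {w | w ∈ insert v A ∧
        (if w = v then col u else col w) = κ x} := by
      rintro w ⟨hw, hw'⟩
      refine ⟨Finset.mem_insert_of_mem hw, ?_⟩
      simp only [hne w hw, if_false]
      exact hw'
    refine (h2 x hx y hy hxy).lift ?_ hsub
    intro a ha b hb hab
    have hv' : ∀ w, w = u → w ∈ {w | w ∈ A ∧ col w = κ x} → v ∈ {w | w ∈ insert v A ∧
        (if w = v then col u else col w) = κ x} := by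
      rintro w rfl hw
      exact ⟨Finset.mem_insert_self _ _, by simpa using hw.2⟩
    rcases hab with hab | ⟨-, ⟨rfl, hvb⟩ | ⟨rfl, hva⟩⟩
    · exact .adj (hsub ha) (hsub hb) hab
    · exact .cons (hsub ha) huv (.adj (hv' _ rfl ha) (hsub hb) hvb)
    · exact .cons (hsub ha) hva.symm (.adj (hv' _ rfl hb) (hsub hb) huv.symm)

/-- Disjoint paths from `S'` to `L` inside `A'`, meeting `L` only in their last vertices. The
path starting at `s` runs inside `Q s` and ends in `f s`. -/
def Route (G : SimpleGraph V) (A' S' L : Finset V) (f : V → V) (Q : V → Set V) : Prop :=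
  (∀ s ∈ S', f s ∈ L ∧ Conn G (Q s) s (f s) ∧ (∀ x ∈ Q s, x ∈ A' ∧ (x ∈ L → x = f s))) ∧
  ∀ s ∈ S', ∀ t ∈ S', s ≠ t → Disjoint (Q s) (Q t)

theorem Route.injOn {G : SimpleGraph V} {A' S' L : Finset V} {f : V → V} {Q : V → Set V}
    (h : Route G A' S' L f Q) : Set.InjOn f S' := by
  intro s hs t ht hst
  by_contra hne
  have h1 := (h.1 s hs).2.1.right
  have h2 := (h.1 t ht).2.1.right
  rw [hst] at h1
  exact Set.disjoint_left.1 (h.2 s hs t ht hne) h1 h2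

/-- Knittedness is transported along disjoint paths. -/
theorem Route.knit {G : SimpleGraph V} {A' S' L : Finset V} {f : V → V} {Q : V → Set V}
    (h : Route G A' S' L f Q) (hL : L ⊆ A') (hk : Knit G L (S'.image f)) : Knit G A' S' := by
  have hinj := h.injOn
  obtain ⟨h1, h2⟩ := h
  intro K κ hκ
  rcases isEmpty_or_nonempty V with hV | hV
  · exact ⟨κ, fun _ _ => rfl, fun x => isEmptyElim x⟩
  -- colour the ends of the paths like their starting points
  have hg : ∃ g : V → V, ∀ s ∈ S', g (f s) = s := by
    refine ⟨Function.invFunOn f S', fun s hs => hinj.leftInvOn_invFunOn hs⟩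
  obtain ⟨g, hg⟩ := hg
  obtain ⟨col', c1, c2⟩ := hk K (κ ∘ g) (by
    simp only [Finset.mem_image, Function.comp]
    rintro _ ⟨x, hx, rfl⟩ _ ⟨y, hy, rfl⟩ _ ⟨z, hz, rfl⟩
    rw [hg x hx, hg y hy, hg z hz]
    intro e1 e2
    rcases hκ x hx y hy z hz e1 e2 with h | h | h <;> simp [h])
  have c1' : ∀ s ∈ S', col' (f s) = κ s := fun s hs => by
    rw [c1 _ (Finset.mem_image_of_mem f hs)]; simp [hg s hs]
  -- each path gets the colour of its starting point; the other vertices keep theirs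
  let col : V → K := fun x => if hx : ∃ s ∈ S', x ∈ Q s then κ hx.choose else col' x
  have hQ : ∀ s ∈ S', ∀ x ∈ Q s, col x = κ s := by
    intro s hs x hx
    have he : ∃ s ∈ S', x ∈ Q s := ⟨s, hs, hx⟩
    have : he.choose = s := by
      by_contra hne
      exact Set.disjoint_left.1 (h2 _ he.choose_spec.1 s hs hne) he.choose_spec.2 hx
    simp only [col, dif_pos he, this]
  have hcL : ∀ x ∈ L, col x = col' x := by
    intro x hx
    by_cases he : ∃ s ∈ S', x ∈ Q s
    · obtain ⟨s, hs, hxs⟩ := he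
      rw [hQ s hs x hxs, ((h1 s hs).2.2 x hxs).2 hx, c1' s hs]
    · simp only [col, dif_neg he]
  refine ⟨col, fun x hx => hQ x hx x (h1 x hx).2.1.left, ?_⟩
  have hQsub : ∀ s ∈ S', Q s ⊆ {u | u ∈ A' ∧ col u = κ s} := fun s hs x hx =>
    ⟨((h1 s hs).2.2 x hx).1, hQ s hs x hx⟩
  intro x hx y hy hxy
  have hm : Conn G {u | u ∈ A' ∧ col u = κ x} (f x) (f y) := by
    have := c2 (f x) (Finset.mem_image_of_mem f hx) (f y) (Finset.mem_image_of_mem f hy)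
      (by simp [hg x hx, hg y hy, hxy])
    refine this.monoQ ?_
    rintro u ⟨hu, hu'⟩
    refine ⟨hL hu, ?_⟩
    rw [hcL u hu, hu']
    simp [hg x hx]
  refine (((h1 x hx).2.1.monoQ (hQsub x hx)).trans hm).trans ?_
  rw [hxy]
  exact ((h1 y hy).2.1.monoQ (hQsub y hy)).symm

end
end LinkProof

/-! ### Menger's theorem -/

namespace LinkProof
section
open scoped Classical
variable {V : Type}

theorem exists_inj_fin {s : Finset V} {k : ℕ} (h : k ≤ s.card) :
    ∃ f : Fin k → V, Function.Injective f ∧ ∀ i, f i ∈ s := by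
  have : Nonempty (Fin k ↪ s) := Function.Embedding.nonempty_of_card_le (by simpa using h)
  obtain ⟨e⟩ := this
  exact ⟨fun i => e i, fun i j hij => e.injective (Subtype.ext hij), fun i => (e i).2⟩

/-- The ordered pairs of adjacent vertices of `A`. -/
noncomputable def adjPairs (G : SimpleGraph V) (A : Finset V) : Finset (V × V) :=
  (A ×ˢ A).filter fun p => G.Adj p.1 p.2

theorem mem_adjPairs {G : SimpleGraph V} {A : Finset V} {p : V × V} :
    p ∈ adjPairs G A ↔ (p.1 ∈ A ∧ p.2 ∈ A) ∧ G.Adj p.1 p.2 := by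
  simp [adjPairs]

/-- Deleting an edge: a walk either survives or crosses the edge once in one direction. -/
theorem Conn.deleteEdge {G : SimpleGraph V} {M : Set V} {x y a b : V} (h : Conn G M a b) :
    Conn (G.deleteEdges {s(x, y)}) M a b ∨
    (Conn (G.deleteEdges {s(x, y)}) M a x ∧ Conn (G.deleteEdges {s(x, y)}) M y b) ∨
    (Conn (G.deleteEdges {s(x, y)}) M a y ∧ Conn (G.deleteEdges {s(x, y)}) M x b) := by
  induction h with
  | nil ha => exact Or.inl (.nil ha)
  | @cons a b c ha hab h ih =>
    by_cases he : s(a, b) = s(x, y)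
    · rw [Sym2.eq_iff] at he
      rcases he with ⟨rfl, rfl⟩ | ⟨rfl, rfl⟩
      · rcases ih with ih | ⟨_, ih⟩ | ⟨_, ih⟩
        · exact Or.inr (Or.inl ⟨.nil ha, ih⟩)
        · exact Or.inr (Or.inl ⟨.nil ha, ih⟩)
        · exact Or.inl ih
      · rcases ih with ih | ⟨_, ih⟩ | ⟨_, ih⟩
        · exact Or.inr (Or.inr ⟨.nil ha, ih⟩)
        · exact Or.inl ih
        · exact Or.inr (Or.inr ⟨.nil ha, ih⟩)
    · have hab' : (G.deleteEdges {s(x, y)}).Adj a b := by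
        rw [SimpleGraph.deleteEdges_adj]
        exact ⟨hab, by simpa using he⟩
      rcases ih with ih | ⟨ih1, ih2⟩ | ⟨ih1, ih2⟩
      · exact Or.inl (.cons ha hab' ih)
      · exact Or.inr (Or.inl ⟨.cons ha hab' ih1, ih2⟩)
      · exact Or.inr (Or.inr ⟨.cons ha hab' ih1, ih2⟩)

/-- `Y` meets every `X`–`T` path inside `A`. -/
def Separates (G : SimpleGraph V) (A X T Y : Finset V) : Prop :=
  ∀ a ∈ X, ∀ b ∈ T, ¬ Conn G {u | u ∈ A ∧ u ∉ Y} a b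

theorem Separates.symm {G : SimpleGraph V} {A X T Y : Finset V} (h : Separates G A X T Y) :
    Separates G A T X Y := fun a ha b hb hc => h b hb a ha hc.symm

/-- There are `k` disjoint `X`–`T` paths inside `A`. -/
def Paths (G : SimpleGraph V) (A X T : Finset V) (k : ℕ) : Prop :=
  ∃ (a b : Fin k → V) (Q : Fin k → Set V), (∀ i, a i ∈ X ∧ b i ∈ T ∧ (∀ x ∈ Q i, x ∈ A) ∧
    Conn G (Q i) (a i) (b i)) ∧ ∀ i j, i ≠ j → Disjoint (Q i) (Q j)

/-- Disjoint paths may be cut off at their first vertex in the target. -/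
theorem Paths.trim {G : SimpleGraph V} {A X T : Finset V} {k : ℕ} (h : Paths G A X T k) :
    ∃ (a b : Fin k → V) (Q : Fin k → Set V), (∀ i, a i ∈ X ∧ b i ∈ T ∧
      (∀ x ∈ Q i, x = b i ∨ Conn G {u | u ∈ A ∧ u ∉ T} (a i) x) ∧ (∀ x ∈ Q i, x ∈ A) ∧
      Conn G (Q i) (a i) (b i)) ∧ ∀ i j, i ≠ j → Disjoint (Q i) (Q j) := by
  obtain ⟨a, b, Q, h1, h2⟩ := h
  choose t htT htQ ht using fun i => (h1 i).2.2.2.exists_first (T : Set V) (h1 i).2.1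
  have hsub : ∀ i, ({c | Conn G (Q i \ T) (a i) c} ∪ {t i} : Set V) ⊆ Q i := by
    rintro i c (hc | hc)
    · exact hc.right.1
    · rw [Set.mem_singleton_iff.1 hc]; exact htQ i
  refine ⟨a, t, fun i => {c | Conn G (Q i \ T) (a i) c} ∪ {t i}, fun i =>
    ⟨(h1 i).1, htT i, ?_, fun x hx => (h1 i).2.2.1 x (hsub i hx), ht i⟩, ?_⟩
  · rintro x (hx | hx)
    · exact Or.inr (hx.monoQ fun u hu => ⟨(h1 i).2.2.1 u hu.1, hu.2⟩)
    · exact Or.inl hx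
  · intro i j hij
    exact (h2 i j hij).mono (hsub i) (hsub j)

/-- A set separating `X` from `Y + x` in `G - xy` separates `X` from `T` in `G`, provided `Y`
separates `X` from `T` in `G - xy` while `y` still reaches `T`. -/
theorem sep_of_sep_delete {G : SimpleGraph V} {A X T Y Z : Finset V} {x y : V}
    (hY : Separates (G.deleteEdges {s(x, y)}) A X T Y)
    (hy : ∃ b ∈ T, Conn (G.deleteEdges {s(x, y)}) {u | u ∈ A ∧ u ∉ Y} y b)
    (hZ : Separates (G.deleteEdges {s(x, y)}) A X (insert x Y) Z) : Separates G A X T Z := by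
  intro a ha b hb hc
  set G' := G.deleteEdges {s(x, y)} with hG'
  -- `R` is the part reached from `X` in `G - xy` before meeting `Z` or `Y + x`; a walk avoiding `Z`
  -- has to leave it along an edge of `G`
  set D : Set V := {u | (u ∈ A ∧ u ∉ Z) ∧ u ∉ insert x Y} with hD
  set R : Set V := {c | ∃ a ∈ X, Conn G' D a c} with hR
  have hDZ : D ⊆ {u | u ∈ A ∧ u ∉ Z} := fun u hu => hu.1
  have hDY : D ⊆ {u | u ∈ A ∧ u ∉ Y} := fun u hu =>
    ⟨hu.1.1, fun h => hu.2 (Finset.mem_insert_of_mem h)⟩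
  have haR : a ∈ R := by
    refine ⟨a, ha, .nil ⟨hc.left, fun h => hZ a ha a h (.nil hc.left)⟩⟩
  have hbR : b ∉ R := by
    rintro ⟨a', ha', hc'⟩
    exact hY a' ha' b hb (hc'.monoQ hDY)
  obtain ⟨p, q, hp, hq, hpA, hqA, hpq, -⟩ := hc.exists_boundary R haR hbR
  obtain ⟨a', ha', hcp⟩ := hp
  by_cases he : s(p, q) = s(x, y)
  · rw [Sym2.eq_iff] at he
    rcases he with ⟨rfl, rfl⟩ | ⟨rfl, rfl⟩
    · exact hcp.right.2 (Finset.mem_insert_self _ _)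
    · obtain ⟨b', hb', hyb⟩ := hy
      exact hY a' ha' b' hb' ((hcp.monoQ hDY).trans hyb)
  · have hpq' : G'.Adj p q := by
      rw [hG', SimpleGraph.deleteEdges_adj]
      exact ⟨hpq, by simpa using he⟩
    by_cases hqW : q ∈ insert x Y
    · exact hZ a' ha' q hqW ((hcp.monoQ hDZ).trans (.adj hpA hqA hpq'))
    · exact hq ⟨a', ha', hcp.trans (.adj hcp.right ⟨hqA, hqW⟩ hpq')⟩

/-- The gluing step in the proof of Menger's theorem. `Y` separates `X` from `T` in `G - xy` but is
too small to do so in `G`. By the inductive hypothesis there are `k` disjoint paths from `X` to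
`Y + x` and `k` from `T` to `Y + y`; they meet only in `Y`, and are joined there and along `xy`. -/
theorem menger_step {G : SimpleGraph V} {A X T Y : Finset V} {k : ℕ} {x y : V}
    (hxy : G.Adj x y)
    (hsep : ∀ Z, Separates G A X T Z → k ≤ Z.card)
    (IH : ∀ X T : Finset V, (∀ Z, Separates (G.deleteEdges {s(x, y)}) A X T Z → k ≤ Z.card) →
      Paths (G.deleteEdges {s(x, y)}) A X T k)
    (hY : Separates (G.deleteEdges {s(x, y)}) A X T Y) (hYk : Y.card < k)
    (hx : ∃ a ∈ X, Conn (G.deleteEdges {s(x, y)}) {u | u ∈ A ∧ u ∉ Y} a x)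
    (hy : ∃ b ∈ T, Conn (G.deleteEdges {s(x, y)}) {u | u ∈ A ∧ u ∉ Y} y b) :
    Paths G A X T k := by
  have hsw : G.deleteEdges {s(y, x)} = G.deleteEdges {s(x, y)} := by rw [Sym2.eq_swap]
  have hxY : x ∉ Y := by obtain ⟨a, _, h⟩ := hx; exact h.right.2
  have hyY : y ∉ Y := by obtain ⟨a, _, h⟩ := hy; exact h.left.2
  have hx' : ∃ a ∈ X, Conn (G.deleteEdges {s(y, x)}) {u | u ∈ A ∧ u ∉ Y} x a := by
    obtain ⟨a, ha, h⟩ := hx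
    exact ⟨a, ha, hsw ▸ h.symm⟩
  have p1 := (IH X (insert x Y) fun Z hZ => hsep Z (sep_of_sep_delete hY hy hZ)).trim
  have p2 := (IH T (insert y Y) fun Z hZ => hsep Z
    (sep_of_sep_delete (x := y) (y := x) (hsw ▸ hY.symm) hx' (hsw ▸ hZ)).symm).trim
  obtain ⟨a, b, Q, h1, h2⟩ := p1
  obtain ⟨a', b', Q', h1', h2'⟩ := p2
  have inj : ∀ {G' : SimpleGraph V} {a b : Fin k → V} {Q : Fin k → Set V},
      (∀ i, Conn G' (Q i) (a i) (b i)) → (∀ i j, i ≠ j → Disjoint (Q i) (Q j)) →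
      Function.Injective b := by
    intro G' a b Q h h' i j hij
    by_contra hne
    have e1 := (h i).right
    rw [hij] at e1
    exact Set.disjoint_left.1 (h' i j hne) e1 (h j).right
  have hb := inj (fun i => (h1 i).2.2.2.2) h2
  have hb' := inj (fun i => (h1' i).2.2.2.2) (h2')
  -- the `k` paths from `T` end in distinct vertices of `Y + y`, so they use up this set
  have hcard : (insert y Y).card = k := by
    have hle : k ≤ (insert y Y).card := by
      calc k = (Finset.univ.image b').card := by rw [Finset.card_image_of_injective _ hb']; simp
        _ ≤ _ := Finset.card_le_card fun z hz => by
          obtain ⟨i, _, rfl⟩ := Finset.mem_image.1 hz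
          exact (h1' i).2.1
    have := Finset.card_insert_le y Y
    omega
  have himg : Finset.univ.image b' = insert y Y := by
    refine Finset.eq_of_subset_of_card_le (fun z hz => ?_) ?_
    · obtain ⟨i, _, rfl⟩ := Finset.mem_image.1 hz
      exact (h1' i).2.1
    · rw [Finset.card_image_of_injective _ hb', hcard]; simp
  have hsurj : ∀ w ∈ insert y Y, ∃ j, b' j = w := by
    intro w hw
    rw [← himg] at hw
    obtain ⟨i, _, h⟩ := Finset.mem_image.1 hw
    exact ⟨i, h⟩
  -- match each path from `X` with the path from `T` that continues it
  have hσ : ∀ i, ∃ j, b' j = if b i = x then y else b i := by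
    intro i
    apply hsurj
    split_ifs with h
    · simp
    · have := (h1 i).2.1
      rw [Finset.mem_insert] at this
      exact Finset.mem_insert_of_mem (this.resolve_left h)
  choose σ hσ using hσ
  have hbY : ∀ i, b i ≠ y := by
    intro i h
    have := (h1 i).2.1
    rw [h, Finset.mem_insert] at this
    exact this.elim (fun h => hxy.ne h.symm) hyY
  have hσinj : Function.Injective σ := by
    intro i j hij
    have e := (hσ i).symm.trans ((congrArg b' hij).trans (hσ j))
    apply hb
    split_ifs at e with h3 h4 h4
    · exact h3.trans h4.symm
    · exact absurd e.symm (hbY j)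
    · exact absurd e (hbY i)
    · exact e
  have hle : G.deleteEdges {s(x, y)} ≤ G := SimpleGraph.deleteEdges_le _
  -- a common vertex off the matched ends would give an `X`–`T` walk in `G - xy` avoiding `Y`
  have cross : ∀ i l, i ≠ l → Disjoint (Q i) (Q' (σ l)) := by
    intro i l hil
    rw [Set.disjoint_left]
    intro c hc hc'
    have m1 : ∀ z : V, {u | u ∈ A ∧ u ∉ insert z Y} ⊆ {u | u ∈ A ∧ u ∉ Y} :=
      fun z u hu => ⟨hu.1, fun h => hu.2 (Finset.mem_insert_of_mem h)⟩
    obtain ⟨a0, ha0, hx0⟩ := hx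
    obtain ⟨b0, hb0, hy0⟩ := hy
    have k1 := (h1 i).2.2.1 c hc
    have k2 := (h1' (σ l)).2.2.1 c hc'
    rcases k1 with rfl | e1 <;> rcases k2 with e2 | e2
    · rw [hσ] at e2
      split_ifs at e2 with h
      · exact hbY i e2
      · exact hil (hb e2)
    · by_cases h : b i = x
      · rw [h] at e2
        exact hY a0 ha0 _ (h1' (σ l)).1 (hx0.trans (e2.monoQ (m1 y)).symm)
      · have := (h1 i).2.1
        rw [Finset.mem_insert] at this
        exact e2.right.2 (Finset.mem_insert_of_mem (this.resolve_left h))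
    · rw [e2, hσ] at e1
      split_ifs at e1 with h
      · exact hY _ (h1 i).1 b0 hb0 ((e1.monoQ (m1 x)).trans hy0)
      · exact e1.right.2 (h1 l).2.1
    · exact hY _ (h1 i).1 _ (h1' (σ l)).1 ((e1.monoQ (m1 x)).trans (e2.monoQ (m1 y)).symm)
  refine ⟨a, fun i => a' (σ i), fun i => Q i ∪ Q' (σ i), fun i =>
    ⟨(h1 i).1, (h1' _).1, ?_, ?_⟩, ?_⟩
  · rintro z (hz | hz)
    · exact (h1 i).2.2.2.1 z hz
    · exact (h1' _).2.2.2.1 z hz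
  · have c1 := (h1 i).2.2.2.2.mono hle (Set.subset_union_left (t := Q' (σ i)))
    have c2 := ((h1' (σ i)).2.2.2.2.mono hle (Set.subset_union_right (s := Q i))).symm
    refine c1.trans (Conn.trans ?_ c2)
    rw [hσ]
    split_ifs with h
    · refine .adj c1.right ?_ (h ▸ hxy)
      have := c2.left
      rwa [hσ, if_pos h] at this
    · exact .nil c1.right
  · intro i j hij
    rw [Set.disjoint_union_left, Set.disjoint_union_right, Set.disjoint_union_right]
    exact ⟨⟨h2 i j hij, cross i j hij⟩, (cross j i hij.symm).symm, h2' _ _ (hσinj.ne hij)⟩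

/-- Menger's theorem, by induction on the number of edges. -/
theorem menger (n : ℕ) : ∀ (G : SimpleGraph V) (A X T : Finset V) (k : ℕ), (adjPairs G A).card ≤ n →
    (∀ Z, Separates G A X T Z → k ≤ Z.card) → Paths G A X T k := by
  induction n using Nat.strong_induction_on with
  | _ n ih =>
  intro G A X T k hn hsep
  by_cases hE : ∃ x ∈ A, ∃ y ∈ A, G.Adj x y
  · obtain ⟨x, hx, y, hy, hxy⟩ := hE
    have hlt : (adjPairs (G.deleteEdges {s(x, y)}) A).card < (adjPairs G A).card := by
      refine Finset.card_lt_card (Finset.ssubset_iff_of_subset ?_ |>.2 ⟨(x, y), ?_, ?_⟩)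
      · intro p hp
        rw [mem_adjPairs] at hp ⊢
        exact ⟨hp.1, SimpleGraph.deleteEdges_le _ hp.2⟩
      · simp [mem_adjPairs, hx, hy, hxy]
      · simp [mem_adjPairs]
    have IH := fun X T => ih _ (lt_of_lt_of_le hlt hn) (G.deleteEdges {s(x, y)}) A X T k le_rfl
    by_cases hY : ∃ Y, Separates (G.deleteEdges {s(x, y)}) A X T Y ∧ Y.card < k
    · obtain ⟨Y, hY, hYk⟩ := hY
      have : ¬ Separates G A X T Y := fun h => absurd (hsep Y h) (by omega)
      simp only [Separates, not_forall, not_not] at this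
      obtain ⟨a, ha, b, hb, hc⟩ := this
      rcases hc.deleteEdge (x := x) (y := y) with h | ⟨h3, h4⟩ | ⟨h3, h4⟩
      · exact absurd h (hY a ha b hb)
      · exact menger_step hxy hsep IH hY hYk ⟨a, ha, h3⟩ ⟨b, hb, h4⟩
      · have hsw : G.deleteEdges {s(y, x)} = G.deleteEdges {s(x, y)} := by rw [Sym2.eq_swap]
        rw [← hsw] at hY h3 h4 IH
        exact menger_step hxy.symm hsep IH hY hYk ⟨a, ha, h3⟩ ⟨b, hb, h4⟩
    · push Not at hY
      obtain ⟨a, b, Q, h1, h2⟩ := IH X T hY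
      exact ⟨a, b, Q, fun i => ⟨(h1 i).1, (h1 i).2.1, (h1 i).2.2.1,
        (h1 i).2.2.2.mono (SimpleGraph.deleteEdges_le _) subset_rfl⟩, h2⟩
  · push Not at hE
    have hk : k ≤ ((X ∩ T) ∩ A).card := by
      apply hsep
      intro a ha b hb hc
      have hca := hc.left
      have : a = b := by
        cases hc with
        | nil _ => rfl
        | cons h1 h2 h3 => exact absurd h2 (hE _ h1.1 _ h3.left.1)
      subst this
      exact hca.2 (by simp [ha, hb, hca.1])
    obtain ⟨f, hf, hfm⟩ := exists_inj_fin hk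
    have hfm' : ∀ i, (f i ∈ X ∧ f i ∈ T) ∧ f i ∈ A := fun i => by
      simpa [and_assoc] using hfm i
    refine ⟨f, f, fun i => {f i}, fun i => ⟨(hfm' i).1.1, (hfm' i).1.2, ?_, .nil rfl⟩, ?_⟩
    · rintro x rfl; exact (hfm' i).2
    · intro i j hij
      simpa using fun h => hij (hf h)

/-- `(I, S)` is a separation of `G` restricted to `A`: no edge inside `A` leads from `I` to the
outside of `I ∪ S`. -/
def Sep (G : SimpleGraph V) (A I S : Finset V) : Prop :=
  I ∪ S ⊆ A ∧ Disjoint I S ∧ ∀ a ∈ I, ∀ b ∈ A, G.Adj a b → b ∈ I ∪ S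

/-- Menger's theorem in the form used below: a separation of smallest order between `S` and `T`
comes with disjoint paths from its separating set into `T`. -/
theorem exists_sep_route (G : SimpleGraph V) {A S T : Finset V} (hS : S ⊆ A) (hT : T ⊆ A) :
    ∃ I' S' f Q, Sep G A I' S' ∧ I' ⊆ A \ S ∧ T ⊆ I' ∪ S' ∧ Route G (I' ∪ S') S' T f Q ∧
      ((I' = A \ S ∧ S' = S) ∨ S'.card < S.card) := by
  -- a separation with `T` on its inner side, of smallest order, and `(A \ S, S)` if possible
  have hex : ∃ I' S', (Sep G A I' S' ∧ I' ⊆ A \ S ∧ T ⊆ I' ∪ S') ∧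
      (∀ I'' S'', Sep G A I'' S'' ∧ I'' ⊆ A \ S ∧ T ⊆ I'' ∪ S'' → S'.card ≤ S''.card) ∧
      ((I' = A \ S ∧ S' = S) ∨ S'.card < S.card) := by
    have h0 : Sep G A (A \ S) S ∧ A \ S ⊆ A \ S ∧ T ⊆ (A \ S) ∪ S := by
      refine ⟨⟨?_, Finset.sdiff_disjoint, ?_⟩, subset_rfl, ?_⟩
      · rw [Finset.sdiff_union_of_subset hS]
      · intro a _ b hb _
        rwa [Finset.sdiff_union_of_subset hS]
      · rwa [Finset.sdiff_union_of_subset hS]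
    have hP : ∃ m, ∃ I' S', (Sep G A I' S' ∧ I' ⊆ A \ S ∧ T ⊆ I' ∪ S') ∧ S'.card = m :=
      ⟨_, _, _, h0, rfl⟩
    obtain ⟨I', S', h1, h2⟩ := Nat.find_spec hP
    have hmin : ∀ I'' S'', Sep G A I'' S'' ∧ I'' ⊆ A \ S ∧ T ⊆ I'' ∪ S'' →
        S'.card ≤ S''.card := by
      intro I'' S'' h
      rw [h2]
      exact Nat.find_min' hP ⟨_, _, h, rfl⟩
    by_cases hlt : S'.card < S.card
    · exact ⟨I', S', h1, hmin, Or.inr hlt⟩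
    · refine ⟨A \ S, S, h0, fun I'' S'' h => ?_, Or.inl ⟨rfl, rfl⟩⟩
      exact (not_lt.1 hlt).trans (hmin _ _ h)
  obtain ⟨I', S', ⟨hsep, hI', hTI⟩, hmin, hor⟩ := hex
  have hp : Paths G (I' ∪ S') S' T S'.card := by
    refine menger _ G _ _ _ _ le_rfl ?_
    intro Y hY
    -- the vertices reachable from `T` outside `Y` form a separation of order at most `|Y|`
    set R : Finset V := (I' ∪ S').filter fun c =>
      ∃ t ∈ T, Conn G {u | u ∈ I' ∪ S' ∧ u ∉ Y} t c with hR
    have hRI : R ⊆ I' := by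
      intro c hc
      rw [hR, Finset.mem_filter] at hc
      obtain ⟨hc, t, ht, h⟩ := hc
      by_contra hcI
      exact hY c ((Finset.mem_union.1 hc).resolve_left hcI) t ht h.symm
    have hcl : Sep G A R (Y ∩ (I' ∪ S')) ∧ R ⊆ A \ S ∧ T ⊆ R ∪ (Y ∩ (I' ∪ S')) := by
      refine ⟨⟨?_, ?_, ?_⟩, hRI.trans hI', ?_⟩
      · exact (Finset.union_subset (hRI.trans Finset.subset_union_left)
          Finset.inter_subset_right).trans hsep.1
      · rw [Finset.disjoint_left]
        intro c hc hcY
        rw [hR, Finset.mem_filter] at hc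
        obtain ⟨_, t, ht, h⟩ := hc
        exact h.right.2 (Finset.mem_inter.1 hcY).1
      · intro c hc d hd hcd
        have hdA := hsep.2.2 c (hRI hc) d hd hcd
        rw [hR, Finset.mem_filter] at hc
        obtain ⟨_, t, ht, h⟩ := hc
        by_cases hdY : d ∈ Y
        · exact Finset.mem_union_right _ (Finset.mem_inter.2 ⟨hdY, hdA⟩)
        · refine Finset.mem_union_left _ ?_
          rw [hR, Finset.mem_filter]
          exact ⟨hdA, t, ht, h.trans (.adj h.right ⟨hdA, hdY⟩ hcd)⟩
      · intro t ht
        by_cases htY : t ∈ Y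
        · exact Finset.mem_union_right _ (Finset.mem_inter.2 ⟨htY, hTI ht⟩)
        · refine Finset.mem_union_left _ ?_
          rw [hR, Finset.mem_filter]
          exact ⟨hTI ht, t, ht, .nil ⟨hTI ht, htY⟩⟩
    exact (hmin _ _ hcl).trans (Finset.card_le_card Finset.inter_subset_left)
  obtain ⟨a, b, Q, h1, h2⟩ := hp.trim
  have ha : Function.Injective a := by
    intro i j hij
    by_contra hne
    have e1 := (h1 i).2.2.2.2.left
    rw [hij] at e1
    exact Set.disjoint_left.1 (h2 i j hne) e1 (h1 j).2.2.2.2.left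
  have himg : Finset.univ.image a = S' := by
    refine Finset.eq_of_subset_of_card_le (fun z hz => ?_) ?_
    · obtain ⟨i, _, rfl⟩ := Finset.mem_image.1 hz
      exact (h1 i).1
    · rw [Finset.card_image_of_injective _ ha]; simp
  have hidx : ∀ s, ∃ i : Option (Fin S'.card), ∀ hs : s ∈ S', ∃ j, i = some j ∧ a j = s := by
    intro s
    by_cases hs : s ∈ S'
    · rw [← himg] at hs
      obtain ⟨i, _, h⟩ := Finset.mem_image.1 hs
      exact ⟨some i, fun _ => ⟨i, rfl, h⟩⟩
    · exact ⟨none, fun h => absurd h hs⟩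
  choose ix hix using hidx
  refine ⟨I', S', fun s => (ix s).elim s b, fun s => (ix s).elim ∅ Q, hsep, hI', hTI,
    ⟨?_, ?_⟩, hor⟩
  · intro s hs
    obtain ⟨j, hj, rfl⟩ := hix s hs
    simp only [hj, Option.elim]
    refine ⟨(h1 j).2.1, (h1 j).2.2.2.2, fun x hx => ⟨(h1 j).2.2.2.1 x hx, fun hxT => ?_⟩⟩
    rcases (h1 j).2.2.1 x hx with h | h
    · exact h
    · exact absurd hxT h.right.2
  · intro s hs t ht hst
    obtain ⟨i, hi, rfl⟩ := hix s hs
    obtain ⟨j, hj, rfl⟩ := hix t ht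
    simp only [hi, hj, Option.elim]
    exact h2 i j fun h => hst (by rw [h])

end
end LinkProof

/-! ### Hubs -/

namespace LinkProof
section
open scoped Classical
variable {V : Type}

/-- The `2n` vertices `s i`, `t i` are distinct. -/
def Dist {n : ℕ} (s t : Fin n → V) : Prop :=
  Function.Injective s ∧ Function.Injective t ∧ ∀ i j, s i ≠ t j

/-- The pairs `s i`, `t i` can be joined by disjoint paths inside `L`. -/
def Linkage {n : ℕ} (G : SimpleGraph V) (L : Finset V) (s t : Fin n → V) : Prop :=
  ∃ Q : Fin n → Set V, (∀ i j, i ≠ j → Disjoint (Q i) (Q j)) ∧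
    ∀ i, (∀ x ∈ Q i, x ∈ L) ∧ Conn G (Q i) (s i) (t i)

/-- A set inside which any four disjoint pairs can be linked. -/
def Hub (G : SimpleGraph V) (L : Finset V) : Prop :=
  8 ≤ L.card ∧ ∀ s t : Fin 4 → V, Dist s t → (∀ i, s i ∈ L ∧ t i ∈ L) → Linkage G L s t

/-- A set of `2n` vertices can be split into `n` pairs such that vertices of equal colour are
paired up, if colour classes have at most two elements. -/
theorem exists_pairing {K : Type} (κ : V → K) (n : ℕ) : ∀ (Y : Finset V), Y.card = 2 * n →
    (∀ x ∈ Y, ∀ y ∈ Y, ∀ z ∈ Y, κ x = κ y → κ y = κ z → x = y ∨ y = z ∨ x = z) →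
    ∃ s t : Fin n → V, Dist s t ∧ (∀ x, x ∈ Y ↔ ∃ i, x = s i ∨ x = t i) ∧
      ∀ x ∈ Y, ∀ y ∈ Y, κ x = κ y → x ≠ y → ∃ i, (x = s i ∧ y = t i) ∨ (x = t i ∧ y = s i) := by
  induction n with
  | zero =>
    intro Y hY _
    have : Y = ∅ := Finset.card_eq_zero.1 (by omega)
    subst this
    exact ⟨Fin.elim0, Fin.elim0, ⟨fun i => i.elim0, fun i => i.elim0, fun i => i.elim0⟩,
      by simp, by simp⟩
  | succ n ih =>
    intro Y hY hκ
    obtain ⟨x, hx, y, hy, hxy, hcl⟩ : ∃ x ∈ Y, ∃ y ∈ Y, x ≠ y ∧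
        ∀ z ∈ Y, z ≠ x → z ≠ y → κ z ≠ κ x ∧ κ z ≠ κ y ∨ ∀ a ∈ Y, ∀ b ∈ Y, κ a = κ b → a = b := by
      by_cases h : ∃ x ∈ Y, ∃ y ∈ Y, x ≠ y ∧ κ x = κ y
      · obtain ⟨x, hx, y, hy, hxy, he⟩ := h
        refine ⟨x, hx, y, hy, hxy, fun z hz hzx hzy => Or.inl ⟨fun e => ?_, fun e => ?_⟩⟩
        · rcases hκ z hz x hx y hy e he with h | h | h
          · exact hzx h
          · exact hxy h
          · exact hzy h
        · rcases hκ z hz y hy x hx e he.symm with h | h | h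
          · exact hzy h
          · exact hxy h.symm
          · exact hzx h
      · push Not at h
        obtain ⟨x, hx, y, hy, hxy⟩ := Finset.one_lt_card.1 (show 1 < Y.card by omega)
        refine ⟨x, hx, y, hy, hxy, fun z _ _ _ => Or.inr fun a ha b hb e => ?_⟩
        by_contra hab
        exact h a ha b hb hab e
    have hsub : (Y.erase x).erase y ⊆ Y := (Finset.erase_subset _ _).trans (Finset.erase_subset _ _)
    obtain ⟨s, t, ⟨hs, ht, hst⟩, hmem, hp⟩ := ih ((Y.erase x).erase y) (by
      rw [Finset.card_erase_of_mem (Finset.mem_erase.2 ⟨hxy.symm, hy⟩), Finset.card_erase_of_mem hx]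
      omega) (fun a ha b hb c hc => hκ a (hsub ha) b (hsub hb) c (hsub hc))
    have hmem' : ∀ z, (z ≠ y ∧ z ≠ x ∧ z ∈ Y) ↔ ∃ i, z = s i ∨ z = t i := by
      intro z; rw [← hmem z, Finset.mem_erase, Finset.mem_erase]
    have hsx : ∀ i, s i ≠ y ∧ s i ≠ x ∧ s i ∈ Y := fun i => (hmem' _).2 ⟨i, Or.inl rfl⟩
    have htx : ∀ i, t i ≠ y ∧ t i ≠ x ∧ t i ∈ Y := fun i => (hmem' _).2 ⟨i, Or.inr rfl⟩
    refine ⟨Fin.cons x s, Fin.cons y t, ⟨?_, ?_, ?_⟩, ?_, ?_⟩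
    · intro i j
      refine Fin.cases ?_ (fun i => ?_) i <;> refine Fin.cases ?_ (fun j => ?_) j
      · simp
      · simpa using fun h : x = s j => absurd h.symm (hsx j).2.1
      · simpa using fun h : s i = x => absurd h (hsx i).2.1
      · simpa using fun h => hs h
    · intro i j
      refine Fin.cases ?_ (fun i => ?_) i <;> refine Fin.cases ?_ (fun j => ?_) j
      · simp
      · simpa using fun h : y = t j => absurd h.symm (htx j).1
      · simpa using fun h : t i = y => absurd h (htx i).1
      · simpa using fun h => ht h
    · intro i j
      refine Fin.cases ?_ (fun i => ?_) i <;> refine Fin.cases ?_ (fun j => ?_) j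
      · simpa using hxy
      · simpa using (htx j).2.1.symm
      · simpa using (hsx i).1
      · simpa using hst i j
    · intro z
      constructor
      · intro hz
        by_cases h1 : z = x
        · exact ⟨0, Or.inl h1⟩
        by_cases h2 : z = y
        · exact ⟨0, Or.inr h2⟩
        obtain ⟨i, hi⟩ := (hmem' z).1 ⟨h2, h1, hz⟩
        exact ⟨i.succ, by simpa using hi⟩
      · rintro ⟨i, hi⟩
        revert hi
        refine Fin.cases ?_ (fun i => ?_) i
        · rintro (rfl | rfl)
          · exact hx
          · exact hy
        · rintro (rfl | rfl)
          · exact (hsx i).2.2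
          · exact (htx i).2.2
    · intro a ha b hb hab hne
      by_cases hax : a = x ∨ a = y
      · have hb' : b = x ∨ b = y := by
          by_contra hb'
          push Not at hb'
          rcases hcl b hb hb'.1 hb'.2 with h | h
          · rcases hax with rfl | rfl
            · exact h.1 hab.symm
            · exact h.2 hab.symm
          · exact hne (h a ha b hb hab)
        refine ⟨0, ?_⟩
        simp only [Fin.cons_zero]
        rcases hax with rfl | rfl <;> rcases hb' with rfl | rfl <;> simp_all
      · push Not at hax
        have hb' : b ≠ x ∧ b ≠ y := by
          constructor
          · rintro rfl
            rcases hcl a ha hax.1 hax.2 with h | h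
            · exact h.1 hab
            · exact hne (h a ha _ hb hab)
          · rintro rfl
            rcases hcl a ha hax.1 hax.2 with h | h
            · exact h.2 hab
            · exact hne (h a ha _ hb hab)
        obtain ⟨i, hi⟩ := hp a (by simp [hax, ha]) b (by simp [hb', hb]) hab hne
        exact ⟨i.succ, by simpa using hi⟩

/-- Linking four pairs suffices for knitting at most eight vertices: pad with unused vertices. -/
theorem knit_of_linkage {G : SimpleGraph V} {L Z : Finset V} (hZ : Z ⊆ L) (hZ8 : Z.card ≤ 8)
    (hL : 8 ≤ L.card)
    (h : ∀ s t : Fin 4 → V, Dist s t → (∀ i, s i ∈ L ∧ t i ∈ L) →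
      (∀ z ∈ Z, ∃ i, z = s i ∨ z = t i) → Linkage G L s t) : Knit G L Z := by
  intro K κ hκ
  obtain ⟨Y, hZY, hYL, hY⟩ := Finset.exists_subsuperset_card_eq hZ hZ8 hL
  obtain ⟨s, t, hd, hmem, hp⟩ := exists_pairing
    (fun u => if u ∈ Z then (Sum.inl (κ u) : K ⊕ V) else Sum.inr u) 4 Y hY (by
      intro x _ y _ z _ hxy hyz
      by_cases h1 : x ∈ Z <;> by_cases h2 : y ∈ Z <;> by_cases h3 : z ∈ Z <;>
        simp only [h1, h2, h3, if_true, if_false, Sum.inl.injEq, Sum.inr.injEq,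
          reduceCtorEq] at hxy hyz
      · exact hκ x h1 y h2 z h3 hxy hyz
      · exact Or.inl hxy)
  obtain ⟨Q, hQd, hQ⟩ := h s t hd
    (fun i => ⟨hYL ((hmem _).2 ⟨i, Or.inl rfl⟩), hYL ((hmem _).2 ⟨i, Or.inr rfl⟩)⟩)
    (fun z hz => (hmem z).1 (hZY hz))
  have huniq : ∀ i j x, x ∈ Q i → x ∈ Q j → i = j := by
    intro i j x hi hj
    by_contra hne
    exact Set.disjoint_left.1 (hQd i j hne) hi hj
  -- only the vertices of `Z` have prescribed colours; the paths of padding pairs do no harm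
  refine ⟨fun u => if u ∈ Z then κ u else if hu : ∃ i, u ∈ Q i then κ (s hu.choose) else κ u,
    fun x hx => by simp [hx], ?_⟩
  intro x hx y hy hxy
  by_cases hne : x = y
  · subst hne
    exact .nil ⟨hZ hx, by simp [hx]⟩
  · have key : ∀ i, s i ∈ Z → t i ∈ Z → κ (s i) = κ (t i) → Conn G {u | u ∈ L ∧
        (if u ∈ Z then κ u else if hu : ∃ i, u ∈ Q i then κ (s hu.choose) else κ u) = κ (s i)}
        (s i) (t i) := by
      intro i hsi hti hst
      refine (hQ i).2.monoQ fun u hu => ⟨(hQ i).1 u hu, ?_⟩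
      by_cases huZ : u ∈ Z
      · simp only [huZ, if_true]
        obtain ⟨j, hj⟩ := (hmem u).1 (hZY huZ)
        have hij : j = i := by
          refine huniq j i u ?_ hu
          rcases hj with rfl | rfl
          · exact (hQ j).2.left
          · exact (hQ j).2.right
        subst hij
        rcases hj with rfl | rfl
        · rfl
        · exact hst.symm
      · have he : ∃ i, u ∈ Q i := ⟨i, hu⟩
        simp only [huZ, if_false, dif_pos he]
        rw [huniq _ i u he.choose_spec hu]
    obtain ⟨i, hi⟩ := hp x (hZY hx) y (hZY hy) (by simp [hx, hy, hxy]) hne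
    rcases hi with ⟨rfl, rfl⟩ | ⟨rfl, rfl⟩
    · exact key i hx hy hxy
    · rw [hxy]
      exact (key i hy hx hxy.symm).symm

theorem Hub.knit {G : SimpleGraph V} {L Z : Finset V} (h : Hub G L) (hZ : Z ⊆ L)
    (hZ8 : Z.card ≤ 8) : Knit G L Z :=
  knit_of_linkage hZ hZ8 h.1 fun s t h1 h2 _ => h.2 s t h1 h2

/-- Pairs that are adjacent or have their own common neighbour are linked. -/
theorem linkage_of_common {n : ℕ} {G : SimpleGraph V} {L : Finset V} {s t w : Fin n → V}
    (hd : Dist s t) (hL : ∀ i, s i ∈ L ∧ t i ∈ L) (hw : Function.Injective w)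
    (hwL : ∀ i, w i ∈ L) (hws : ∀ i j, w i ≠ s j ∧ w i ≠ t j)
    (h : ∀ i, G.Adj (s i) (t i) ∨ (G.Adj (s i) (w i) ∧ G.Adj (w i) (t i))) :
    Linkage G L s t := by
  refine ⟨fun i => {s i, t i, w i}, ?_, fun i => ⟨?_, ?_⟩⟩
  · intro i j hij
    rw [Set.disjoint_left]
    have h1 := hd.1.ne hij
    have h2 := hd.2.1.ne hij
    have h3 := hw.ne hij
    have h4 := hd.2.2 i j
    have h5 := hd.2.2 j i
    have h6 := hws i j
    have h7 := hws j i
    rintro x (rfl | rfl | rfl) (h | h | h)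
    exacts [h1 h, h4 h, h7.1 h.symm, h5 h.symm, h2 h, h7.2 h.symm, h6.1 h, h6.2 h, h3 h]
  · rintro x (rfl | rfl | rfl)
    · exact (hL i).1
    · exact (hL i).2
    · exact hwL i
  · rcases h i with h | ⟨h1, h2⟩
    · exact .adj (by simp) (by simp) h
    · exact .cons (by simp) h1 (.adj (by simp) (by simp) h2)

/-- The cheapest source of hubs: every pair of distinct vertices is already adjacent. -/
theorem hub_of_clique {G : SimpleGraph V} {L : Finset V} (h8 : 8 ≤ L.card)
    (h : ∀ x ∈ L, ∀ y ∈ L, x ≠ y → G.Adj x y) : Hub G L := by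
  refine ⟨h8, fun s t hd hL => ⟨fun i => {s i, t i}, ?_, fun i => ⟨?_, ?_⟩⟩⟩
  · intro i j hij
    rw [Set.disjoint_left]
    have h1 := hd.1.ne hij
    have h2 := hd.2.1.ne hij
    have h4 := hd.2.2 i j
    have h5 := hd.2.2 j i
    rintro x (rfl | rfl) (h | h) <;> simp_all
  · rintro x (rfl | rfl)
    · exact (hL i).1
    · exact (hL i).2
  · exact .adj (by simp) (by simp) (h _ (hL i).1 _ (hL i).2 (hd.2.2 i i))

/-- An almost complete set `K` completely joined to `S` is a hub with `S`: nonadjacent pairs get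
private common neighbours, by Hall's theorem. -/
theorem hub_of_near_clique {G : SimpleGraph V} {K S : Finset V} (hKS : Disjoint K S)
    (hK : 8 ≤ K.card) (hcard : 12 ≤ K.card + S.card) (hj : ∀ x ∈ K, ∀ y ∈ S, G.Adj x y)
    (hK1 : ∀ x ∈ K, ∀ y ∈ K, ∀ z ∈ K, x ≠ y → x ≠ z → ¬ G.Adj x y → ¬ G.Adj x z → y = z) :
    Hub G (K ∪ S) := by
  have hc : (K ∪ S).card = K.card + S.card := Finset.card_union_of_disjoint hKS
  refine ⟨by omega, fun s t hd hL => ?_⟩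
  set Z : Finset V := Finset.univ.image s ∪ Finset.univ.image t with hZ
  have hZm : ∀ x, x ∈ Z ↔ ∃ i, x = s i ∨ x = t i := by
    intro x
    simp only [hZ, Finset.mem_union, Finset.mem_image, Finset.mem_univ, true_and]
    constructor
    · rintro (⟨i, rfl⟩ | ⟨i, rfl⟩)
      · exact ⟨i, Or.inl rfl⟩
      · exact ⟨i, Or.inr rfl⟩
    · rintro ⟨i, rfl | rfl⟩
      · exact Or.inl ⟨i, rfl⟩
      · exact Or.inr ⟨i, rfl⟩
  have hZ8 : Z.card = 8 := by
    rw [hZ, Finset.card_union_of_disjoint, Finset.card_image_of_injective _ hd.1,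
      Finset.card_image_of_injective _ hd.2.1]
    · simp
    · rw [Finset.disjoint_left]
      intro x hx hx'
      obtain ⟨i, _, rfl⟩ := Finset.mem_image.1 hx
      obtain ⟨j, _, e⟩ := Finset.mem_image.1 hx'
      exact hd.2.2 i j e.symm
  have hZL : Z ⊆ K ∪ S := by
    intro x hx
    obtain ⟨i, rfl | rfl⟩ := (hZm x).1 hx
    · exact (hL i).1
    · exact (hL i).2
  set P : Finset (Fin 4) := Finset.univ.filter fun i => s i ∈ S ∧ t i ∈ S with hP
  -- two terminals in `S` for each pair of `P`, and `K` has as many free vertices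
  have hPS : 2 * P.card ≤ (Z ∩ S).card := by
    have : P.image s ∪ P.image t ⊆ Z ∩ S := by
      intro x hx
      rw [Finset.mem_union, Finset.mem_image, Finset.mem_image] at hx
      rcases hx with ⟨i, hi, rfl⟩ | ⟨i, hi, rfl⟩
      · exact Finset.mem_inter.2 ⟨(hZm _).2 ⟨i, Or.inl rfl⟩, (Finset.mem_filter.1 hi).2.1⟩
      · exact Finset.mem_inter.2 ⟨(hZm _).2 ⟨i, Or.inr rfl⟩, (Finset.mem_filter.1 hi).2.2⟩
    have h2 := Finset.card_le_card this
    rw [Finset.card_union_of_disjoint, Finset.card_image_of_injective _ hd.1,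
      Finset.card_image_of_injective _ hd.2.1] at h2
    · omega
    · rw [Finset.disjoint_left]
      intro x hx hx'
      obtain ⟨i, _, rfl⟩ := Finset.mem_image.1 hx
      obtain ⟨j, _, e⟩ := Finset.mem_image.1 hx'
      exact hd.2.2 i j e.symm
  have hZK : (Z ∩ K).card + (Z ∩ S).card = 8 := by
    rw [← Finset.card_union_of_disjoint, ← Finset.inter_union_distrib_left,
      Finset.inter_eq_left.2 hZL, hZ8]
    exact hKS.mono Finset.inter_subset_right Finset.inter_subset_right
  have hKf : P.card ≤ (K \ Z).card := by
    have := Finset.card_sdiff_add_card_inter K Z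
    rw [Finset.inter_comm] at this
    omega
  have hLf : 4 ≤ ((K ∪ S) \ Z).card := by
    have := Finset.card_sdiff_add_card_inter (K ∪ S) Z
    rw [Finset.inter_eq_right.2 hZL] at this
    omega
  -- a pair in `S` may only use free vertices of `K`; the other pairs may use any free vertex
  obtain ⟨w, hw, hwm⟩ := (Finset.all_card_le_biUnion_card_iff_exists_injective
    (fun i : Fin 4 => if i ∈ P then K \ Z else (K ∪ S) \ Z)).1 (by
      intro A
      by_cases hA : A ⊆ P
      · rcases A.eq_empty_or_nonempty with rfl | ⟨i, hi⟩
        · simp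
        · refine (Finset.card_le_card hA).trans (hKf.trans (Finset.card_le_card ?_))
          intro x hx
          exact Finset.mem_biUnion.2 ⟨i, hi, by simpa [hA hi] using hx⟩
      · obtain ⟨i, hi, hiP⟩ := Finset.not_subset.1 hA
        have h4 : A.card ≤ 4 := by simpa using Finset.card_le_univ A
        refine h4.trans (hLf.trans (Finset.card_le_card ?_))
        intro x hx
        exact Finset.mem_biUnion.2 ⟨i, hi, by simpa [hiP] using hx⟩)
  have hwL : ∀ i, w i ∈ (K ∪ S) \ Z := by
    intro i
    have := hwm i
    split_ifs at this
    · exact Finset.sdiff_subset_sdiff Finset.subset_union_left subset_rfl this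
    · exact this
  refine linkage_of_common hd hL hw (fun i => (Finset.mem_sdiff.1 (hwL i)).1) ?_ ?_
  · intro i j
    have := (Finset.mem_sdiff.1 (hwL i)).2
    rw [hZm] at this
    push Not at this
    exact this j
  · intro i
    have hi := hL i
    have hwi := hwL i
    rw [Finset.mem_sdiff, hZm] at hwi
    push Not at hwi
    rw [Finset.mem_union, Finset.mem_union] at hi
    obtain ⟨hwi1, hwi2⟩ := hwi
    by_cases hst : G.Adj (s i) (t i)
    · exact Or.inl hst
    right
    -- nonadjacent vertices of `K` are each other's only non-neighbours in `K`
    rcases hi with ⟨h1 | h1, h2 | h2⟩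
    · rcases Finset.mem_union.1 hwi1 with h3 | h3
      · constructor
        · by_contra h
          exact (hwi2 i).2 (hK1 _ h1 _ h2 _ h3 (hd.2.2 i i) (hwi2 i).1.symm hst h).symm
        · by_contra h
          exact (hwi2 i).1 (hK1 _ h2 _ h1 _ h3 (hd.2.2 i i).symm (hwi2 i).2.symm
            (fun e => hst e.symm) (fun e => h e.symm)).symm
      · exact ⟨hj _ h1 _ h3, (hj _ h2 _ h3).symm⟩
    · exact absurd (hj _ h1 _ h2) hst
    · exact absurd (hj _ h2 _ h1).symm hst
    · have hiP : i ∈ P := by simp [hP, h1, h2]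
      have := hwm i
      rw [if_pos hiP, Finset.mem_sdiff] at this
      exact ⟨(hj _ this.1 _ h1).symm, hj _ this.1 _ h2⟩

end
end LinkProof

/-! ### Four pairs in a small dense set -/

namespace LinkProof
section
open scoped Classical
variable {V : Type}

/-- Adjacency indicator. -/
noncomputable def ind (G : SimpleGraph V) (c z : V) : ℕ := if G.Adj c z then 1 else 0

/-- Number of neighbours of `c` in `W`. -/
noncomputable def nb (G : SimpleGraph V) (W : Finset V) (c : V) : ℕ :=
  (W.filter fun z => G.Adj c z).card

theorem ind_le (G : SimpleGraph V) (c z : V) : ind G c z ≤ 1 := by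
  unfold ind; split_ifs <;> omega

theorem ind_eq_one {G : SimpleGraph V} {c z : V} : ind G c z = 1 ↔ G.Adj c z := by
  unfold ind; split_ifs with h <;> simp [h]

theorem ind_eq_zero {G : SimpleGraph V} {c z : V} : ind G c z = 0 ↔ ¬ G.Adj c z := by
  unfold ind; split_ifs with h <;> simp [h]

/-- The list `m` consists of the inner vertices of a walk from `a` to `b`. -/
def SL (G : SimpleGraph V) : V → V → List V → Prop
  | a, b, [] => G.Adj a b
  | a, b, x :: m => G.Adj a x ∧ SL G x b m

/-- `m` lists the inner vertices, all in `W`, of an `a`–`b` path of length at most four. -/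
def IsLink (G : SimpleGraph V) (W : Finset V) (a b : V) (m : List V) : Prop :=
  m.length ≤ 3 ∧ m.Nodup ∧ (∀ x ∈ m, x ∈ W) ∧ SL G a b m

/-- A shortest link inside `W`. -/
def MinLink (G : SimpleGraph V) (W : Finset V) (a b : V) (m : List V) : Prop :=
  IsLink G W a b m ∧ ∀ m', IsLink G W a b m' → m.length ≤ m'.length

/-- Number of neighbours of `y` on the path with ends `a`, `b` and inner vertices `m`. -/
noncomputable def cntL (G : SimpleGraph V) (a b : V) (m : List V) (y : V) : ℕ :=
  ind G y a + ind G y b + (m.map (ind G y)).sum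

/-- `y` has three neighbours on a link with one or two inner vertices, so that `y` may replace
an inner vertex of the link. -/
def Exc (G : SimpleGraph V) (a b : V) (m : List V) (y : V) : Prop :=
  cntL G a b m y = 3 ∧ (m.length = 1 ∨ m.length = 2)

theorem exists_minLink {G : SimpleGraph V} {W : Finset V} {a b : V} {m : List V}
    (h : IsLink G W a b m) : ∃ m', MinLink G W a b m' := by
  have hP : ∃ n, ∃ m', IsLink G W a b m' ∧ m'.length = n := ⟨_, m, h, rfl⟩
  obtain ⟨m', h1, h2⟩ := Nat.find_spec hP
  exact ⟨m', h1, fun m'' h'' => h2 ▸ Nat.find_min' hP ⟨m'', h'', rfl⟩⟩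

theorem SL.conn {G : SimpleGraph V} {b : V} {m : List V} : ∀ {a : V}, SL G a b m →
    Conn G {z | z = a ∨ z = b ∨ z ∈ m} a b := by
  induction m with
  | nil => exact fun h => .adj (by simp) (by simp) h
  | cons x m ih =>
    intro a h
    refine .cons (by simp) h.1 ((ih h.2).monoQ ?_)
    rintro z (rfl | rfl | hz) <;> simp_all

/-- Four neighbours on the link, or three including both ends of a long one, would give a shorter
link through `y`. -/
theorem MinLink.cntL_le {G : SimpleGraph V} {W : Finset V} {a b y : V} {m : List V}
    (h : MinLink G W a b m) (hy : y ∈ W) (hym : y ∉ m) :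
    cntL G a b m y ≤ 3 ∧ cntL G a b m y ≤ m.length + 2 := by
  obtain ⟨⟨h3, hnd, hW, hs⟩, hmin⟩ := h
  have l1 := ind_le G y
  have e1 := fun z => @ind_eq_one V G y z
  have e0 := fun z => @ind_eq_zero V G y z
  rcases m with _ | ⟨p, _ | ⟨q, _ | ⟨r, _ | ⟨_, m⟩⟩⟩⟩
  · have := l1 a; have := l1 b
    simp [cntL]; omega
  · have := l1 a; have := l1 b; have := l1 p
    simp [cntL]; omega
  · have n1 : ¬ (G.Adj y a ∧ G.Adj y b) := fun ⟨u1, u2⟩ => by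
      have := hmin [y] ⟨by simp, by simp, by simpa using hy, u1.symm, u2⟩
      simp at this
    rw [← e1, ← e1] at n1
    have := l1 a; have := l1 b; have := l1 p; have := l1 q
    simp [cntL]; omega
  · simp only [List.mem_cons, List.not_mem_nil, or_false, not_or] at hym
    have n1 : ¬ (G.Adj y a ∧ G.Adj y b) := fun ⟨u1, u2⟩ => by
      have := hmin [y] ⟨by simp, by simp, by simpa using hy, u1.symm, u2⟩
      simp at this
    have n2 : ¬ (G.Adj y a ∧ G.Adj y r) := fun ⟨u1, u2⟩ => by
      have := hmin [y, r] ⟨by simp, by simpa using hym.2.2,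
        by simpa using ⟨hy, hW r (by simp)⟩, u1.symm, u2, hs.2.2.2⟩
      simp at this
    have n3 : ¬ (G.Adj y p ∧ G.Adj y b) := fun ⟨u1, u2⟩ => by
      have := hmin [p, y] ⟨by simp, by simpa using fun e => hym.1 e.symm,
        by simpa using ⟨hW p (by simp), hy⟩, hs.1, u1.symm, u2⟩
      simp at this
    rw [← e1, ← e1] at n1 n2 n3
    have := l1 a; have := l1 b; have := l1 p; have := l1 q; have := l1 r
    simp [cntL]; omega
  · simp only [List.length_cons] at h3; omega

/-- An exceptional vertex `y` sees all inner vertices of the link and can take the place of one of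
them, `p`, which becomes free. -/
theorem MinLink.swap {G : SimpleGraph V} {W : Finset V} {a b y : V} {m : List V}
    (h : MinLink G W a b m) (hy : y ∈ W) (hym : y ∉ m) (he : Exc G a b m y) :
    (∀ p ∈ m, G.Adj y p) ∧ ∃ p ∈ m, ∃ m', m'.length = m.length ∧ m'.Nodup ∧
      (∀ z ∈ m', z = y ∨ (z ∈ m ∧ z ≠ p)) ∧ SL G a b m' := by
  obtain ⟨⟨h3, hnd, hW, hs⟩, hmin⟩ := h
  obtain ⟨h3', hl⟩ := he
  have l1 := ind_le G y
  have e1 := fun z => @ind_eq_one V G y z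
  rcases m with _ | ⟨p, _ | ⟨q, _ | ⟨r, m⟩⟩⟩
  · simp at hl
  · have := l1 a; have := l1 b; have := l1 p
    simp [cntL] at h3'
    have u1 := (e1 a).1 (by omega)
    have u2 := (e1 b).1 (by omega)
    have u3 := (e1 p).1 (by omega)
    exact ⟨by simpa using u3, p, by simp, [y], by simp, by simp, by simp, u1.symm, u2⟩
  · have n1 : ¬ (G.Adj y a ∧ G.Adj y b) := fun ⟨u1, u2⟩ => by
      have := hmin [y] ⟨by simp, by simp, by simpa using hy, u1.symm, u2⟩
      simp at this
    rw [← e1, ← e1] at n1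
    have := l1 a; have := l1 b; have := l1 p; have := l1 q
    simp [cntL] at h3'
    simp only [List.mem_cons, List.not_mem_nil, or_false, not_or] at hym
    have hpq : p ≠ q := by simpa using hnd
    have u2 := (e1 p).1 (by omega)
    have u3 := (e1 q).1 (by omega)
    refine ⟨by simpa using ⟨u2, u3⟩, ?_⟩
    by_cases u1 : G.Adj y a
    · exact ⟨p, by simp, [y, q], by simp, by simpa using hym.2, by simp [hpq.symm],
        u1.symm, u3, hs.2.2⟩
    · have u4 := (e1 b).1 (by have := (e1 a).not.2 u1; omega)
      exact ⟨q, by simp, [p, y], by simp, by simpa using fun e => hym.1 e.symm, by simp [hpq],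
        hs.1, u2.symm, u4⟩
  · simp at hl

theorem nb_sdiff (G : SimpleGraph V) (c : V) {m : List V} : ∀ {W : Finset V}, m.Nodup →
    (∀ z ∈ m, z ∈ W) → nb G W c = nb G (W \ m.toFinset) c + (m.map (ind G c)).sum ∧
      W.card = (W \ m.toFinset).card + m.length := by
  induction m with
  | nil => intro W _ _; simp
  | cons x m ih =>
    intro W hnd hW
    rw [List.nodup_cons] at hnd
    have hx : x ∈ W := hW x (by simp)
    have h1 := ih (W := W.erase x) hnd.2 fun z hz => Finset.mem_erase.2
      ⟨fun e => hnd.1 (e ▸ hz), hW z (by simp [hz])⟩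
    have h2 : W.erase x \ m.toFinset = W \ (x :: m).toFinset := by
      ext z; simp; tauto
    rw [h2] at h1
    have h3 : nb G W c = nb G (W.erase x) c + ind G c x := by
      have hW' : W = insert x (W.erase x) := (Finset.insert_erase hx).symm
      conv_lhs => rw [hW']
      unfold nb ind
      rw [Finset.filter_insert]
      split_ifs with h
      · rw [Finset.card_insert_of_notMem (by simp)]
      · simp
    have h4 := Finset.card_erase_add_one hx
    simp only [List.map_cons, List.sum_cons, List.length_cons]
    omega

/-- Four given pairs are linked inside `H`. -/
def Link4 (G : SimpleGraph V) (H : Finset V) (a b a' b' s t x y : V) : Prop :=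
  ∃ Q1 Q2 Q3 Q4 : Set V, (Disjoint Q1 Q2 ∧ Disjoint Q1 Q3 ∧ Disjoint Q1 Q4 ∧ Disjoint Q2 Q3 ∧
    Disjoint Q2 Q4 ∧ Disjoint Q3 Q4) ∧ (∀ z, z ∈ Q1 ∨ z ∈ Q2 ∨ z ∈ Q3 ∨ z ∈ Q4 → z ∈ H) ∧
    Conn G Q1 a b ∧ Conn G Q2 a' b' ∧ Conn G Q3 s t ∧ Conn G Q4 x y

/-- The situation in which four pairs have to be linked: the set `H` consists of the eight
terminals, the vertex `v` adjacent to everything and the remaining vertices `W`. The last pair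
`x, y` is the one to be linked through `v`, so that the first three pairs only have `W` at their
disposal. Either `v` is one of `x`, `y`, or `v` is no terminal; `β` is the size of
`{v, x, y}`. The bounds `deg` and `term` are the degree bounds inside `H`, rewritten. -/
structure Cfg (G : SimpleGraph V) (H W : Finset V) (v a b a' b' s t x y : V) (β : ℕ) :
    Prop where
  nd : [a, b, a', b', s, t, x, y].Nodup
  hv : v ∉ [a, b, a', b', s, t]
  hβ : (β = 2 ∧ (v = x ∨ v = y)) ∨ (β = 3 ∧ v ≠ x ∧ v ≠ y)
  WH : W ⊆ H
  vH : v ∈ H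
  tH : ∀ z ∈ [a, b, a', b', s, t, x, y], z ∈ H
  Wv : v ∉ W
  Wt : ∀ z ∈ [a, b, a', b', s, t, x, y], z ∉ W
  card : W.card + 6 + β ≤ 30
  uni : ∀ z ∈ H, z ≠ v → G.Adj v z
  deg : ∀ c ∈ W, 18 ≤ nb G W c + ind G c a + ind G c b + ind G c a' + ind G c b' +
    ind G c s + ind G c t + ind G c x + ind G c y + β
  term : ∀ z ∈ [a, b, a', b', s, t, x, y], z ≠ v → 11 ≤ nb G W z + β

section
variable {G : SimpleGraph V} {H W : Finset V} {v a b a' b' s t x y : V} {β : ℕ}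

theorem Cfg.swap12 (h : Cfg G H W v a b a' b' s t x y β) :
    Cfg G H W v a' b' a b s t x y β := by
  have p : [a', b', a, b].Perm [a, b, a', b'] :=
    List.perm_append_comm (l₁ := [a', b']) (l₂ := [a, b])
  have p8 := p.append_right [s, t, x, y]
  exact ⟨p8.nodup_iff.2 h.nd, fun hz => h.hv ((p.append_right [s, t]).mem_iff.1 hz), h.hβ, h.WH,
    h.vH, fun z hz => h.tH z (p8.mem_iff.1 hz), h.Wv, fun z hz => h.Wt z (p8.mem_iff.1 hz), h.card,
    h.uni, fun c hc => by have := h.deg c hc; omega, fun z hz => h.term z (p8.mem_iff.1 hz)⟩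

theorem Cfg.swap23 (h : Cfg G H W v a b a' b' s t x y β) :
    Cfg G H W v a b s t a' b' x y β := by
  have p : [a, b, s, t, a', b'].Perm [a, b, a', b', s, t] :=
    (List.perm_append_comm (l₁ := [s, t]) (l₂ := [a', b'])).append_left [a, b]
  have p8 := p.append_right [x, y]
  exact ⟨p8.nodup_iff.2 h.nd, fun hz => h.hv (p.mem_iff.1 hz), h.hβ, h.WH,
    h.vH, fun z hz => h.tH z (p8.mem_iff.1 hz), h.Wv, fun z hz => h.Wt z (p8.mem_iff.1 hz), h.card,
    h.uni, fun c hc => by have := h.deg c hc; omega, fun z hz => h.term z (p8.mem_iff.1 hz)⟩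

theorem Cfg.swapST (h : Cfg G H W v a b a' b' s t x y β) :
    Cfg G H W v a b a' b' t s x y β := by
  have p : [a, b, a', b', t, s].Perm [a, b, a', b', s, t] :=
    (List.perm_append_comm (l₁ := [t]) (l₂ := [s])).append_left [a, b, a', b']
  have p8 := p.append_right [x, y]
  exact ⟨p8.nodup_iff.2 h.nd, fun hz => h.hv (p.mem_iff.1 hz), h.hβ, h.WH,
    h.vH, fun z hz => h.tH z (p8.mem_iff.1 hz), h.Wv, fun z hz => h.Wt z (p8.mem_iff.1 hz), h.card,
    h.uni, fun c hc => by have := h.deg c hc; omega, fun z hz => h.term z (p8.mem_iff.1 hz)⟩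

/-- If `v` is not a terminal, the last pair plays no special role. -/
theorem Cfg.swap34 (h : Cfg G H W v a b a' b' s t x y β) (hv : β = 3) :
    Cfg G H W v a b a' b' x y s t β := by
  have p8 : [a, b, a', b', x, y, s, t].Perm [a, b, a', b', s, t, x, y] :=
    (List.perm_append_comm (l₁ := [x, y]) (l₂ := [s, t])).append_left [a, b, a', b']
  have h2 := h.hv
  have h3 : v ≠ x ∧ v ≠ y := by
    rcases h.hβ with h3 | h3
    · omega
    · exact h3.2
  simp only [List.mem_cons, List.not_mem_nil, or_false, not_or] at h2
  exact ⟨p8.nodup_iff.2 h.nd, by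
      simp only [List.mem_cons, List.not_mem_nil, or_false, not_or]
      exact ⟨h2.1, h2.2.1, h2.2.2.1, h2.2.2.2.1, h3.1, h3.2⟩,
    Or.inr ⟨hv, h2.2.2.2.2.1, h2.2.2.2.2.2⟩, h.WH,
    h.vH, fun z hz => h.tH z (p8.mem_iff.1 hz), h.Wv, fun z hz => h.Wt z (p8.mem_iff.1 hz), h.card,
    h.uni, fun c hc => by have := h.deg c hc; omega, fun z hz => h.term z (p8.mem_iff.1 hz)⟩

theorem Link4.swap12 (h : Link4 G H a b a' b' s t x y) : Link4 G H a' b' a b s t x y := by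
  obtain ⟨Q1, Q2, Q3, Q4, ⟨d1, d2, d3, d4, d5, d6⟩, h2, c1, c2, c3, c4⟩ := h
  exact ⟨Q2, Q1, Q3, Q4, ⟨d1.symm, d4, d5, d2, d3, d6⟩, fun z hz => h2 z (by tauto), c2, c1, c3,
    c4⟩

theorem Link4.swap23 (h : Link4 G H a b a' b' s t x y) : Link4 G H a b s t a' b' x y := by
  obtain ⟨Q1, Q2, Q3, Q4, ⟨d1, d2, d3, d4, d5, d6⟩, h2, c1, c2, c3, c4⟩ := h
  exact ⟨Q1, Q3, Q2, Q4, ⟨d2, d1, d3, d4.symm, d6, d5⟩, fun z hz => h2 z (by tauto), c1, c3, c2,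
    c4⟩

theorem Link4.swap34 (h : Link4 G H a b a' b' s t x y) : Link4 G H a b a' b' x y s t := by
  obtain ⟨Q1, Q2, Q3, Q4, ⟨d1, d2, d3, d4, d5, d6⟩, h2, c1, c2, c3, c4⟩ := h
  exact ⟨Q1, Q2, Q4, Q3, ⟨d1, d3, d2, d5, d4, d6.symm⟩, fun z hz => h2 z (by tauto), c1, c2, c4,
    c3⟩

theorem Link4.swapST (h : Link4 G H a b a' b' s t x y) : Link4 G H a b a' b' t s x y := by
  obtain ⟨Q1, Q2, Q3, Q4, d, h2, c1, c2, c3, c4⟩ := h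
  exact ⟨Q1, Q2, Q3, Q4, d, h2, c1, c2, c3.symm, c4⟩

/-- With the first three pairs linked through `W`, the last pair is linked through `v`. -/
theorem Cfg.link (h : Cfg G H W v a b a' b' s t x y β) {M1 M2 M3 : Set V}
    (w1 : ∀ z ∈ M1, z ∈ W) (w2 : ∀ z ∈ M2, z ∈ W) (w3 : ∀ z ∈ M3, z ∈ W)
    (d12 : Disjoint M1 M2) (d13 : Disjoint M1 M3) (d23 : Disjoint M2 M3)
    (c1 : Conn G {z | z = a ∨ z = b ∨ z ∈ M1} a b)
    (c2 : Conn G {z | z = a' ∨ z = b' ∨ z ∈ M2} a' b')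
    (c3 : Conn G {z | z = s ∨ z = t ∨ z ∈ M3} s t) : Link4 G H a b a' b' s t x y := by
  rw [Set.disjoint_left] at d12 d13 d23
  obtain ⟨h1, h2, h3, h4, h5, h6, h7, h8, h9, h10, h11, h12⟩ := h
  simp only [List.nodup_cons, List.mem_cons, List.not_mem_nil, or_false, not_or,
    forall_eq_or_imp, forall_eq] at h1 h2 h6 h8
  refine ⟨_, _, _, {z | z = x ∨ z = y ∨ z = v}, ⟨?_, ?_, ?_, ?_, ?_, ?_⟩, ?_, c1, c2, c3, ?_⟩
  iterate 6
    rw [Set.disjoint_left]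
    simp only [Set.mem_ofPred_eq]
    grind
  · simp only [Set.mem_ofPred_eq]
    grind
  · have hx : v ≠ x → G.Adj v x := fun e => h10 x (by tauto) (Ne.symm e)
    have hy : v ≠ y → G.Adj v y := fun e => h10 y (by tauto) (Ne.symm e)
    have hxy : x ≠ y := by tauto
    by_cases e1 : v = x
    · subst e1
      exact .adj (by simp) (by simp) (hy hxy)
    · by_cases e2 : v = y
      · subst e2
        exact .adj (by simp) (by simp) (hx e1).symm
      · exact .cons (by simp) (hx e1).symm (.adj (by simp) (by simp) (hy e2))

end
end
end LinkProof

/-! ### Two linked pairs and a third pair that cannot be linked -/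

namespace LinkProof
section
open scoped Classical
variable {V : Type}

theorem sum_ind_le (G : SimpleGraph V) (c : V) (m : List V) : (m.map (ind G c)).sum ≤ m.length := by
  induction m with
  | nil => simp
  | cons x m ih =>
    have := ind_le G c x
    simp only [List.map_cons, List.sum_cons, List.length_cons]
    omega

/-- Number of non-neighbours of `c` in `C` other than `c` itself. -/
noncomputable def mis (G : SimpleGraph V) (C : Finset V) (c : V) : ℕ :=
  (C.filter fun z => z ≠ c ∧ ¬ G.Adj c z).card

theorem nb_add_mis {G : SimpleGraph V} {C : Finset V} {c : V} (hc : c ∈ C) :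
    nb G C c + mis G C c + 1 = C.card := by
  have h1 : (C.filter fun z => ¬ G.Adj c z) = insert c (C.filter fun z => z ≠ c ∧ ¬ G.Adj c z) := by
    ext z
    by_cases h : z = c
    · subst h; simp [hc]
    · simp [h]
  have h2 := Finset.card_filter_add_card_filter_not (s := C) (fun z => G.Adj c z)
  rw [h1, Finset.card_insert_of_notMem (by simp)] at h2
  unfold nb mis
  omega

theorem mis_le_one {G : SimpleGraph V} {C : Finset V} {c x y : V} (h : mis G C c ≤ 1)
    (hx : x ∈ C) (hy : y ∈ C) (hcx : c ≠ x) (hcy : c ≠ y) (h1 : ¬ G.Adj c x) (h2 : ¬ G.Adj c y) :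
    x = y :=
  Finset.card_le_one.1 h x (by simp [hx, hcx.symm, h1]) y (by simp [hy, hcy.symm, h2])

theorem mis_pos {G : SimpleGraph V} {C : Finset V} {c x : V} (hx : x ∈ C) (hcx : c ≠ x)
    (h1 : ¬ G.Adj c x) : 1 ≤ mis G C c :=
  Finset.card_pos.2 ⟨x, by simp [hx, hcx.symm, h1]⟩

/-- The vertices of `R` that can be reached from `s` through `R`. -/
noncomputable def comp (G : SimpleGraph V) (R : Finset V) (s : V) : Finset V :=
  R.filter fun c => Conn G {z | z = s ∨ z ∈ R} s c

theorem mem_comp {G : SimpleGraph V} {R : Finset V} {s c : V} :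
    c ∈ comp G R s ↔ c ∈ R ∧ Conn G {z | z = s ∨ z ∈ R} s c := by
  unfold comp; rw [Finset.mem_filter]

theorem nb_le_comp {G : SimpleGraph V} {R : Finset V} {s c : V} (hc : c ∈ comp G R s) :
    nb G R c ≤ nb G (comp G R s) c := by
  rw [mem_comp] at hc
  refine Finset.card_le_card fun z hz => ?_
  rw [Finset.mem_filter] at hz ⊢
  exact ⟨mem_comp.2 ⟨hz.1, hc.2.trans (.adj (.inr hc.1) (.inr hz.1) hz.2)⟩, hz.2⟩

/-- Two of the four pairs are linked by disjoint shortest links `m1`, `m2`; the third pair cannot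
be linked in the remaining set `R`. -/
structure Cfg3 (G : SimpleGraph V) (H W R : Finset V) (v a b a' b' s t x y : V) (β : ℕ)
    (m1 m2 : List V) : Prop where
  cfg : Cfg G H W v a b a' b' s t x y β
  ml1 : MinLink G (W \ m2.toFinset) a b m1
  ml2 : MinLink G (W \ m1.toFinset) a' b' m2
  dj : ∀ z ∈ m1, z ∉ m2
  no : ¬ Link4 G H a b a' b' s t x y
  hR : ∀ z, z ∈ R ↔ z ∈ W ∧ z ∉ m1 ∧ z ∉ m2

section
variable {G : SimpleGraph V} {H W R : Finset V} {v a b a' b' s t x y : V} {β : ℕ} {m1 m2 : List V}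

theorem Cfg3.swap12 (h : Cfg3 G H W R v a b a' b' s t x y β m1 m2) :
    Cfg3 G H W R v a' b' a b s t x y β m2 m1 :=
  ⟨h.cfg.swap12, h.ml2, h.ml1, fun z h1 h2 => h.dj z h2 h1, fun hl => h.no hl.swap12,
    fun z => by rw [h.hR]; tauto⟩

theorem Cfg3.swapST (h : Cfg3 G H W R v a b a' b' s t x y β m1 m2) :
    Cfg3 G H W R v a b a' b' t s x y β m1 m2 :=
  ⟨h.cfg.swapST, h.ml1, h.ml2, h.dj, fun hl => h.no hl.swapST, h.hR⟩

theorem Cfg3.w1 (h : Cfg3 G H W R v a b a' b' s t x y β m1 m2) : ∀ z ∈ m1, z ∈ W :=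
  fun z hz => (Finset.mem_sdiff.1 (h.ml1.1.2.2.1 z hz)).1

theorem Cfg3.noconn (h : Cfg3 G H W R v a b a' b' s t x y β m1 m2) :
    ¬ Conn G {z | z = s ∨ z = t ∨ z ∈ R} s t := by
  intro hc
  refine h.no (h.cfg.link (M1 := {z | z ∈ m1}) (M2 := {z | z ∈ m2}) (M3 := {z | z ∈ R}) h.w1
    h.swap12.w1 (fun z hz => ((h.hR z).1 hz).1) ?_ ?_ ?_ h.ml1.1.2.2.2.conn h.ml2.1.2.2.2.conn hc)
  · exact Set.disjoint_left.2 h.dj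
  · exact Set.disjoint_left.2 fun z h1 h2 => ((h.hR z).1 h2).2.1 h1
  · exact Set.disjoint_left.2 fun z h1 h2 => ((h.hR z).1 h2).2.2 h1

theorem Cfg3.not_st (h : Cfg3 G H W R v a b a' b' s t x y β m1 m2) {z : V}
    (h1 : Conn G {z | z = s ∨ z ∈ R} s z) (h2 : Conn G {z | z = t ∨ z ∈ R} t z) : False :=
  h.noconn ((h1.monoQ (by rintro z (hz | hz) <;> simp [hz])).trans
    (h2.monoQ (by rintro z (hz | hz) <;> simp [hz])).symm)

theorem Cfg3.not_t (h : Cfg3 G H W R v a b a' b' s t x y β m1 m2) {c : V}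
    (hc : c ∈ comp G R s) : ¬ G.Adj c t := by
  intro e
  rw [mem_comp] at hc
  exact h.not_st hc.2 (.adj (by simp) (by simp [hc.1]) e.symm)

theorem Cfg3.disj (h : Cfg3 G H W R v a b a' b' s t x y β m1 m2) :
    Disjoint (comp G R s) (comp G R t) :=
  Finset.disjoint_left.2 fun _ h1 h2 => h.not_st (mem_comp.1 h1).2 (mem_comp.1 h2).2

theorem Cfg3.cards (h : Cfg3 G H W R v a b a' b' s t x y β m1 m2) :
    R.card + m1.length + m2.length + 6 + β ≤ 30 ∧
    ∀ c, nb G W c = nb G R c + (m1.map (ind G c)).sum + (m2.map (ind G c)).sum := by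
  have e : (W \ m1.toFinset) \ m2.toFinset = R := by
    ext z; rw [h.hR]; simp; tauto
  have h1 := fun c => nb_sdiff G c h.ml1.1.2.1 h.w1
  have h2 := fun c => nb_sdiff G c h.ml2.1.2.1 h.ml2.1.2.2.1
  rw [e] at h2
  have h3 := h.cfg.card
  refine ⟨?_, fun c => ?_⟩
  · have := h1 s; have := h2 s; omega
  · have := h1 c; have := h2 c; omega

theorem Cfg3.deg (h : Cfg3 G H W R v a b a' b' s t x y β m1 m2) {c : V} (hc : c ∈ R) :
    18 ≤ nb G R c + cntL G a b m1 c + cntL G a' b' m2 c + ind G c s + ind G c t + ind G c x +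
      ind G c y + β := by
  have h1 := h.cfg.deg c ((h.hR c).1 hc).1
  have h2 := h.cards.2 c
  unfold cntL
  omega

theorem Cfg3.cntL_le (h : Cfg3 G H W R v a b a' b' s t x y β m1 m2) {c : V} (hc : c ∈ R) :
    cntL G a b m1 c ≤ 3 ∧ cntL G a b m1 c ≤ m1.length + 2 := by
  have := (h.hR c).1 hc
  exact h.ml1.cntL_le (by simp [this]) this.2.1

/-- A vertex of `R` adjacent to both `x` and `y` would link this pair; if `v` is not a terminal
(`β = 3`), it could then link `s` and `t`. -/
theorem Cfg3.beta (h : Cfg3 G H W R v a b a' b' s t x y β m1 m2) {c : V}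
    (hc : c ∈ R) : ind G c x + ind G c y + β ≤ 4 := by
  have l1 := ind_le G c x
  have l2 := ind_le G c y
  rcases h.cfg.hβ with h1 | h1
  · omega
  · by_contra hcon
    have u1 : G.Adj c x := ind_eq_one.1 (by omega)
    have u2 : G.Adj c y := ind_eq_one.1 (by omega)
    have hR := (h.hR c).1 hc
    refine h.no ((h.cfg.swap34 h1.1).link (M1 := {z | z ∈ m1}) (M2 := {z | z ∈ m2}) (M3 := {c})
      h.w1 h.swap12.w1 (fun z hz => ?_) ?_ ?_ ?_ h.ml1.1.2.2.2.conn h.ml2.1.2.2.2.conn ?_).swap34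
    · rw [hz]; exact hR.1
    · exact Set.disjoint_left.2 h.dj
    · exact Set.disjoint_singleton_right.2 hR.2.1
    · exact Set.disjoint_singleton_right.2 hR.2.2
    · exact .cons (by simp) u1.symm (.adj (by simp) (by simp) u2)

/-- The degree bound for vertices of the component of `s`. -/
theorem Cfg3.mis_le (h : Cfg3 G H W R v a b a' b' s t x y β m1 m2) {c : V}
    (hc : c ∈ comp G R s) : 18 + mis G (comp G R s) c ≤ (comp G R s).card + cntL G a b m1 c +
      cntL G a' b' m2 c + (ind G c x + ind G c y + β) := by
  have h1 := h.deg (mem_comp.1 hc).1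
  have h2 := nb_le_comp hc
  have h3 := nb_add_mis (G := G) hc
  have h4 := ind_eq_zero.2 (h.not_t hc)
  have h5 := ind_le G c s
  omega

theorem Cfg3.nonempty (h : Cfg3 G H W R v a b a' b' s t x y β m1 m2) :
    (comp G R s).Nonempty := by
  have h1 := h.cfg.term s (by simp) (fun e => h.cfg.hv (by simp [← e]))
  have h2 := h.cards.2 s
  have h3 := sum_ind_le G s m1
  have h4 := sum_ind_le G s m2
  have h5 := h.ml1.1.1
  have h6 := h.ml2.1.1
  have h7 : β ≤ 3 := by rcases h.cfg.hβ with h | h <;> omega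
  obtain ⟨c, hc⟩ := Finset.card_pos.1 (show 0 < nb G R s by omega)
  rw [Finset.mem_filter] at hc
  exact ⟨c, mem_comp.2 ⟨hc.1, .adj (by simp) (by simp [hc.1]) hc.2⟩⟩

theorem Cfg3.eight (h : Cfg3 G H W R v a b a' b' s t x y β m1 m2) : 8 ≤ (comp G R s).card := by
  obtain ⟨c, hc⟩ := h.nonempty
  have hR := (mem_comp.1 hc).1
  have h1 := h.mis_le hc
  have h2 := (h.cntL_le hR).1
  have h3 := (h.swap12.cntL_le hR).1
  have h4 := h.beta hR
  omega

/-- The vertex `c` can replace a vertex `p` of the link `m1`. All exceptional vertices are adjacent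
to `p`, so `p` joins `c'`, which is reached from `s` without `c`, to `d` in the component of `t`,
and the third pair is linked as well. -/
theorem Cfg3.exc_aux (h : Cfg3 G H W R v a b a' b' s t x y β m1 m2) {c c' d : V}
    (hc : c ∈ R) (hc' : c' ∈ R) (hd : d ∈ comp G R t) (hcd : c ∉ comp G R t)
    (e1 : Exc G a b m1 c) (e2 : Exc G a b m1 c') (e3 : Exc G a b m1 d)
    (hs : Conn G {z | z = s ∨ (z ∈ R ∧ z ≠ c)} s c') : False := by
  have mem : ∀ {z}, z ∈ R → z ∈ W \ m2.toFinset ∧ z ∉ m1 := fun hz => by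
    have := (h.hR _).1 hz
    simp [this]
  have hdR := (mem_comp.1 hd).1
  obtain ⟨-, p, hp, m', -, -, hm', hsl⟩ := h.ml1.swap (mem hc).1 (mem hc).2 e1
  have q1 := (h.ml1.swap (mem hc').1 (mem hc').2 e2).1 p hp
  have q2 := (h.ml1.swap (mem hdR).1 (mem hdR).2 e3).1 p hp
  have ht : Conn G {z | z = t ∨ (z ∈ R ∧ z ≠ c)} t d := by
    obtain ⟨d', rfl, -, h1⟩ := (mem_comp.1 hd).2.exists_first {d} rfl
    refine h1.monoQ ?_
    have key : ∀ z, Conn G {z | z = t ∨ z ∈ R} t z → z = t ∨ (z ∈ R ∧ z ≠ c) := by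
      intro z hz
      rcases hz.right with h2 | h2
      · exact .inl h2
      · refine .inr ⟨h2, ?_⟩
        rintro rfl
        exact hcd (mem_comp.2 ⟨hc, hz⟩)
    rintro z (hz | rfl)
    · exact key z (hz.monoQ Set.sdiff_subset)
    · exact key z (mem_comp.1 hd).2
  refine h.no (h.cfg.link (M1 := {z | z ∈ m'}) (M2 := {z | z ∈ m2})
    (M3 := {z | z = p ∨ (z ∈ R ∧ z ≠ c)}) ?_ h.swap12.w1 ?_ ?_ ?_ ?_ hsl.conn
    h.ml2.1.2.2.2.conn ?_)
  · intro z hz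
    rcases hm' z hz with rfl | hz
    · exact ((h.hR _).1 hc).1
    · exact h.w1 z hz.1
  · rintro z (rfl | hz)
    · exact h.w1 _ hp
    · exact ((h.hR _).1 hz.1).1
  · refine Set.disjoint_left.2 fun z hz hz2 => ?_
    rcases hm' z hz with rfl | hz
    · exact ((h.hR _).1 hc).2.2 hz2
    · exact h.dj z hz.1 hz2
  · refine Set.disjoint_left.2 fun z hz hz2 => ?_
    rcases hm' z hz with rfl | hz
    · rcases hz2 with rfl | hz2
      · exact (mem hc).2 hp
      · exact hz2.2 rfl
    · rcases hz2 with rfl | hz2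
      · exact hz.2 rfl
      · exact (mem hz2.1).2 hz.1
  · refine Set.disjoint_left.2 fun z hz hz2 => ?_
    rcases hz2 with rfl | hz2
    · exact h.dj _ hp hz
    · exact ((h.hR _).1 hz2.1).2.2 hz
  · refine (hs.monoQ ?_).trans (.cons ?_ q1 (.cons ?_ q2.symm (ht.monoQ ?_).symm))
    · rintro z (hz | hz) <;> simp [hz]
    · rcases hs.right with hz | hz
      · simp [hz]
      · exact .inr (.inr (.inr hz))
    · simp
    · rintro z (hz | hz) <;> simp [hz]

/-- If two vertices of the component of `s` and one of the component of `t` are exceptional, one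
of the former can be rerouted into the link, and the vertex it replaces joins the other two. -/
theorem Cfg3.exc (h : Cfg3 G H W R v a b a' b' s t x y β m1 m2) {c c' d : V}
    (hc : c ∈ comp G R s) (hc' : c' ∈ comp G R s) (hd : d ∈ comp G R t)
    (e1 : Exc G a b m1 c) (e2 : Exc G a b m1 c') (e3 : Exc G a b m1 d) : c = c' := by
  by_contra hne
  have key : ∀ c c', c ≠ c' → c' ∈ comp G R s →
      Conn G ({z | Conn G ({z | z = s ∨ z ∈ R} \ {c, c'}) s z} ∪ {c'}) s c' →
      Conn G {z | z = s ∨ (z ∈ R ∧ z ≠ c)} s c' := by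
    intro c c' hne hc' h2
    refine h2.monoQ ?_
    rintro z (hz | rfl)
    · rcases hz.right with ⟨h3 | h3, h4⟩
      · exact .inl h3
      · exact .inr ⟨h3, fun e => h4 (by simp [e])⟩
    · exact .inr ⟨(mem_comp.1 hc').1, hne.symm⟩
  obtain ⟨t0, ht0, -, h1⟩ := (mem_comp.1 hc).2.exists_first {c, c'} (by simp)
  rcases ht0 with rfl | rfl
  · refine h.exc_aux (mem_comp.1 hc').1 (mem_comp.1 hc).1 hd
      (Finset.disjoint_left.1 h.disj hc') e2 e1 e3 (key _ _ (Ne.symm hne) hc ?_)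
    rwa [Set.pair_comm]
  · exact h.exc_aux (mem_comp.1 hc).1 (mem_comp.1 hc').1 hd
      (Finset.disjoint_left.1 h.disj hc) e1 e2 e3 (key _ _ hne hc' h1)

/-- There is at most one pair of exceptional vertices in different components; every other pair of
vertices of the two components satisfies an improved bound on its neighbours on `m1`. -/
theorem Cfg3.exists_exc (h : Cfg3 G H W R v a b a' b' s t x y β m1 m2) :
    ∃ c1 d1, ∀ c ∈ comp G R s, ∀ d ∈ comp G R t, ¬ (c = c1 ∧ d = d1) →
      cntL G a b m1 c + cntL G a b m1 d ≤ m1.length + 4 ∧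
      (2 ≤ m1.length → cntL G a b m1 c + cntL G a b m1 d ≤ m1.length + 3) := by
  have key : ∀ c ∈ comp G R s, ∀ d ∈ comp G R t, ¬ (Exc G a b m1 c ∧ Exc G a b m1 d) →
      cntL G a b m1 c + cntL G a b m1 d ≤ m1.length + 4 ∧
      (2 ≤ m1.length → cntL G a b m1 c + cntL G a b m1 d ≤ m1.length + 3) := by
    intro c hc d hd hn
    have h1 := h.cntL_le (mem_comp.1 hc).1
    have h2 := h.cntL_le (mem_comp.1 hd).1
    have h3 := h.ml1.1.1
    unfold Exc at hn
    omega
  by_cases hex : ∃ c1 ∈ comp G R s, ∃ d1 ∈ comp G R t, Exc G a b m1 c1 ∧ Exc G a b m1 d1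
  · obtain ⟨c1, hc1, d1, hd1, e1, e2⟩ := hex
    refine ⟨c1, d1, fun c hc d hd hn => key c hc d hd fun ⟨e3, e4⟩ => hn ⟨?_, ?_⟩⟩
    · exact h.exc hc hc1 hd e3 e1 e4
    · exact h.swapST.exc hd hd1 hc e4 e2 e3
  · push Not at hex
    exact ⟨s, s, fun c hc d hd _ => key c hc d hd fun ⟨e3, e4⟩ => hex c hc d hd e3 e4⟩

theorem exists_max_subset (D : Finset V) (P : Finset V → Prop) (h : P ∅) :
    ∃ Q ⊆ D, P Q ∧ ∀ Q' ⊆ D, P Q' → Q'.card ≤ Q.card := by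
  obtain ⟨Q, hQ, hmax⟩ := Finset.exists_max_image (D.powerset.filter P) Finset.card ⟨∅, by simpa⟩
  rw [Finset.mem_filter, Finset.mem_powerset] at hQ
  exact ⟨Q, hQ.1, hQ.2, fun Q' h1 h2 => hmax Q' (by simp [h1, h2])⟩

/-- Each vertex of `D` has at most one non-neighbour in `D`, all of `D` is adjacent to `v`, and the
vertices of `D` that do have a non-neighbour in `D` are adjacent to all of `S'`. Either a largest
clique of `D` forms with `v` a clique on eight vertices, or so many vertices of `D` have a
non-neighbour that they form a hub together with `S'`. -/
theorem hub_of_tight {D S' X : Finset V} (hvD : v ∉ D)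
    (huni : ∀ z ∈ D, G.Adj v z) (hm : ∀ d ∈ D, mis G D d ≤ 1)
    (hDS : Disjoint D S') (hS : ∀ d ∈ D, mis G D d = 1 → ∀ z ∈ S', G.Adj d z)
    (hcard : 24 ≤ 2 * D.card + S'.card) (h8 : 20 ≤ 2 * D.card)
    (hDX : ∀ z ∈ D, z ∈ X) (hSX : ∀ z ∈ S', z ∈ X) (hvX : v ∈ X) :
    ∃ L ⊆ X, Hub G L := by
  obtain ⟨Q, hQD, hQ, hmax⟩ := exists_max_subset D
    (fun Q => ∀ x ∈ Q, ∀ y ∈ Q, x ≠ y → G.Adj x y) (by simp)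
  replace hQ := And.intro hQD hQ
  by_cases h7 : 7 ≤ Q.card
  · refine ⟨insert v Q, ?_, hub_of_clique ?_ ?_⟩
    · exact Finset.insert_subset hvX fun z hz => hDX z (hQ.1 hz)
    · rw [Finset.card_insert_of_notMem fun hv => hvD (hQ.1 hv)]; omega
    · intro x hx y hy hxy
      rcases Finset.mem_insert.1 hx with ex | hx' <;> rcases Finset.mem_insert.1 hy with ey | hy'
      · exact absurd (ex.trans ey.symm) hxy
      · exact ex ▸ huni y (hQ.1 hy')
      · exact ey ▸ (huni x (hQ.1 hx')).symm
      · exact hQ.2 x hx' y hy' hxy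
  -- By maximality each vertex outside `Q` has a non-neighbour `φ d` in `Q`; `φ` is injective, as no
  -- vertex has two non-neighbours, and both `d` and `φ d` belong to `K`.
  have hφ : ∀ d ∈ D \ Q, ∃ q ∈ Q, d ≠ q ∧ ¬ G.Adj d q := by
    intro d hd
    rw [Finset.mem_sdiff] at hd
    by_contra hn
    push Not at hn
    have h1 := hmax (insert d Q) (Finset.insert_subset hd.1 hQ.1) (by
      intro x hx y hy hxy
      rcases Finset.mem_insert.1 hx with ex | hx' <;> rcases Finset.mem_insert.1 hy with ey | hy'
      · exact absurd (ex.trans ey.symm) hxy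
      · exact ex ▸ hn y hy' (ex ▸ hxy)
      · exact ey ▸ (hn x hx' (ey ▸ hxy.symm)).symm
      · exact hQ.2 x hx' y hy' hxy)
    rw [Finset.card_insert_of_notMem hd.2] at h1
    omega
  choose! φ hφ1 hφ2 hφ3 using hφ
  have hmem : ∀ d ∈ D, ∀ e ∈ D, d ≠ e → ¬ G.Adj d e → mis G D d = 1 := by
    intro d hd e he hde hn
    have := mis_pos he hde hn
    have := hm d hd
    omega
  have hinj : Set.InjOn φ (D \ Q : Finset V) := by
    intro d hd e he hde
    have hd' := (Finset.mem_sdiff.1 hd).1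
    have he' := (Finset.mem_sdiff.1 he).1
    have h1 := hφ1 d hd
    exact mis_le_one (hm _ (hQ.1 h1)) hd' he' (hφ2 d hd).symm (hde ▸ (hφ2 e he).symm)
      (fun h => hφ3 d hd h.symm) (fun h => hφ3 e he (hde ▸ h.symm))
  set K := D.filter fun d => mis G D d = 1 with hK
  have hKcard : 2 * (D \ Q).card ≤ K.card := by
    have hd : Disjoint (D \ Q) ((D \ Q).image φ) := by
      rw [Finset.disjoint_left]
      intro z hz hz2
      obtain ⟨d, hd, rfl⟩ := Finset.mem_image.1 hz2
      exact (Finset.mem_sdiff.1 hz).2 (hφ1 d hd)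
    have h1 := Finset.card_union_of_disjoint hd
    rw [Finset.card_image_of_injOn hinj] at h1
    have h2 : (D \ Q) ∪ (D \ Q).image φ ⊆ K := by
      intro z hz
      rw [hK, Finset.mem_filter]
      rcases Finset.mem_union.1 hz with hz | hz
      · have hz' := (Finset.mem_sdiff.1 hz).1
        exact ⟨hz', hmem z hz' _ (hQ.1 (hφ1 z hz)) (hφ2 z hz) (hφ3 z hz)⟩
      · obtain ⟨d, hd, rfl⟩ := Finset.mem_image.1 hz
        have hq := hQ.1 (hφ1 d hd)
        exact ⟨hq, hmem _ hq d (Finset.mem_sdiff.1 hd).1 (hφ2 d hd).symm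
          fun h => hφ3 d hd h.symm⟩
    have := Finset.card_le_card h2
    omega
  have h1 := Finset.card_sdiff_add_card_eq_card hQ.1
  have hKD : K ⊆ D := Finset.filter_subset _ _
  refine ⟨K ∪ S', ?_, hub_of_near_clique (hDS.mono_left hKD) (by omega) (by omega) ?_ ?_⟩
  · exact Finset.union_subset (fun z hz => hDX z (hKD hz)) hSX
  · intro x hx y hy
    exact hS x (hKD hx) (Finset.mem_filter.1 hx).2 y hy
  · intro x hx y hy z hz hxy hxz n1 n2
    exact mis_le_one (hm x (hKD hx)) (hKD hy) (hKD hz) hxy hxz n1 n2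


theorem Cfg3.card_add (h : Cfg3 G H W R v a b a' b' s t x y β m1 m2) :
    (comp G R s).card + (comp G R t).card ≤ R.card := by
  rw [← Finset.card_union_of_disjoint h.disj]
  exact Finset.card_le_card (Finset.union_subset (Finset.filter_subset _ _)
    (Finset.filter_subset _ _))

/-- The end of the argument: if `c0` and `d0` both have non-neighbours in their components, all
bounds are attained, and the component with the smaller number of neighbours on the links is used
to build a hub. -/
theorem Cfg3.hub_aux (h : Cfg3 G H W R v a b a' b' s t x y β m1 m2) {c0 d0 : V}
    (hc0 : c0 ∈ comp G R s) (hd0 : d0 ∈ comp G R t)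
    (hc : mis G (comp G R s) c0 ≠ 0) (hd : mis G (comp G R t) d0 ≠ 0)
    (pD : ∀ d ∈ comp G R t, mis G (comp G R s) c0 + mis G (comp G R t) d + β ≤ 4)
    (p1 : ∀ d ∈ comp G R t, cntL G a b m1 c0 + cntL G a b m1 d ≤ m1.length + 4 ∧
      (2 ≤ m1.length → cntL G a b m1 c0 + cntL G a b m1 d ≤ m1.length + 3))
    (p2 : ∀ d ∈ comp G R t, cntL G a' b' m2 c0 + cntL G a' b' m2 d ≤ m2.length + 4 ∧
      (2 ≤ m2.length → cntL G a' b' m2 c0 + cntL G a' b' m2 d ≤ m2.length + 3))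
    (h5 : cntL G a b m1 d0 + cntL G a' b' m2 d0 ≤ 5) : ∃ L ⊆ H, Hub G L := by
  have hk := h.cards.1
  have hRH : ∀ z ∈ R, z ∈ H := fun z hz => h.cfg.WH ((h.hR z).1 hz).1
  have hvR : v ∉ R := fun hz => h.cfg.Wv ((h.hR v).1 hz).1
  have huni : ∀ z ∈ R, G.Adj v z := fun z hz => h.cfg.uni z (hRH z hz) fun e => hvR (e ▸ hz)
  have hcard := h.card_add
  have hβ : 2 ≤ β := by rcases h.cfg.hβ with h | h <;> omega
  have hcR := (mem_comp.1 hc0).1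
  have hdR := (mem_comp.1 hd0).1
  -- The degree bounds of `c0` and of any `d` that is not adjacent to all of its component add up to
  -- the whole of `H`, so they leave no slack.
  have tight : ∀ d ∈ comp G R t, mis G (comp G R t) d = 1 →
      cntL G a b m1 d = cntL G a b m1 d0 ∧ cntL G a' b' m2 d = cntL G a' b' m2 d0 ∧
      ind G d x = 1 ∧ ind G d y = 1 := by
    intro d hd' hm
    have := p1 d hd'
    have := p2 d hd'
    have := p1 d0 hd0
    have := p2 d0 hd0
    have := h.mis_le hc0
    have := h.swapST.mis_le hd'
    have := h.swapST.mis_le hd0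
    have := h.beta hcR
    have := h.beta (mem_comp.1 hd').1
    have := h.beta hdR
    have := ind_le G d x
    have := ind_le G d y
    have := pD d hd'
    have := pD d0 hd0
    omega
  have hβ2 : β = 2 := by
    have := pD d0 hd0
    omega
  have t0 := tight d0 hd0 (by have := pD d0 hd0; omega)
  have c1 := p1 d0 hd0
  have c2 := p2 d0 hd0
  have b1 := h.cntL_le hcR
  have b2 := h.swap12.cntL_le hcR
  have b3 := h.cntL_le hdR
  have b4 := h.swap12.cntL_le hdR
  have b5 := h.mis_le hc0
  have b6 := h.swapST.mis_le hd0
  have b7 := h.beta hcR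
  have b8 := h.beta hdR
  have h10 : 10 ≤ (comp G R t).card := by omega
  have hDm : ∀ d ∈ comp G R t, mis G (comp G R t) d ≤ 1 := fun d hd => by
    have := pD d hd
    omega
  have htH := h.cfg.tH
  have hWt := h.cfg.Wt
  have sub1 : [a, b, x, y].Sublist [a, b, a', b', s, t, x, y] :=
    .cons_cons a (.cons_cons b (.cons _ (.cons _ (.cons _ (.cons _ (.refl _))))))
  have sub2 : [a', b', x, y].Sublist [a, b, a', b', s, t, x, y] :=
    .cons _ (.cons _ (.cons_cons _ (.cons_cons _ (.cons _ (.cons _ (.refl _))))))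
  have sub3 : [x, y].Sublist [a, b, x, y] := .cons _ (.cons _ (.refl _))
  have fin : ∀ l : List V, l.Nodup → (∀ z ∈ l, z ∉ R ∧ z ∈ H) →
      (∀ d ∈ comp G R t, mis G (comp G R t) d = 1 → ∀ z ∈ l, G.Adj d z) →
      24 ≤ 2 * (comp G R t).card + l.length → ∃ L ⊆ H, Hub G L := by
    intro l hl hlR hla hlc
    refine hub_of_tight (D := comp G R t) (S' := l.toFinset) (X := H) (v := v)
      (fun hv => hvR (mem_comp.1 hv).1) (fun z hz => huni z (mem_comp.1 hz).1) hDm ?_ ?_ ?_ ?_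
      (fun z hz => hRH z (mem_comp.1 hz).1) ?_ h.cfg.vH
    · rw [Finset.disjoint_left]
      intro z hz hz2
      exact (hlR z (List.mem_toFinset.1 hz2)).1 (mem_comp.1 hz).1
    · intro d hd hm z hz
      exact hla d hd hm z (List.mem_toFinset.1 hz)
    · rw [List.toFinset_card_of_nodup hl]; exact hlc
    · omega
    · intro z hz
      exact (hlR z (List.mem_toFinset.1 hz)).2
  have hxR : ∀ z ∈ [a, b, a', b', s, t, x, y], z ∉ R ∧ z ∈ H := fun z hz =>
    ⟨fun hz2 => hWt z hz ((h.hR z).1 hz2).1, htH z hz⟩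
  -- The link `m` consists of one vertex, and every vertex of the component with a non-neighbour there
  -- is adjacent to it and to its two ends; together with `x` and `y` they are five common neighbours.
  have five : ∀ {a b : V} {m : List V}, m.length = 1 → cntL G a b m d0 = 3 →
      (∀ d ∈ comp G R t, mis G (comp G R t) d = 1 → cntL G a b m d = cntL G a b m d0) →
      (∀ z ∈ [a, b, x, y], z ∉ R ∧ z ∈ H) → (∀ z ∈ m, z ∈ W ∧ z ∉ R) →
      [a, b, x, y].Nodup → (∀ z ∈ [a, b, x, y], z ∉ W) →
      ∃ L ⊆ H, Hub G L := by
    intro a b m hm h3 hc hz hmW hn hzW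
    obtain ⟨p, rfl⟩ := List.length_eq_one_iff.1 hm
    have hp := hmW p (by simp)
    refine fin (p :: [a, b, x, y]) ?_ ?_ ?_
      (by simp only [List.length_cons, List.length_nil]; omega)
    · exact List.nodup_cons.2 ⟨fun hpm => hzW p hpm hp.1, hn⟩
    · intro z hz'
      rcases List.mem_cons.1 hz' with rfl | hz'
      · exact ⟨hp.2, h.cfg.WH hp.1⟩
      · exact hz z hz'
    · intro d hd hm
      have e1 := hc d hd hm
      rw [h3] at e1
      simp only [cntL, List.map_cons, List.map_nil, List.sum_cons, List.sum_nil] at e1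
      have l1 := ind_le G d a
      have l2 := ind_le G d b
      have l3 := ind_le G d p
      have e2 := tight d hd hm
      have i1 := ind_eq_one.1 (show ind G d a = 1 by omega)
      have i2 := ind_eq_one.1 (show ind G d b = 1 by omega)
      have i3 := ind_eq_one.1 (show ind G d p = 1 by omega)
      have i4 := ind_eq_one.1 e2.2.2.1
      have i5 := ind_eq_one.1 e2.2.2.2
      simp [i1, i2, i3, i4, i5]
  by_cases h4 : cntL G a b m1 d0 + cntL G a' b' m2 d0 = 4
  · refine fin [x, y] (h.cfg.nd.sublist (sub3.trans sub1))
      (fun z hz => hxR z ((sub3.trans sub1).subset hz)) ?_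
      (by simp; omega)
    intro d hd hm
    have e2 := tight d hd hm
    have i4 := ind_eq_one.1 e2.2.2.1
    have i5 := ind_eq_one.1 e2.2.2.2
    simp [i4, i5]
  · by_cases h3 : cntL G a b m1 d0 = 3
    · refine five (by omega) h3 (fun d hd hm => (tight d hd hm).1)
        (fun z hz => hxR z (sub1.subset hz))
        (fun z hz => ⟨h.w1 z hz, fun hz2 => ((h.hR z).1 hz2).2.1 hz⟩) (h.cfg.nd.sublist sub1)
        (fun z hz => hWt z (sub1.subset hz))
    · refine five (m := m2) (by omega) (show cntL G a' b' m2 d0 = 3 by omega)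
        (fun d hd hm => (tight d hd hm).2.1)
        (fun z hz => hxR z (sub2.subset hz))
        (fun z hz => ⟨h.swap12.w1 z hz, fun hz2 => ((h.hR z).1 hz2).2.2 hz⟩) (h.cfg.nd.sublist sub2)
        (fun z hz => hWt z (sub2.subset hz))

/-- Apart from exceptional pairs, the non-neighbours of a vertex `c` of the component of `s` and of a
vertex `d` of the component of `t` number at most `4 - β`. If all vertices of one component except
at most two exceptional ones see their whole component, it contains with `v` a clique on eight
vertices; otherwise `hub_aux` applies to one of the two components. -/
theorem Cfg3.hub (h : Cfg3 G H W R v a b a' b' s t x y β m1 m2) : ∃ L ⊆ H, Hub G L := by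
  obtain ⟨c1, d1, p1⟩ := h.exists_exc
  obtain ⟨c2, d2, p2⟩ := h.swap12.exists_exc
  have hk := h.cards.1
  have hCR : comp G R s ⊆ R := Finset.filter_subset _ _
  have hDR : comp G R t ⊆ R := Finset.filter_subset _ _
  have hRH : ∀ z ∈ R, z ∈ H := fun z hz => h.cfg.WH ((h.hR z).1 hz).1
  have hvR : v ∉ R := fun hz => h.cfg.Wv ((h.hR v).1 hz).1
  have huni : ∀ z ∈ R, G.Adj v z := fun z hz => h.cfg.uni z (hRH z hz) fun e => hvR (e ▸ hz)
  have hcard := h.card_add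
  have hβ : 2 ≤ β := by rcases h.cfg.hβ with h | h <;> omega
  have clique' : ∀ s' d1 d2, 8 ≤ (comp G R s').card →
      (∀ c ∈ comp G R s', c ≠ d1 → c ≠ d2 → mis G (comp G R s') c = 0) →
      ∃ L ⊆ H, Hub G L := by
    intro s' d1 d2 h8 hm
    have hsub : (comp G R s').erase d2 ⊆ R := (Finset.erase_subset _ _).trans
      (Finset.filter_subset _ _)
    refine ⟨insert v ((comp G R s').erase d2), ?_, hub_of_clique ?_ ?_⟩
    · intro z hz
      rcases Finset.mem_insert.1 hz with rfl | hz
      · exact h.cfg.vH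
      · exact hRH z (hsub hz)
    · rw [Finset.card_insert_of_notMem fun hv => hvR (hsub hv)]
      have := Finset.pred_card_le_card_erase (s := comp G R s') (a := d2)
      omega
    · have key : ∀ x ∈ (comp G R s').erase d2, ∀ y ∈ (comp G R s').erase d2, x ≠ y → x ≠ d1 →
          G.Adj x y := by
        intro x hx y hy hxy hxd
        rw [Finset.mem_erase] at hx hy
        by_contra hn
        have := mis_pos hy.2 hxy hn
        have := hm x hx.2 hxd hx.1
        omega
      intro x hx y hy hxy
      rcases Finset.mem_insert.1 hx with ex | hx' <;> rcases Finset.mem_insert.1 hy with ey | hy'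
      · exact absurd (ex.trans ey.symm) hxy
      · exact ex ▸ huni y (hsub hy')
      · exact ey ▸ (huni x (hsub hx')).symm
      · by_cases hxd : x = d1
        · exact (key y hy' x hx' hxy.symm fun e => hxy (hxd.trans e.symm)).symm
        · exact key x hx' y hy' hxy hxd
  have pair : ∀ c ∈ comp G R s, ∀ d ∈ comp G R t, ¬ (c = c1 ∧ d = d1) → ¬ (c = c2 ∧ d = d2) →
      mis G (comp G R s) c + mis G (comp G R t) d + β ≤ 4 := by
    intro c hc d hd n1 n2
    have := p1 c hc d hd n1
    have := p2 c hc d hd n2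
    have := h.mis_le hc
    have := h.swapST.mis_le hd
    have := h.beta (hCR hc)
    have := h.beta (hDR hd)
    omega
  by_cases hD : ∀ d ∈ comp G R t, d ≠ d1 → d ≠ d2 → mis G (comp G R t) d = 0
  · exact clique' t d1 d2 h.swapST.eight hD
  by_cases hC : ∀ c ∈ comp G R s, c ≠ c1 → c ≠ c2 → mis G (comp G R s) c = 0
  · exact clique' s c1 c2 h.eight hC
  push Not at hC hD
  obtain ⟨c0, hc0, nc1, nc2, hc⟩ := hC
  obtain ⟨d0, hd0, nd1, nd2, hd⟩ := hD
  have pD := fun d hd => pair c0 hc0 d hd (by tauto) (by tauto)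
  have pC := fun c hc => pair c hc d0 hd0 (by tauto) (by tauto)
  have hbu := h.beta (hCR hc0)
  by_cases h5 : cntL G a b m1 d0 + cntL G a' b' m2 d0 ≤ 5
  · exact h.hub_aux hc0 hd0 hc hd pD (fun d hd => p1 c0 hc0 d hd (by tauto))
      (fun d hd => p2 c0 hc0 d hd (by tauto)) h5
  · have q1 := fun c hc => p1 c hc d0 hd0 (by tauto)
    have q2 := fun c hc => p2 c hc d0 hd0 (by tauto)
    refine h.swapST.hub_aux hd0 hc0 hd hc (fun c hc => by have := pC c hc; omega)
      (fun c hc => by have := q1 c hc; omega) (fun c hc => by have := q2 c hc; omega) ?_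
    have := q1 c0 hc0
    have := q2 c0 hc0
    have := h.ml1.1.1
    have := h.ml2.1.1
    have := h.mis_le hc0
    have := h.swapST.mis_le hd0
    have := h.beta (hCR hc0)
    have := h.beta (hDR hd0)
    have := pD d0 hd0
    omega

end
end
end LinkProof

/-! ### Finding the first two links -/

namespace LinkProof
section
open scoped Classical
variable {V : Type}

section
variable {G : SimpleGraph V} {H W : Finset V} {v a b a' b' s t x y : V} {β : ℕ}

/-- Two vertices at distance at least three inside `R`. -/
theorem nb_add_nb {R : Finset V} {c d : V} (hc : c ∈ R) (hd : d ∈ R) (hcd : c ≠ d)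
    (h1 : ¬ G.Adj c d) (h2 : ∀ z ∈ R, G.Adj c z → ¬ G.Adj d z) :
    nb G R c + nb G R d + 2 ≤ R.card ∧
      (R.card ≤ nb G R c + nb G R d + 2 → ∀ z ∈ R, z ≠ c → z ≠ d → G.Adj c z ∨ G.Adj d z) := by
  set X := (R.filter fun z => G.Adj c z) ∪ (R.filter fun z => G.Adj d z) with hX
  have hd1 : X.card = nb G R c + nb G R d := by
    refine Finset.card_union_of_disjoint (Finset.disjoint_left.2 fun z hz hz2 => ?_)
    rw [Finset.mem_filter] at hz hz2
    exact h2 z hz.1 hz.2 hz2.2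
  have hd2 : (insert c (insert d X)).card = nb G R c + nb G R d + 2 := by
    rw [Finset.card_insert_of_notMem, Finset.card_insert_of_notMem, hd1]
    · simp [hX, h1]
    · simp [hX, hcd]
      exact fun _ h => h1 h.symm
  have hsub : insert c (insert d X) ⊆ R :=
    Finset.insert_subset hc (Finset.insert_subset hd
      (Finset.union_subset (Finset.filter_subset _ _) (Finset.filter_subset _ _)))
  rw [← hd2]
  refine ⟨Finset.card_le_card hsub, fun h z hzR hzc hzd => ?_⟩
  have hz := hzR
  have := Finset.eq_of_subset_of_card_le hsub h
  rw [← this] at hz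
  simpa [hX, hzc, hzd, hzR] using hz

/-- The neighbourhoods of `s` and `t` in `R` if `s` and `t` have no link in `R`. -/
theorem far_of_no_link {R : Finset V} (h : ∀ m, ¬ IsLink G R s t m) {c d : V} (hc : c ∈ R)
    (hd : d ∈ R) (hsc : G.Adj s c) (htd : G.Adj t d) :
    c ≠ d ∧ ¬ G.Adj c d ∧ ∀ z ∈ R, G.Adj c z → ¬ G.Adj d z := by
  have hne : c ≠ d := by
    rintro rfl
    exact h [c] ⟨by simp, by simp, by simpa using hc, hsc, htd.symm⟩
  refine ⟨hne, fun e => ?_, fun z hz e1 e2 => ?_⟩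
  · exact h [c, d] ⟨by simp, by simpa using hne, by simpa using ⟨hc, hd⟩, hsc, e, htd.symm⟩
  · exact h [c, z, d] ⟨by simp, by simpa using ⟨⟨e1.ne, hne⟩, e2.ne.symm⟩,
      by simpa using ⟨hc, hz, hd⟩, hsc, e1, e2.symm, htd.symm⟩

theorem ind_add_ind {R : Finset V} (h : ∀ m, ¬ IsLink G R a b m) {c : V} (hc : c ∈ R) :
    ind G c a + ind G c b ≤ 1 := by
  have l1 := ind_le G c a
  have l2 := ind_le G c b
  by_contra hcon
  have u1 : G.Adj c a := ind_eq_one.1 (by omega)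
  have u2 : G.Adj c b := ind_eq_one.1 (by omega)
  exact h [c] ⟨by simp, by simp, by simpa using hc, u1.symm, u2⟩

/-- One of the first three pairs has a link. -/
theorem Cfg.exists_link (h : Cfg G H W v a b a' b' s t x y β) :
    (∃ m, IsLink G W a b m) ∨ (∃ m, IsLink G W a' b' m) ∨ ∃ m, IsLink G W s t m := by
  by_contra hcon
  push Not at hcon
  obtain ⟨n1, n2, n3⟩ := hcon
  have hcard := h.card
  have hβ : β ≤ 3 := by rcases h.hβ with h | h <;> omega
  have d1 := h.term s (by simp) (fun e => h.hv (by simp [← e]))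
  have d2 := h.term t (by simp) (fun e => h.hv (by simp [← e]))
  obtain ⟨c, hc⟩ := Finset.card_pos.1 (show 0 < nb G W s by omega)
  obtain ⟨d, hd⟩ := Finset.card_pos.1 (show 0 < nb G W t by omega)
  rw [Finset.mem_filter] at hc hd
  obtain ⟨f1, f2, f3⟩ := far_of_no_link n3 hc.1 hd.1 hc.2 hd.2
  have h1 := (nb_add_nb hc.1 hd.1 f1 f2 f3).1
  have h2 := h.deg c hc.1
  have h3 := h.deg d hd.1
  have := ind_add_ind n1 hc.1
  have := ind_add_ind n2 hc.1
  have := ind_add_ind n3 hc.1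
  have := ind_add_ind n1 hd.1
  have := ind_add_ind n2 hd.1
  have := ind_add_ind n3 hd.1
  have := ind_le G c x
  have := ind_le G c y
  have := ind_le G d x
  have := ind_le G d y
  omega

/-- Either some pair has a link disjoint from a link of the first pair, or there is a hub. -/
theorem Cfg.hub_of_one (h : Cfg G H W v a b a' b' s t x y β) {m : List V}
    (hm : MinLink G W a b m)
    (no : ∀ m1 m2, IsLink G W a b m1 → (∀ z ∈ m1, z ∉ m2) →
      ¬ IsLink G W a' b' m2 ∧ ¬ IsLink G W s t m2 ∧ (β = 3 → ¬ IsLink G W x y m2)) :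
    ∃ L ⊆ H, Hub G L := by
  set R := W \ m.toFinset with hR
  have memR : ∀ z, z ∈ R ↔ z ∈ W ∧ z ∉ m := fun z => by simp [hR]
  have lift : ∀ {a b m'}, IsLink G R a b m' → IsLink G W a b m' ∧ ∀ z ∈ m, z ∉ m' :=
    fun hl => ⟨⟨hl.1, hl.2.1, fun z hz => ((memR z).1 (hl.2.2.1 z hz)).1, hl.2.2.2⟩,
      fun z hz hz2 => ((memR z).1 (hl.2.2.1 z hz2)).2 hz⟩
  have n2 : ∀ m', ¬ IsLink G R a' b' m' := fun m' hl =>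
    (no m m' hm.1 (lift hl).2).1 (lift hl).1
  have n3 : ∀ m', ¬ IsLink G R s t m' := fun m' hl =>
    (no m m' hm.1 (lift hl).2).2.1 (lift hl).1
  have n4 : β = 3 → ∀ m', ¬ IsLink G R x y m' := fun hb m' hl =>
    (no m m' hm.1 (lift hl).2).2.2 hb (lift hl).1
  have hsd := fun c => nb_sdiff G c hm.1.2.1 hm.1.2.2.1
  rw [← hR] at hsd
  have hcard := h.card
  have hβ : β = 2 ∨ β = 3 := by rcases h.hβ with h | h <;> omega
  have hlen := hm.1.1
  have hRcard := (hsd s).2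
  have d1 := h.term s (by simp) (fun e => h.hv (by simp [← e]))
  have d2 := h.term t (by simp) (fun e => h.hv (by simp [← e]))
  have ss := sum_ind_le G s m
  have st := sum_ind_le G t m
  have es := (hsd s).1
  have et := (hsd t).1
  have dg : ∀ c ∈ R, 12 ≤ nb G R c + cntL G a b m c := by
    intro c hc
    have h1 := h.deg c ((memR c).1 hc).1
    have h2 := (hsd c).1
    have := ind_add_ind n2 hc
    have := ind_add_ind n3 hc
    have := ind_le G c x
    have := ind_le G c y
    have : β = 3 → ind G c x + ind G c y ≤ 1 := fun hb => ind_add_ind (n4 hb) hc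
    unfold cntL
    omega
  have hle : ∀ c ∈ R, cntL G a b m c ≤ 3 ∧ cntL G a b m c ≤ m.length + 2 := fun c hc =>
    hm.cntL_le ((memR c).1 hc).1 ((memR c).1 hc).2
  obtain ⟨d, hd⟩ := Finset.card_pos.1 (show 0 < nb G R t by omega)
  rw [Finset.mem_filter] at hd
  -- two exceptional neighbours of `s` cannot coexist with an exceptional neighbour of `t`
  have exc : ∀ c ∈ R, ∀ c' ∈ R, G.Adj s c → G.Adj s c' → Exc G a b m c → Exc G a b m c' →
      Exc G a b m d → c = c' := by
    intro c hc c' hc' hsc hsc' e1 e2 e3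
    by_contra hne
    have f1 := (far_of_no_link n3 hc hd.1 hsc hd.2).1
    have f2 := (far_of_no_link n3 hc' hd.1 hsc' hd.2).1
    have hc := (memR c).1 hc
    have hc' := (memR c').1 hc'
    have hdR := (memR d).1 hd.1
    obtain ⟨-, p, hp, m', hl', hnd', hm', hsl⟩ := hm.swap hc.1 hc.2 e1
    have q1 := (hm.swap hc'.1 hc'.2 e2).1 p hp
    have q2 := (hm.swap hdR.1 hdR.2 e3).1 p hp
    have hpW := hm.1.2.2.1 p hp
    refine (no m' [c', p, d] ⟨by omega, hnd', ?_, hsl⟩ ?_).2.1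
      ⟨by simp, by simpa using ⟨⟨q1.ne, f2⟩, q2.ne.symm⟩, by simpa using ⟨hc'.1, hpW, hdR.1⟩,
        hsc', q1, q2.symm, hd.2.symm⟩
    · intro z hz
      rcases hm' z hz with rfl | hz
      · exact hc.1
      · exact hm.1.2.2.1 z hz.1
    · intro z hz
      simp only [List.mem_cons, List.not_mem_nil, or_false, not_or]
      rcases hm' z hz with rfl | hz
      · exact ⟨hne, fun e => hc.2 (e ▸ hp), f1⟩
      · exact ⟨fun e => hc'.2 (e ▸ hz.1), hz.2, fun e => hdR.2 (e ▸ hz.1)⟩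
  obtain ⟨c1, hc1⟩ : ∃ c1, ∀ c ∈ R, G.Adj s c → c ≠ c1 → ¬ (Exc G a b m c ∧ Exc G a b m d) := by
    by_cases hex : ∃ c1 ∈ R, G.Adj s c1 ∧ Exc G a b m c1
    · obtain ⟨c1, h1, h2, h3⟩ := hex
      exact ⟨c1, fun c hc hsc hne e => hne (exc c hc c1 h1 hsc h2 e.1 h3 e.2)⟩
    · push Not at hex
      exact ⟨s, fun c hc hsc _ e => hex c hc hsc e.1⟩
  have key : ∀ c ∈ R, G.Adj s c → c ≠ c1 → β = 2 ∧ m.length ≤ 1 ∧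
      R.card ≤ nb G R c + nb G R d + 2 := by
    intro c hc hsc hne
    obtain ⟨f1, f2, f3⟩ := far_of_no_link n3 hc hd.1 hsc hd.2
    have h1 := (nb_add_nb hc hd.1 f1 f2 f3).1
    have h2 := hc1 c hc hsc hne
    have h3 := hle c hc
    have h4 := hle d hd.1
    have h5 := dg c hc
    have h6 := dg d hd.1
    unfold Exc at h2
    omega
  set C := (R.filter fun z => G.Adj s z).erase c1 with hC
  have hCcard : nb G R s ≤ C.card + 1 := by
    have : (R.filter fun z => G.Adj s z).card - 1 ≤ C.card := Finset.pred_card_le_card_erase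
    unfold nb
    omega
  have memC : ∀ c ∈ C, c ∈ R ∧ G.Adj s c ∧ c ≠ c1 := fun c hc => by
    rw [hC, Finset.mem_erase, Finset.mem_filter] at hc
    tauto
  have hRH : ∀ z ∈ R, z ∈ H := fun z hz => h.WH ((memR z).1 hz).1
  have hvR : v ∉ R := fun hz => h.Wv ((memR v).1 hz).1
  have huni : ∀ z ∈ R, G.Adj v z := fun z hz => h.uni z (hRH z hz) fun e => hvR (e ▸ hz)
  obtain ⟨c, hc⟩ := Finset.card_pos.1 (show 0 < C.card by omega)
  have hc := memC c hc
  have hk := key c hc.1 hc.2.1 hc.2.2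
  refine ⟨insert v C, ?_, hub_of_clique ?_ ?_⟩
  · exact Finset.insert_subset h.vH fun z hz => hRH z (memC z hz).1
  · rw [Finset.card_insert_of_notMem fun hv => hvR (memC v hv).1]
    omega
  · intro c hc c' hc' hne
    rcases Finset.mem_insert.1 hc with e | hc <;> rcases Finset.mem_insert.1 hc' with e' | hc'
    · exact absurd (e.trans e'.symm) hne
    · exact e ▸ huni c' (memC c' hc').1
    · exact e' ▸ (huni c (memC c hc).1).symm
    · have hc := memC c hc
      have hc' := memC c' hc'
      obtain ⟨f1, f2, f3⟩ := far_of_no_link n3 hc.1 hd.1 hc.2.1 hd.2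
      obtain ⟨g1, g2, g3⟩ := far_of_no_link n3 hc'.1 hd.1 hc'.2.1 hd.2
      rcases (nb_add_nb hc.1 hd.1 f1 f2 f3).2 (key c hc.1 hc.2.1 hc.2.2).2.2 c' hc'.1 hne.symm g1
        with e | e
      · exact e
      · exact absurd e.symm g2

/-- Disjoint links of two pairs can be chosen with the least total length, so that each is a
shortest link avoiding the other. -/
theorem Cfg.hub_of_two (h : Cfg G H W v a b a' b' s t x y β) (no : ¬ Link4 G H a b a' b' s t x y)
    {m1 m2 : List V} (h1 : IsLink G W a b m1) (h2 : IsLink G W a' b' m2)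
    (hd : ∀ z ∈ m1, z ∉ m2) : ∃ L ⊆ H, Hub G L := by
  have hP : ∃ n, ∃ m1 m2, IsLink G W a b m1 ∧ IsLink G W a' b' m2 ∧ (∀ z ∈ m1, z ∉ m2) ∧
    m1.length + m2.length = n := ⟨_, m1, m2, h1, h2, hd, rfl⟩
  obtain ⟨m1, m2, h1, h2, hd, hn⟩ := Nat.find_spec hP
  have hmin : ∀ m1' m2', IsLink G W a b m1' → IsLink G W a' b' m2' → (∀ z ∈ m1', z ∉ m2') →
      m1.length + m2.length ≤ m1'.length + m2'.length :=
    fun m1' m2' q1 q2 q3 => hn ▸ Nat.find_min' hP ⟨m1', m2', q1, q2, q3, rfl⟩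
  have lift : ∀ {m : List V} {a b : V} {m' : List V}, IsLink G (W \ m.toFinset) a b m' → IsLink G W a b m' ∧
      ∀ z ∈ m, z ∉ m' := fun {m a b m'} hl => ⟨⟨hl.1, hl.2.1, fun z hz =>
        (Finset.mem_sdiff.1 (hl.2.2.1 z hz)).1, hl.2.2.2⟩, fun z hz hz2 =>
        (Finset.mem_sdiff.1 (hl.2.2.1 z hz2)).2 (List.mem_toFinset.2 hz)⟩
  refine Cfg3.hub (R := (W \ m1.toFinset) \ m2.toFinset) ⟨h, ⟨⟨h1.1, h1.2.1, fun z hz => ?_, h1.2.2.2⟩, fun m' hm' => ?_⟩,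
    ⟨⟨h2.1, h2.2.1, fun z hz => ?_, h2.2.2.2⟩, fun m' hm' => ?_⟩, hd, no, fun z => ?_⟩
  · exact Finset.mem_sdiff.2 ⟨h1.2.2.1 z hz, fun h => hd z hz (List.mem_toFinset.1 h)⟩
  · have := hmin m' m2 (lift hm').1 h2 fun z hz hz2 => (lift hm').2 z hz2 hz
    omega
  · exact Finset.mem_sdiff.2 ⟨h2.2.2.1 z hz, fun h => hd z (List.mem_toFinset.1 h) hz⟩
  · have := hmin m1 m' h1 (lift hm').1 (lift hm').2
    omega
  · simp [and_assoc]

/-- After a shortest link of the first pair either some other pair has a disjoint link, which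
reduces to `hub_of_two` up to the order of the pairs, or `hub_of_one` gives a hub. -/
theorem Cfg.hub_of_first (h : Cfg G H W v a b a' b' s t x y β)
    (no : ¬ Link4 G H a b a' b' s t x y) {m : List V} (hm : IsLink G W a b m) :
    ∃ L ⊆ H, Hub G L := by
  by_contra hcon
  obtain ⟨m0, hm0⟩ := exists_minLink hm
  refine hcon (h.hub_of_one hm0 fun m1 m2 h1 hd => ⟨fun h2 => ?_, fun h2 => ?_, fun hb h2 => ?_⟩)
  · exact hcon (h.hub_of_two no h1 h2 hd)
  · exact hcon (h.swap23.hub_of_two (fun hl => no hl.swap23) h1 h2 hd)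
  · exact hcon ((h.swap34 hb).swap23.hub_of_two (fun hl => no hl.swap23.swap34) h1 h2 hd)

/-- Four given pairs in `H` can be linked unless `H` contains a hub. -/
theorem Cfg.hub (h : Cfg G H W v a b a' b' s t x y β)
    (no : ¬ Link4 G H a b a' b' s t x y) : ∃ L ⊆ H, Hub G L := by
  rcases h.exists_link with ⟨m, hm⟩ | ⟨m, hm⟩ | ⟨m, hm⟩
  · exact h.hub_of_first no hm
  · exact h.swap12.hub_of_first (fun hl => no hl.swap12) hm
  · exact h.swap23.swap12.hub_of_first (fun hl => no hl.swap12.swap23) hm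

end
end
end LinkProof

/-! ### Knitting in a dense neighbourhood -/

namespace LinkProof
section
open scoped Classical
variable {V : Type}

theorem Link4.linkage {G : SimpleGraph V} {H : Finset V} {s t : Fin 4 → V}
    (h : Link4 G H (s 0) (t 0) (s 1) (t 1) (s 2) (t 2) (s 3) (t 3)) : Linkage G H s t := by
  obtain ⟨Q1, Q2, Q3, Q4, ⟨d1, d2, d3, d4, d5, d6⟩, h2, c1, c2, c3, c4⟩ := h
  refine ⟨![Q1, Q2, Q3, Q4], ?_, ?_⟩
  · intro i j hij
    fin_cases i <;> fin_cases j <;>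
      first
      | exact absurd rfl hij
      | simp [d1, d2, d3, d4, d5, d6, d1.symm, d2.symm, d3.symm, d4.symm, d5.symm, d6.symm]
  · intro i
    fin_cases i
    · exact ⟨fun x hx => h2 x (by simp at hx; tauto), c1⟩
    · exact ⟨fun x hx => h2 x (by simp at hx; tauto), c2⟩
    · exact ⟨fun x hx => h2 x (by simp at hx; tauto), c3⟩
    · exact ⟨fun x hx => h2 x (by simp at hx; tauto), c4⟩

/-- The list of the eight terminals. -/
def terms (s t : Fin 4 → V) : List V := [s 0, t 0, s 1, t 1, s 2, t 2, s 3, t 3]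

theorem mem_terms {s t : Fin 4 → V} {z : V} : z ∈ terms s t ↔ ∃ i, z = s i ∨ z = t i := by
  simp only [terms, List.mem_cons, List.not_mem_nil, or_false, Fin.exists_fin_succ]
  simp
  tauto

theorem terms_nodup {s t : Fin 4 → V} (h : Dist s t) : (terms s t).Nodup := by
  obtain ⟨hs, ht, hst⟩ := h
  simp [terms, hs.eq_iff, ht.eq_iff, hst, fun i j => (hst i j).symm]

/-- Terminals have many neighbours outside the terminals. -/
theorem nine_le_nb {G : SimpleGraph V} {H X T : Finset V} (hTc : T.card = 8) (hXT : X ⊆ T)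
    (hTH : T ⊆ H) (hdeg : ∀ u ∈ H, u ∉ X → 16 ≤ nb G H u)
    (hdX : ∀ x ∈ X, 17 ≤ X.card + nb G (H \ X) x) {z : V} (hz : z ∈ T) :
    9 ≤ nb G (H \ T) z := by
  by_cases hzX : z ∈ X
  · have h1 := hdX z hzX
    have h2 : nb G (H \ X) z ≤ nb G (H \ T) z + (T \ X).card := by
      unfold nb
      refine (Finset.card_le_card ?_).trans (Finset.card_union_le _ _)
      intro w hw
      simp only [Finset.mem_union, Finset.mem_filter, Finset.mem_sdiff] at hw ⊢
      by_cases hwT : w ∈ T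
      · exact .inr ⟨hwT, hw.1.2⟩
      · exact .inl ⟨⟨hw.1.1, hwT⟩, hw.2⟩
    have h3 := Finset.card_sdiff_add_card_eq_card hXT
    omega
  · have h1 := hdeg z (hTH hz) hzX
    have h2 : nb G H z ≤ nb G (H \ T) z + (T.erase z).card := by
      unfold nb
      refine (Finset.card_le_card ?_).trans (Finset.card_union_le _ _)
      intro w hw
      simp only [Finset.mem_union, Finset.mem_filter, Finset.mem_sdiff, Finset.mem_erase] at hw ⊢
      by_cases hwT : w ∈ T
      · exact .inr ⟨fun e => hw.2.ne e.symm, hwT⟩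
      · exact .inl ⟨⟨hw.1, hwT⟩, hw.2⟩
    have h3 := Finset.card_erase_add_one hz
    omega

/-- The vertex `v` links the last pair directly, being adjacent to everything; it may be a terminal
only of that pair. The vertices available for the other links are those of `H` that are neither
terminals nor `v`. -/
theorem linkage_or_hub {G : SimpleGraph V} {H X : Finset V} {v : V} {s t : Fin 4 → V}
    (hd : Dist s t) (hvH : v ∈ H) (hH : H.card ≤ 30) (hu : ∀ z ∈ H, z ≠ v → G.Adj v z)
    (hst : ∀ i, s i ∈ H ∧ t i ∈ H) (hX : ∀ z ∈ X, ∃ i, z = s i ∨ z = t i)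
    (hdeg : ∀ u ∈ H, u ∉ X → 16 ≤ nb G H u) (hdX : ∀ x ∈ X, 17 ≤ X.card + nb G (H \ X) x)
    (hv : (v = s 3 ∨ v = t 3) ∨ v ∉ terms s t) : Linkage G H s t ∨ ∃ L ⊆ H, Hub G L := by
  have hnd := terms_nodup hd
  have htH : ∀ z ∈ terms s t, z ∈ H := by
    intro z hz
    obtain ⟨i, rfl | rfl⟩ := mem_terms.1 hz
    · exact (hst i).1
    · exact (hst i).2
  have hXt : ∀ z ∈ X, z ∈ terms s t := fun z hz => mem_terms.2 (hX z hz)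
  have hsd := fun c => nb_sdiff G c hnd htH
  have hlen : (terms s t).length = 8 := rfl
  have hsum : ∀ c, ((terms s t).map (ind G c)).sum = ind G c (s 0) + ind G c (t 0) + ind G c (s 1)
      + ind G c (t 1) + ind G c (s 2) + ind G c (t 2) + ind G c (s 3) + ind G c (t 3) := by
    intro c
    simp only [terms, List.map_cons, List.map_nil, List.sum_cons, List.sum_nil]
    omega
  set T := (terms s t).toFinset with hT
  have hTc : T.card = 8 := by rw [hT, List.toFinset_card_of_nodup hnd, hlen]
  have hXT : X ⊆ T := fun z hz => List.mem_toFinset.2 (hXt z hz)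
  have hterm : ∀ z ∈ terms s t, 9 ≤ nb G (H \ T) z := fun z hz =>
    nine_le_nb hTc hXT (fun w hw => htH w (List.mem_toFinset.1 hw)) hdeg hdX
      (List.mem_toFinset.2 hz)
  have hsix : v ∉ [s 0, t 0, s 1, t 1, s 2, t 2] := by
    intro hz
    rcases hv with hv | hv
    · obtain ⟨hs, ht, hst⟩ := hd
      rcases hv with rfl | rfl <;>
        simp [hs.eq_iff, ht.eq_iff, hst, fun i j => (hst i j).symm] at hz
    · exact hv (List.mem_append_left [s 3, t 3] hz)
  by_contra hcon
  push Not at hcon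
  obtain ⟨hn, hhub⟩ := hcon
  have no : ¬ Link4 G H (s 0) (t 0) (s 1) (t 1) (s 2) (t 2) (s 3) (t 3) := fun h => hn h.linkage
  have fin : ∀ W β, Cfg G H W v (s 0) (t 0) (s 1) (t 1) (s 2) (t 2) (s 3) (t 3) β → False := by
    intro W β hcfg
    obtain ⟨L, h1, h2⟩ := hcfg.hub no
    exact hhub L h1 h2
  rcases hv with hv | hv
  · have hvT : v ∈ T := by
      rw [hT, List.mem_toFinset, mem_terms]
      exact ⟨3, hv⟩
    refine fin (H \ T) 2 ⟨hnd, hsix, .inl ⟨rfl, hv⟩, Finset.sdiff_subset, hvH, htH, ?_, ?_, ?_, hu,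
      ?_, ?_⟩
    · simp [hvT]
    · intro z hz hz2
      exact (Finset.mem_sdiff.1 hz2).2 (List.mem_toFinset.2 hz)
    · have := (hsd v).2
      omega
    · intro c hc
      rw [Finset.mem_sdiff] at hc
      have h1 := hdeg c hc.1 fun h => hc.2 (hXT h)
      have h2 := (hsd c).1
      rw [hsum] at h2
      omega
    · intro z hz _
      have := hterm z hz
      omega
  · have hvT : v ∉ T := by rwa [hT, List.mem_toFinset]
    have hvHT : v ∈ H \ T := by simp [hvH, hvT]
    have hsv := fun c => nb_sdiff G c (m := [v]) (W := H \ T) (by simp) (by simpa using ⟨hvH, hvT⟩)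
    simp only [List.map_cons, List.map_nil, List.sum_cons, List.sum_nil, List.length_cons,
      List.length_nil] at hsv
    refine fin ((H \ T) \ [v].toFinset) 3 ⟨hnd, hsix, .inr ⟨rfl, ?_, ?_⟩,
      Finset.sdiff_subset.trans Finset.sdiff_subset, hvH, htH, ?_, ?_, ?_, hu, ?_, ?_⟩
    · exact fun e => hv (mem_terms.2 ⟨3, .inl e⟩)
    · exact fun e => hv (mem_terms.2 ⟨3, .inr e⟩)
    · simp
    · intro z hz hz2
      exact (Finset.mem_sdiff.1 (Finset.mem_sdiff.1 hz2).1).2 (List.mem_toFinset.2 hz)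
    · have := (hsd v).2
      have := (hsv v).2
      omega
    · intro c hc
      rw [Finset.mem_sdiff, Finset.mem_sdiff] at hc
      have h1 := hdeg c hc.1.1 fun h => hc.1.2 (hXT h)
      have h2 := (hsd c).1
      rw [hsum] at h2
      have h3 := (hsv c).1
      have h4 := ind_le G c v
      omega
    · intro z hz _
      have := hterm z hz
      have h3 := (hsv z).1
      have h4 := ind_le G z v
      omega

/-- A set `H` of at most thirty vertices with a universal vertex and large minimum degree either
knits every set of at most eight vertices containing the exceptional set `X`, or contains a
hub. -/
theorem knit_or_hub {G : SimpleGraph V} {H X : Finset V} {v : V} (hvH : v ∈ H)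
    (hH : H.card ≤ 30) (hu : ∀ z ∈ H, z ≠ v → G.Adj v z) (hvX : v ∉ X)
    (hdeg : ∀ u ∈ H, u ∉ X → 16 ≤ nb G H u) (hdX : ∀ x ∈ X, 17 ≤ X.card + nb G (H \ X) x) :
    (∃ L ⊆ H, Hub G L) ∨ 8 ≤ H.card ∧ ∀ Z ⊆ H, Z.card ≤ 8 → X ⊆ Z → Knit G H Z := by
  by_contra hcon
  rw [not_or] at hcon
  obtain ⟨hhub, hZ⟩ := hcon
  have h8 : 8 ≤ H.card := by
    have h1 := hdeg v hvH hvX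
    have h2 : nb G H v ≤ H.card := Finset.card_filter_le _ _
    omega
  refine hZ ⟨h8, fun Z hZH hZ8 hXZ => knit_of_linkage hZH hZ8 h8 fun s t hd hst hz => ?_⟩
  by_cases hv : ∃ i, v = s i ∨ v = t i
  · obtain ⟨i, hi⟩ := hv
    set σ := Equiv.swap i 3 with hσ
    have h3 : σ 3 = i := Equiv.swap_apply_right _ _
    obtain ⟨Q, q1, q2⟩ := (linkage_or_hub (s := s ∘ σ) (t := t ∘ σ) (X := X)
      ⟨hd.1.comp σ.injective, hd.2.1.comp σ.injective, fun i j => hd.2.2 _ _⟩ hvH hH hu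
      (fun j => hst _) (fun z hzX => by
        obtain ⟨j, hj⟩ := hz z (hXZ hzX)
        exact ⟨σ.symm j, by simpa using hj⟩) hdeg hdX
        (.inl (by simpa [h3] using hi))).resolve_right hhub
    refine ⟨fun j => Q (σ.symm j), fun a b hab => q1 _ _ (by simpa using hab), fun j => ?_⟩
    simpa using q2 (σ.symm j)
  · exact (linkage_or_hub hd hvH hH hu hst (fun z hzX => hz z (hXZ hzX)) hdeg hdX
      (.inr fun h => hv (mem_terms.1 h))).resolve_right hhub

end
end LinkProof

/-! ### Counting edges and massed pairs -/

namespace LinkProof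
section
open scoped Classical
variable {V : Type}

/-- The ordered pairs of adjacent vertices of `I ∪ S` of which at least one lies in `I`. -/
noncomputable def prs (G : SimpleGraph V) (I S : Finset V) : Finset (V × V) :=
  ((I ∪ S) ×ˢ (I ∪ S)).filter fun p => G.Adj p.1 p.2 ∧ (p.1 ∈ I ∨ p.2 ∈ I)

/-- Twice the number of edges inside `I ∪ S` with an end in `I`. -/
noncomputable def cnt (G : SimpleGraph V) (I S : Finset V) : ℕ := (prs G I S).card

theorem mem_prs {G : SimpleGraph V} {I S : Finset V} {a b : V} :
    (a, b) ∈ prs G I S ↔ ((a ∈ I ∨ a ∈ S) ∧ (b ∈ I ∨ b ∈ S)) ∧ G.Adj a b ∧ (a ∈ I ∨ b ∈ I) := by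
  simp only [prs, Finset.mem_filter, Finset.mem_product, Finset.mem_union]

theorem cnt_empty (G : SimpleGraph V) (S : Finset V) : cnt G ∅ S = 0 := by
  simp [cnt, prs]

theorem nb_mono {G : SimpleGraph V} {W W' : Finset V} (h : W ⊆ W') (c : V) :
    nb G W c ≤ nb G W' c := Finset.card_le_card (Finset.filter_subset_filter _ h)

theorem prs_fst {G : SimpleGraph V} {I S : Finset V} :
    ((prs G I S).filter fun p => p.1 ∈ I).card = ∑ a ∈ I, nb G (I ∪ S) a := by
  rw [Finset.card_eq_sum_card_fiberwise (f := Prod.fst) (t := I)]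
  · refine Finset.sum_congr rfl fun a ha => ?_
    unfold nb
    rw [← Finset.card_image_of_injective (f := fun b : V => (a, b)) _
      (fun x y h => by simpa using h)]
    congr 1
    ext ⟨x, y⟩
    simp only [Finset.mem_filter, mem_prs, Finset.mem_image, Finset.mem_union, Prod.mk.injEq]
    constructor
    · rintro ⟨⟨⟨⟨h1, h2⟩, h3, h4⟩, h5⟩, rfl⟩
      exact ⟨y, ⟨h2, h3⟩, rfl, rfl⟩
    · rintro ⟨z, ⟨h1, h2⟩, rfl, rfl⟩
      exact ⟨⟨⟨⟨.inl ha, h1⟩, h2, .inl ha⟩, ha⟩, rfl⟩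
  · intro p hp
    have := (Finset.mem_filter.1 hp).2
    exact this

/-- Counting the ordered pairs by their first vertex, ignoring all vertices of `S` except `u`. -/
theorem sum_le_cnt {G : SimpleGraph V} {I S : Finset V} (hd : Disjoint I S) {u : V} (hu : u ∈ S) :
    (∑ a ∈ I, nb G (I ∪ S) a) + nb G I u ≤ cnt G I S := by
  rw [← prs_fst, cnt, ← Finset.card_filter_add_card_filter_not (s := prs G I S)
    (fun p => p.1 ∈ I)]
  refine Nat.add_le_add_left ?_ _
  unfold nb
  rw [← Finset.card_image_of_injective (f := fun b : V => (u, b)) _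
      (fun x y h => by simpa using h)]
  refine Finset.card_le_card ?_
  rintro ⟨x, y⟩ h
  simp only [Finset.mem_filter, mem_prs, Finset.mem_image, Prod.mk.injEq] at h ⊢
  obtain ⟨z, ⟨h1, h2⟩, rfl, rfl⟩ := h
  exact ⟨⟨⟨.inr hu, .inl h1⟩, h2, .inr h1⟩, Finset.disjoint_right.1 hd hu⟩

/-- Without edges inside `I` there are few edges. -/
theorem cnt_le_of_indep {G : SimpleGraph V} {I S : Finset V}
    (h : ∀ a ∈ I, ∀ b ∈ I, ¬ G.Adj a b) : cnt G I S ≤ 2 * (I.card * S.card) := by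
  have h1 : prs G I S ⊆ I ×ˢ S ∪ S ×ˢ I := by
    rintro ⟨a, b⟩ hab
    rw [mem_prs] at hab
    simp only [Finset.mem_union, Finset.mem_product]
    have := h a
    have := h b
    have := hab.2.1.symm
    tauto
  have h2 := (Finset.card_le_card h1).trans (Finset.card_union_le _ _)
  rw [Finset.card_product, Finset.card_product] at h2
  unfold cnt
  have := Nat.mul_comm I.card S.card
  omega

/-- Removal of an edge with both ends in `I`. -/
theorem cnt_deleteEdge {G : SimpleGraph V} {I S : Finset V} {a b : V} (ha : a ∈ I) (hb : b ∈ I)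
    (hab : G.Adj a b) : cnt (G.deleteEdges {s(a, b)}) I S + 2 = cnt G I S := by
  have hne := hab.ne
  have h1 : prs (G.deleteEdges {s(a, b)}) I S = (prs G I S) \ {(a, b), (b, a)} := by
    ext ⟨x, y⟩
    simp only [mem_prs, Finset.mem_sdiff, SimpleGraph.deleteEdges_adj, Set.mem_singleton_iff,
      Sym2.eq_iff, Finset.mem_insert, Finset.mem_singleton, Prod.mk.injEq]
    tauto
  have h2 : ({(a, b), (b, a)} : Finset (V × V)) ⊆ prs G I S := by
    intro p hp
    rw [Finset.mem_insert, Finset.mem_singleton] at hp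
    rcases hp with rfl | rfl
    · exact mem_prs.2 ⟨⟨.inl ha, .inl hb⟩, hab, .inl ha⟩
    · exact mem_prs.2 ⟨⟨.inl hb, .inl ha⟩, hab.symm, .inl hb⟩
  have h3 : ({(a, b), (b, a)} : Finset (V × V)).card = 2 :=
    Finset.card_pair (by simp [hne])
  have h4 := Finset.card_sdiff_add_card_eq_card h2
  unfold cnt
  rw [h1, ← h4, h3]

/-- Contracting the edge `uv` loses at most two ordered pairs for each neighbour `w` of `v` for
which `uw` is not a new edge. -/
theorem cnt_contract {G : SimpleGraph V} {I S : Finset V} {u v : V} (hu : u ∈ I ∪ S)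
    (hv : v ∈ I) (hvS : v ∉ S) (huv : G.Adj u v) :
    cnt G I S + 2 * ((I ∪ S).filter fun w => w ≠ u ∧ G.Adj v w ∧ ¬ G.Adj u w ∧
      (u ∈ I ∨ w ∈ I)).card ≤ cnt (contract G u v) (I.erase v) S + 2 * nb G (I ∪ S) v := by
  set W := (I ∪ S).filter fun w => w ≠ u ∧ G.Adj v w ∧ ¬ G.Adj u w ∧ (u ∈ I ∨ w ∈ I) with hW
  have hWm : ∀ w, w ∈ W ↔ (w ∈ I ∨ w ∈ S) ∧ w ≠ u ∧ G.Adj v w ∧ ¬ G.Adj u w ∧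
      (u ∈ I ∨ w ∈ I) := by
    intro w; rw [hW]; simp
  clear_value W
  set N := (I ∪ S).filter fun z => G.Adj v z with hN
  have hNm : ∀ w, w ∈ N ↔ (w ∈ I ∨ w ∈ S) ∧ G.Adj v w := by
    intro w; rw [hN]; simp
  have hnb : nb G (I ∪ S) v = N.card := rfl
  clear_value N
  set P := (prs G I S).filter fun p => p.1 ≠ v ∧ p.2 ≠ v with hP
  have hPm : ∀ a b, (a, b) ∈ P ↔ (a, b) ∈ prs G I S ∧ a ≠ v ∧ b ≠ v := by
    intro a b; rw [hP]; simp
  clear_value P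
  have inj1 : ∀ z : V, Function.Injective fun w : V => (z, w) := fun z x y h => by simpa using h
  have inj2 : ∀ z : V, Function.Injective fun w : V => (w, z) := fun z x y h => by simpa using h
  have h1 : cnt G I S ≤ P.card + N.card + N.card := by
    have : prs G I S ⊆ (P ∪ N.image fun w => (v, w)) ∪ N.image fun w => (w, v) := by
      rintro ⟨a, b⟩ hab
      have hab' := mem_prs.1 hab
      simp only [Finset.mem_union, Finset.mem_image, Prod.mk.injEq, hPm, hNm]
      by_cases e1 : a = v
      · subst e1
        exact .inl (.inr ⟨b, ⟨hab'.1.2, hab'.2.1⟩, rfl, rfl⟩)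
      by_cases e2 : b = v
      · subst e2
        exact .inr ⟨a, ⟨hab'.1.1, hab'.2.1.symm⟩, rfl, rfl⟩
      exact .inl (.inl ⟨hab, e1, e2⟩)
    refine (Finset.card_le_card this).trans ((Finset.card_union_le _ _).trans ?_)
    rw [Finset.card_image_of_injective _ (inj2 v)]
    refine Nat.add_le_add_right ((Finset.card_union_le _ _).trans ?_) _
    rw [Finset.card_image_of_injective _ (inj1 v)]
  have h2 : P.card + W.card + W.card ≤ cnt (contract G u v) (I.erase v) S := by
    have e1 := Finset.card_image_of_injective W (inj1 u)
    have e2 := Finset.card_image_of_injective W (inj2 u)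
    calc P.card + W.card + W.card = P.card + (W.image fun w => (u, w)).card +
          (W.image fun w => (w, u)).card := by rw [e1, e2]
      _ ≤ _ := ?_
    rw [← Finset.card_union_of_disjoint, ← Finset.card_union_of_disjoint]
    · refine Finset.card_le_card ?_
      have huv' : u ≠ v := huv.ne
      rintro ⟨a, b⟩ hab
      simp only [Finset.mem_union, Finset.mem_image, Prod.mk.injEq, hPm, hWm] at hab
      rw [Finset.mem_union] at hu
      rw [mem_prs]
      simp only [Finset.mem_erase]
      rcases hab with (⟨h1, h2, h3⟩ | ⟨w, ⟨h1, h2, h3, h4, h5⟩, rfl, rfl⟩) |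
        ⟨w, ⟨h1, h2, h3, h4, h5⟩, rfl, rfl⟩
      · rw [mem_prs] at h1
        have := le_contract G u v h1.2.1
        tauto
      · have : (contract G u v).Adj u w := .inr ⟨h2.symm, .inl ⟨rfl, h3⟩⟩
        have := h3.ne.symm
        tauto
      · have : (contract G u v).Adj w u := .inr ⟨h2, .inr ⟨rfl, h3⟩⟩
        have := h3.ne.symm
        tauto
    · rw [Finset.disjoint_left]
      rintro ⟨a, b⟩ hab hab2
      simp only [Finset.mem_union, Finset.mem_image, Prod.mk.injEq, hPm, hWm, mem_prs] at hab hab2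
      obtain ⟨w, hw, rfl, rfl⟩ := hab2
      rcases hab with hab | ⟨w', hw', rfl, rfl⟩
      · exact hw.2.2.2.1 hab.1.2.1.symm
      · exact hw.2.1 rfl
    · rw [Finset.disjoint_left]
      rintro ⟨a, b⟩ hab hab2
      simp only [Finset.mem_image, Prod.mk.injEq, hPm, hWm, mem_prs] at hab hab2
      obtain ⟨w, hw, rfl, rfl⟩ := hab2
      exact hw.2.2.2.1 hab.1.2.1
  omega

/-- `G` restricted to `I ∪ S` is massed: it has more than `15 |I|` edges with an end in `I`, and
no separation of order less than `|S|` has this property. -/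
structure Massed (G : SimpleGraph V) (I S : Finset V) : Prop where
  disj : Disjoint I S
  gt : 30 * I.card < cnt G I S
  le : ∀ I' S', I' ⊆ I → Sep G (I ∪ S) I' S' → S'.card < S.card → cnt G I' S' ≤ 30 * I'.card

theorem Sep.trans {G : SimpleGraph V} {A I S I' S' : Finset V} (h : Sep G A I S)
    (h' : Sep G (I ∪ S) I' S') (hI : I' ⊆ I) : Sep G A I' S' :=
  ⟨h'.1.trans h.1, h'.2.1, fun a ha b hb hab => h'.2.2 a ha b (h.2.2 a (hI ha) b hb hab) hab⟩

theorem exists_violator {G : SimpleGraph V} {I S : Finset V} (hd : Disjoint I S)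
    (hc : 30 * I.card < cnt G I S) (hm : ¬ Massed G I S) :
    ∃ I' S', I' ⊆ I ∧ Sep G (I ∪ S) I' S' ∧ S'.card < S.card ∧ 30 * I'.card < cnt G I' S' := by
  by_contra hcon
  refine hm ⟨hd, hc, fun I' S' h1 h2 h3 => ?_⟩
  by_contra h4
  exact hcon ⟨I', S', h1, h2, h3, by omega⟩

/-- Passing repeatedly to a separation of smaller order with too many edges ends at a massed pair. -/
theorem exists_massed {G : SimpleGraph V} {A : Finset V} (n : ℕ) : ∀ I S : Finset V, S.card = n →
    Sep G A I S → 30 * I.card < cnt G I S →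
    ∃ I' S', Sep G A I' S' ∧ I' ⊆ I ∧ S'.card ≤ n ∧ Massed G I' S' := by
  induction n using Nat.strong_induction_on with
  | _ n ih =>
    intro I S hn hs hc
    by_cases hm : Massed G I S
    · exact ⟨I, S, hs, subset_rfl, hn.le, hm⟩
    obtain ⟨I', S', h1, h2, h3, h4⟩ := exists_violator hs.2.1 hc hm
    obtain ⟨I'', S'', k1, k2, k3, k4⟩ := ih _ (hn ▸ h3) I' S' rfl (hs.trans h2 h1) h4
    exact ⟨I'', S'', k1, k2.trans h1, by omega, k4⟩

/-- A pair with many edges is massed unless some separation of smaller order is. -/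
theorem massed_or {G : SimpleGraph V} {I S : Finset V} (hd : Disjoint I S)
    (hc : 30 * I.card < cnt G I S) : Massed G I S ∨
      ∃ I' S', I' ⊆ I ∧ Sep G (I ∪ S) I' S' ∧ S'.card < S.card ∧ Massed G I' S' := by
  by_cases hm : Massed G I S
  · exact .inl hm
  right
  obtain ⟨I', S', h1, h2, h3, h4⟩ := exists_violator hd hc hm
  obtain ⟨I'', S'', k1, k2, k3, k4⟩ := exists_massed _ I' S' rfl h2 h4
  exact ⟨I'', S'', k2.trans h1, k1, by omega, k4⟩

/-- Knitting a set amounts to knitting all of its subsets: extra vertices get new colours. -/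
theorem Knit.subset {G : SimpleGraph V} {A S Z : Finset V} (h : Knit G A S) (hZ : Z ⊆ S) :
    Knit G A Z := by
  intro K κ hκ
  obtain ⟨col, h1, h2⟩ := h (K ⊕ V) (fun x => if x ∈ Z then .inl (κ x) else .inr x) (by
    intro x _ y _ z _ hxy hyz
    by_cases hx : x ∈ Z <;> by_cases hy : y ∈ Z <;> by_cases hz : z ∈ Z <;>
      simp only [hx, hy, hz, if_true, if_false, Sum.inl.injEq, Sum.inr.injEq, reduceCtorEq]
        at hxy hyz
    · exact hκ x hx y hy z hz hxy hyz
    · exact .inl hxy)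
  refine ⟨fun x => Sum.elim id κ (col x), ?_, ?_⟩
  · intro x hx
    simp [h1 x (hZ hx), hx]
  · intro x hx y hy hxy
    refine (h2 x (hZ hx) y (hZ hy) (by simp [hx, hy, hxy])).monoQ ?_
    rintro w ⟨hw, hc⟩
    exact ⟨hw, by simp [hc, hx]⟩

end
end LinkProof

/-! ### Separations of a minimal counterexample -/

namespace LinkProof
section
open scoped Classical
variable {V : Type}

/-- A counterexample to the statement that massed pairs with `|S| ≤ 8` are knitted, all smaller
pairs satisfying it. -/
structure Bad (G : SimpleGraph V) (I S : Finset V) : Prop where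
  massed : Massed G I S
  le8 : S.card ≤ 8
  ih : ∀ (G' : SimpleGraph V) (I' S' : Finset V), I'.card < I.card → S'.card ≤ 8 →
    Massed G' I' S' → Knit G' (I' ∪ S') S'
  not_knit : ¬ Knit G (I ∪ S) S

namespace Bad
variable {G : SimpleGraph V} {I S : Finset V}

theorem no_rigid_aux (h : Bad G I S) (n : ℕ) : ∀ I' S' : Finset V, I.card = I'.card + n →
    I' ⊆ I → I'.Nonempty → Sep G (I ∪ S) I' S' → cnt G I' S' ≤ 30 * I'.card →
    ¬ Knit G (I' ∪ S') S' := by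
  induction n using Nat.strong_induction_on with
  | _ n ih =>
  intro I' S' hn hI hne hsep hc hk
  set I₁ := I \ I' with hI₁
  have hI₁c : I₁.card + I'.card = I.card := Finset.card_sdiff_add_card_eq_card hI
  have hI₁m : ∀ x, x ∈ I₁ ↔ x ∈ I ∧ x ∉ I' := fun x => by rw [hI₁, Finset.mem_sdiff]
  have hd := h.massed.disj
  have hIS : ∀ x ∈ I, x ∉ S := fun x hx => Finset.disjoint_left.1 hd hx
  have hIS' : ∀ x ∈ I', x ∉ S' := fun x hx => Finset.disjoint_left.1 hsep.2.1 hx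
  have hsub : ∀ x, x ∈ I' ∪ S' → x ∈ I ∪ S := fun x hx => hsep.1 hx
  simp only [Finset.mem_union] at hsub
  have hcl : ∀ a ∈ I', ∀ b, (b ∈ I ∨ b ∈ S) → G.Adj a b → b ∈ I' ∨ b ∈ S' := by
    intro a ha b hb hab
    simpa using hsep.2.2 a ha b (by simpa using hb) hab
  have hne' := hne.card_pos
  have hd₁ : Disjoint I₁ S := hd.mono_left Finset.sdiff_subset
  have hS'₁ : S' ⊆ I₁ ∪ S := by
    intro x hx
    rw [Finset.mem_union, hI₁m]
    have := hsub x (.inr hx)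
    have := hIS' x
    tauto
  have hdA : Disjoint (I₁ ∪ S) I' := by
    rw [Finset.disjoint_left]
    intro x hx hx'
    rw [Finset.mem_union, hI₁m] at hx
    have := hIS x (hI hx')
    tauto
  have hgt : 30 * I₁.card < cnt (addClique G S') I₁ S := by
    have h1 : prs G I S ⊆ prs G I' S' ∪ prs (addClique G S') I₁ S := by
      rintro ⟨a, b⟩ hab
      rw [mem_prs] at hab
      rw [Finset.mem_union, mem_prs, mem_prs, hI₁m, hI₁m]
      have h2 := le_addClique G S' hab.2.1
      by_cases ha : a ∈ I'
      · exact .inl ⟨⟨.inl ha, hcl a ha b hab.1.2 hab.2.1⟩, hab.2.1, .inl ha⟩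
      by_cases hb : b ∈ I'
      · exact .inl ⟨⟨hcl b hb a hab.1.1 hab.2.1.symm, .inl hb⟩, hab.2.1, .inr hb⟩
      exact .inr ⟨⟨hab.1.1.imp_left (⟨·, ha⟩), hab.1.2.imp_left (⟨·, hb⟩)⟩, h2,
        hab.2.2.imp (⟨·, ha⟩) (⟨·, hb⟩)⟩
    have h2 := (Finset.card_le_card h1).trans (Finset.card_union_le _ _)
    have h3 := h.massed.gt
    unfold cnt at *
    omega
  rcases massed_or hd₁ hgt with hm | ⟨I'', S'', hI'', hs'', hcard, hm⟩
  · have hk2 := h.ih _ _ _ (by omega) h.le8 hm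
    have := hk.of_addClique hk2 Finset.subset_union_right hS'₁ hdA
    refine h.not_knit (this.mono le_rfl ?_)
    intro x hx
    simp only [Finset.mem_union, hI₁m] at hx ⊢
    have := @hI x
    tauto
  · have hI''m : ∀ x ∈ I'', x ∈ I ∧ x ∉ I' := fun x hx => (hI₁m x).1 (hI'' hx)
    have hsub'' : ∀ x, x ∈ I'' ∪ S'' → x ∈ I₁ ∪ S := fun x hx => hs''.1 hx
    simp only [Finset.mem_union] at hsub''
    by_cases hint : ∃ x ∈ S', x ∈ I''
    · obtain ⟨x₀, hx₀, hx₀'⟩ := hint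
      have hS'sub : S' ⊆ I'' ∪ S'' := by
        intro y hy
        by_cases hxy : x₀ = y
        · exact Finset.mem_union_left _ (hxy ▸ hx₀')
        · exact hs''.2.2 x₀ hx₀' y (hS'₁ hy) (.inr ⟨hx₀, hy, hxy⟩)
      have hdj : Disjoint (I'' ∪ S'') I' := hdA.mono_left hs''.1
      have hk2 := h.ih _ _ _ (lt_of_le_of_lt (Finset.card_le_card hI'') (by omega))
        (hcard.le.trans h.le8) hm
      have hk3 := hk.of_addClique hk2 Finset.subset_union_right hS'sub hdj
      have hsep3 : Sep G (I ∪ S) (I'' ∪ I') S'' := by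
        refine ⟨?_, ?_, ?_⟩
        · intro x hx
          simp only [Finset.mem_union] at hx ⊢
          have := hI''m x
          have := @hI x
          have h1 := hsub'' x
          rw [hI₁m] at h1
          tauto
        · rw [Finset.disjoint_union_left]
          exact ⟨hs''.2.1, (hdj.mono_left Finset.subset_union_right).symm⟩
        · intro a ha b hb hab
          rw [Finset.mem_union] at ha
          simp only [Finset.mem_union]
          rcases ha with ha | ha
          · by_cases hb' : b ∈ I'
            · tauto
            · have : b ∈ I₁ ∪ S := by
                rw [Finset.mem_union, hI₁m]
                rw [Finset.mem_union] at hb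
                tauto
              have := hs''.2.2 a ha b this (.inl hab)
              rw [Finset.mem_union] at this
              tauto
          · rcases hcl a ha b (by simpa using hb) hab with hb' | hb'
            · tauto
            · have := hS'sub hb'
              rw [Finset.mem_union] at this
              tauto
      have hsubI : I'' ∪ I' ⊆ I := Finset.union_subset (hI''.trans Finset.sdiff_subset) hI
      have hcu : (I'' ∪ I').card = I''.card + I'.card :=
        Finset.card_union_of_disjoint (hdj.mono_left Finset.subset_union_left)
      have hp : 0 < I''.card := Finset.card_pos.2 ⟨x₀, hx₀'⟩
      have hle := Finset.card_le_card hsubI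
      refine ih (I.card - (I'' ∪ I').card) (by omega) (I'' ∪ I') S'' (by omega) hsubI
        (hne.mono Finset.subset_union_right) hsep3 (h.massed.le _ _ hsubI hsep3 hcard)
        (hk3.mono le_rfl ?_)
      intro x hx
      simp only [Finset.mem_union] at hx ⊢
      tauto
    · push Not at hint
      have hsep3 : Sep G (I ∪ S) I'' S'' := by
        refine ⟨?_, hs''.2.1, ?_⟩
        · exact hs''.1.trans (Finset.union_subset_union_left Finset.sdiff_subset)
        · intro a ha b hb hab
          refine hs''.2.2 a ha b ?_ (.inl hab)
          rw [Finset.mem_union] at hb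
          rw [Finset.mem_union, hI₁m]
          by_cases hb' : b ∈ I'
          · have := hcl b hb' a (.inl (hI''m a ha).1) hab.symm
            have := hint a
            have := (hI''m a ha).2
            tauto
          · tauto
      have h1 := h.massed.le _ _ (hI''.trans Finset.sdiff_subset) hsep3 hcard
      have h2 : cnt (addClique G S') I'' S'' ≤ cnt G I'' S'' := by
        refine Finset.card_le_card ?_
        rintro ⟨a, b⟩ hab
        rw [mem_prs] at hab ⊢
        refine ⟨hab.1, ?_, hab.2.2⟩
        rcases hab.2.1 with h3 | ⟨h3, h4, _⟩
        · exact h3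
        · have := hint a h3
          have := hint b h4
          tauto
      have := hm.gt
      omega

/-- A minimal counterexample contains no knitted separation with few edges: otherwise a largest
one could be replaced by a clique on its separating set. -/
theorem no_rigid (h : Bad G I S) {I' S' : Finset V} (hI : I' ⊆ I) (hne : I'.Nonempty)
    (hsep : Sep G (I ∪ S) I' S') (hc : cnt G I' S' ≤ 30 * I'.card)
    (hk : Knit G (I' ∪ S') S') : False :=
  h.no_rigid_aux (I.card - I'.card) I' S'
    (by have := Finset.card_le_card hI; omega) hI hne hsep hc hk

/-- A closed-off piece `J ∪ T` cannot be knitted, provided there is room: disjoint paths leading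
to `T` would carry the knittedness over to `S` or to a separating set of smaller order. -/
theorem no_target (h : Bad G I S) {J T : Finset V} (hJ : J ⊆ I) (hT : T ⊆ I ∪ S)
    (hJT : Disjoint J T) (hcl : ∀ a ∈ J, ∀ b ∈ I ∪ S, G.Adj a b → b ∈ J ∪ T)
    (hne : J.Nonempty ∨ 8 ≤ T.card)
    (hk : ∀ Z ⊆ T, Z.card ≤ 8 → T ∩ S ⊆ Z → Knit G (J ∪ T) Z) : False := by
  have hd := h.massed.disj
  have hSA : S ⊆ (I ∪ S) \ J := by
    intro x hx
    rw [Finset.mem_sdiff, Finset.mem_union]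
    exact ⟨.inr hx, fun hxJ => Finset.disjoint_left.1 hd (hJ hxJ) hx⟩
  have hTA : T ⊆ (I ∪ S) \ J := fun x hx =>
    Finset.mem_sdiff.2 ⟨hT hx, Finset.disjoint_right.1 hJT hx⟩
  obtain ⟨I', S', f, Q, hsep, hI', hTs, hr, hcase⟩ := exists_sep_route G hSA hTA
  have hI'I : I' ⊆ I := by
    intro x hx
    have := hI' hx
    simp only [Finset.mem_sdiff, Finset.mem_union] at this
    tauto
  have hS'c : S'.card ≤ S.card := by
    rcases hcase with ⟨_, h2⟩ | h2
    · rw [h2]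
    · exact h2.le
  have hlive : ∀ x ∈ I' ∪ S', x ∈ I ∪ S ∧ x ∉ J := fun x hx => by
    simpa [Finset.mem_sdiff] using hsep.1 hx
  have hr' : Route G (J ∪ (I' ∪ S')) S' (J ∪ T) f Q := by
    refine ⟨fun s hs => ?_, hr.2⟩
    obtain ⟨h1, h2, h3⟩ := hr.1 s hs
    refine ⟨Finset.mem_union_right _ h1, h2, fun x hx => ⟨Finset.mem_union_right _ (h3 x hx).1,
      fun hx' => ?_⟩⟩
    rw [Finset.mem_union] at hx'
    exact hx'.elim (fun hxJ => absurd hxJ (hlive x (h3 x hx).1).2) (h3 x hx).2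
  have hkn : Knit G (J ∪ (I' ∪ S')) S' := by
    refine hr'.knit (Finset.union_subset_union_right hTs) (hk _ ?_ ?_ ?_)
    · intro z hz
      obtain ⟨s, hs, rfl⟩ := Finset.mem_image.1 hz
      exact (hr.1 s hs).1
    · exact Finset.card_image_le.trans (hS'c.trans h.le8)
    · intro s hs
      rw [Finset.mem_inter] at hs
      have hs' : s ∈ S' := by
        rcases Finset.mem_union.1 (hTs hs.1) with h1 | h1
        · exact absurd hs.2 (Finset.disjoint_left.1 hd (hI'I h1))
        · exact h1
      obtain ⟨h1, h2, h3⟩ := hr.1 s hs'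
      exact Finset.mem_image.2 ⟨s, hs', ((h3 s h2.left).2 hs.1).symm⟩
  rcases hcase with ⟨rfl, rfl⟩ | hlt
  · refine h.not_knit (hkn.mono le_rfl ?_)
    intro x hx
    rw [Finset.mem_union] at hx
    rcases hx with hx | hx
    · exact Finset.mem_union_left _ (hJ hx)
    · exact (hlive x hx).1
  · have hsub : J ∪ I' ⊆ I := Finset.union_subset hJ hI'I
    have hsep' : Sep G (I ∪ S) (J ∪ I') S' := by
      refine ⟨?_, ?_, ?_⟩
      · intro x hx
        simp only [Finset.mem_union] at hx
        by_cases hxJ : x ∈ J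
        · exact Finset.mem_union_left _ (hJ hxJ)
        · exact (hlive x (by rw [Finset.mem_union]; tauto)).1
      · rw [Finset.disjoint_union_left]
        exact ⟨Finset.disjoint_right.2 fun x hx => (hlive x (Finset.mem_union_right _ hx)).2,
          hsep.2.1⟩
      · intro a ha b hb hab
        rw [Finset.union_assoc]
        by_cases hbJ : b ∈ J
        · exact Finset.mem_union_left _ hbJ
        refine Finset.mem_union_right _ ?_
        rcases Finset.mem_union.1 ha with ha | ha
        · exact hTs ((Finset.mem_union.1 (hcl a ha b hb hab)).resolve_left hbJ)
        · exact hsep.2.2 a ha b (Finset.mem_sdiff.2 ⟨hb, hbJ⟩) hab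
    refine h.no_rigid hsub ?_ hsep' (h.massed.le _ _ hsub hsep' hlt)
      (by rwa [Finset.union_assoc])
    rcases hne with hne | hne
    · exact hne.mono Finset.subset_union_left
    · rcases I'.eq_empty_or_nonempty with rfl | hI'ne
      · rw [Finset.empty_union] at hTs
        have := Finset.card_le_card hTs
        have := h.le8
        omega
      · exact hI'ne.mono Finset.subset_union_right

/-- Proper separations of order at most `|S|` have few edges. -/
theorem cnt_le (h : Bad G I S) {I' S' : Finset V} (hI : I' ⊆ I) (hne : I' ≠ I)
    (hsep : Sep G (I ∪ S) I' S') (hc : S'.card ≤ S.card) : cnt G I' S' ≤ 30 * I'.card := by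
  by_contra hgt
  push Not at hgt
  have hm : Massed G I' S' := ⟨hsep.2.1, hgt, fun I'' S'' h1 h2 h3 =>
    h.massed.le _ _ (h1.trans hI) (hsep.trans h2 h1) (by omega)⟩
  have hk := h.ih G I' S' (Finset.card_lt_card (hI.ssubset_of_ne hne)) (hc.trans h.le8) hm
  refine h.no_target hI (Finset.subset_union_right.trans hsep.1) hsep.2.1 hsep.2.2 (.inl ?_)
    fun Z hZ _ _ => hk.subset hZ
  rw [Finset.nonempty_iff_ne_empty]
  rintro rfl
  simp [cnt_empty] at hgt

end Bad
end
end LinkProof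

/-! ### Deletion and contraction in a minimal counterexample -/

namespace LinkProof
section
open scoped Classical
variable {V : Type}

namespace Bad
variable {G : SimpleGraph V} {I S : Finset V}

theorem pos (h : Bad G I S) : 0 < I.card := by
  rw [Finset.card_pos, Finset.nonempty_iff_ne_empty]
  rintro rfl
  simpa [cnt_empty] using h.massed.gt

/-- An edge inside `I` can be deleted as long as enough edges remain: a separation of the new graph
that the deleted edge crosses becomes one of `G` by adding one end of the edge to the separating
set. -/
theorem deleteEdge (h : Bad G I S) {a b : V} (ha : a ∈ I) (hb : b ∈ I) (hab : G.Adj a b)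
    (hc : 30 * I.card + 3 ≤ cnt G I S) : Bad (G.deleteEdges {s(a, b)}) I S := by
  have hle : G.deleteEdges {s(a, b)} ≤ G := SimpleGraph.deleteEdges_le _
  refine ⟨⟨h.massed.disj, ?_, ?_⟩, h.le8, h.ih, fun hk => h.not_knit (hk.mono hle subset_rfl)⟩
  · have := cnt_deleteEdge (S := S) ha hb hab
    omega
  · intro I' S' hI hsep hcard
    have hmono : cnt (G.deleteEdges {s(a, b)}) I' S' ≤ cnt G I' S' := by
      refine Finset.card_le_card ?_
      rintro ⟨x, y⟩ hxy
      rw [mem_prs] at hxy ⊢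
      exact ⟨hxy.1, hle hxy.2.1, hxy.2.2⟩
    by_cases hs : Sep G (I ∪ S) I' S'
    · exact hmono.trans (h.massed.le _ _ hI hs hcard)
    -- the deleted edge leaves `I'`, and its other end is added to the separating set
    have hex : ∃ x ∈ I', ∃ y ∈ I ∪ S, G.Adj x y ∧ y ∉ I' ∪ S' := by
      by_contra hcon
      refine hs ⟨hsep.1, hsep.2.1, fun x hx y hy hxy => ?_⟩
      by_contra hy'
      exact hcon ⟨x, hx, y, hy, hxy, hy'⟩
    obtain ⟨x, hx, y, hy, hxy, hy'⟩ := hex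
    have hcl : ∀ p ∈ I', ∀ q ∈ I ∪ S, G.Adj p q → q ∉ I' ∪ S' → s(p, q) = s(a, b) := by
      intro p hp q hq hpq hq'
      by_contra hne
      exact hq' (hsep.2.2 p hp q hq (by rw [SimpleGraph.deleteEdges_adj]; exact ⟨hpq, hne⟩))
    have hxyab := hcl x hx y hy hxy hy'
    rw [Finset.mem_union, not_or] at hy'
    have hyI : y ∈ I := by
      rw [Sym2.eq_iff] at hxyab
      rcases hxyab with ⟨_, rfl⟩ | ⟨_, rfl⟩ <;> assumption
    have hsep' : Sep G (I ∪ S) I' (insert y S') := by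
      refine ⟨?_, ?_, ?_⟩
      · intro z hz
        rw [Finset.mem_union, Finset.mem_insert] at hz
        rcases hz with hz | rfl | hz
        · exact Finset.mem_union_left _ (hI hz)
        · exact hy
        · exact hsep.1 (Finset.mem_union_right _ hz)
      · rw [Finset.disjoint_insert_right]
        exact ⟨hy'.1, hsep.2.1⟩
      · intro p hp q hq hpq
        by_contra hq'
        simp only [Finset.mem_union, Finset.mem_insert, not_or] at hq'
        have h2 := hcl p hp q hq hpq (by rw [Finset.mem_union]; tauto)
        rw [← hxyab, Sym2.eq_iff] at h2
        rcases h2 with ⟨_, e⟩ | ⟨_, e⟩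
        · exact hq'.2.1 e
        · exact hq'.1 (e ▸ hx)
    have h1 := h.cnt_le hI (fun e => hy'.1 (e ▸ hyI)) hsep'
      ((Finset.card_insert_le _ _).trans hcard)
    refine le_trans (le_trans hmono (Finset.card_le_card ?_)) h1
    rintro ⟨p, q⟩ hpq
    rw [mem_prs] at hpq ⊢
    simp only [Finset.mem_insert]
    tauto

/-- After deleting edges, a minimal counterexample has as few edges as it may. -/
theorem exists_sparse (n : ℕ) : ∀ G : SimpleGraph V, cnt G I S = n → Bad G I S →
    ∃ G', Bad G' I S ∧ cnt G' I S ≤ 30 * I.card + 2 := by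
  induction n using Nat.strong_induction_on with
  | _ n ih =>
  intro G hn h
  by_cases hc : cnt G I S ≤ 30 * I.card + 2
  · exact ⟨G, h, hc⟩
  have hex : ∃ a ∈ I, ∃ b ∈ I, G.Adj a b := by
    by_contra hcon
    push Not at hcon
    have h1 := cnt_le_of_indep (S := S) hcon
    have h2 := Nat.mul_le_mul_left I.card h.le8
    omega
  obtain ⟨a, ha, b, hb, hab⟩ := hex
  have := cnt_deleteEdge (S := S) ha hb hab
  exact ih _ (by omega) _ rfl (h.deleteEdge ha hb hab (by omega))

/-- A contraction must destroy the edge count, since everything else survives it. -/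
theorem cnt_contract_le (h : Bad G I S) {u v : V} (hu : u ∈ I ∪ S) (hv : v ∈ I)
    (huv : G.Adj u v) : cnt (contract G u v) (I.erase v) S + 30 ≤ 30 * I.card := by
  by_contra hgt
  have hd := h.massed.disj
  have hvS : v ∉ S := Finset.disjoint_left.1 hd hv
  have hpos := h.pos
  have hec := Finset.card_erase_of_mem hv
  have hlt : (I.erase v).card < I.card := by omega
  have hA : ∀ x, x ∈ I.erase v ∪ S ↔ x ∈ I ∪ S ∧ x ≠ v := by
    intro x
    rw [Finset.mem_union, Finset.mem_union, Finset.mem_erase]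
    constructor
    · rintro (⟨h1, h2⟩ | h1)
      · exact ⟨.inl h2, h1⟩
      · exact ⟨.inr h1, fun e => hvS (e ▸ h1)⟩
    · rintro ⟨h1 | h1, h2⟩
      · exact .inl ⟨h2, h1⟩
      · exact .inr h1
  have hins : insert v (I.erase v ∪ S) = I ∪ S := by
    rw [← Finset.insert_union, Finset.insert_erase hv]
  rcases massed_or (G := contract G u v) (hd.mono_left (Finset.erase_subset v I)) (by omega) with
    hm | ⟨I', S', hI', hs, hcard, hm⟩
  · have hk := h.ih _ _ _ hlt h.le8 hm
    have := hk.of_contract huv (fun hx => ((hA v).1 hx).2 rfl) Finset.subset_union_right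
    rw [hins] at this
    exact h.not_knit this
  have hvI' : v ∉ I' := fun hx => Finset.notMem_erase v I (hI' hx)
  have hI'I : I' ⊆ I := hI'.trans (Finset.erase_subset v I)
  have hvA : v ∉ I' ∪ S' := fun hx => ((hA v).1 (hs.1 hx)).2 rfl
  have hvS' : v ∉ S' := fun hx => hvA (Finset.mem_union_right _ hx)
  by_cases huI : u ∈ I'
  · have hk := h.ih _ _ _ ((Finset.card_le_card hI').trans_lt hlt) (hcard.le.trans h.le8) hm
    -- the piece contains the contracted edge, so it is knitted in `G`
    have hk' := hk.of_contract huv hvA Finset.subset_union_right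
    have hsep : Sep G (I ∪ S) (insert v I') S' := by
      refine ⟨?_, ?_, ?_⟩
      · rw [Finset.insert_union]
        exact Finset.insert_subset (Finset.mem_union_left _ hv) (fun x hx => ((hA x).1 (hs.1 hx)).1)
      · rw [Finset.disjoint_insert_left]
        exact ⟨hvS', hs.2.1⟩
      · intro a ha b hb hab
        rw [Finset.insert_union, Finset.mem_insert]
        by_cases hbv : b = v
        · exact .inl hbv
        have hbA := (hA b).2 ⟨hb, hbv⟩
        refine .inr ?_
        rcases Finset.mem_insert.1 ha with rfl | ha
        · by_cases hbu : b = u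
          · exact Finset.mem_union_left _ (hbu ▸ huI)
          · exact hs.2.2 u huI b hbA (.inr ⟨fun e => hbu e.symm, .inl ⟨rfl, hab⟩⟩)
        · exact hs.2.2 a ha b hbA (.inl hab)
    have hsub : insert v I' ⊆ I := Finset.insert_subset hv hI'I
    exact h.no_rigid hsub ⟨v, Finset.mem_insert_self _ _⟩ hsep
      (h.massed.le _ _ hsub hsep hcard) (by rwa [Finset.insert_union])
  · -- otherwise the piece yields a separation of `G` of order at most `|S|` with too many edges
    have hsep : Sep G (I ∪ S) I' (insert v S') := by
      refine ⟨?_, ?_, ?_⟩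
      · rw [Finset.union_insert]
        exact Finset.insert_subset (Finset.mem_union_left _ hv) (fun x hx => ((hA x).1 (hs.1 hx)).1)
      · rw [Finset.disjoint_insert_right]
        exact ⟨hvI', hs.2.1⟩
      · intro a ha b hb hab
        rw [Finset.union_insert, Finset.mem_insert]
        by_cases hbv : b = v
        · exact .inl hbv
        · exact .inr (hs.2.2 a ha b ((hA b).2 ⟨hb, hbv⟩) (.inl hab))
    have h1 := h.cnt_le hI'I (fun e => hvI' (e ▸ hv)) hsep
      ((Finset.card_insert_le _ _).trans hcard)
    have h2 : cnt (contract G u v) I' S' ≤ cnt G I' (insert v S') := by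
      refine Finset.card_le_card_of_injOn (fun p => if G.Adj p.1 p.2 then p else
        if p.2 = u then (p.1, v) else (v, p.2)) ?_ ?_
      · rintro ⟨a, b⟩ hab
        have hab := mem_prs.1 (Finset.mem_coe.1 hab)
        refine Finset.mem_coe.2 ?_
        dsimp only
        split_ifs with c1 c2
        · rw [mem_prs, Finset.mem_insert, Finset.mem_insert]
          exact ⟨⟨hab.1.1.imp_right .inr, hab.1.2.imp_right .inr⟩, c1, hab.2.2⟩
        · subst c2
          rw [mem_prs, Finset.mem_insert, Finset.mem_insert]
          have ha : a ∈ I' := hab.2.2.resolve_right huI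
          rcases hab.2.1 with h3 | ⟨h3, ⟨h4, _⟩ | ⟨_, h4⟩⟩
          · exact absurd h3 c1
          · exact absurd h4 h3
          · exact ⟨⟨.inl ha, .inr (.inl rfl)⟩, h4.symm, .inl ha⟩
        · rw [mem_prs, Finset.mem_insert, Finset.mem_insert]
          rcases hab.2.1 with h3 | ⟨h3, ⟨h4, h5⟩ | ⟨h4, _⟩⟩
          · exact absurd h3 c1
          · have hb : b ∈ I' := hab.2.2.resolve_left (h4 ▸ huI)
            exact ⟨⟨.inr (.inl rfl), .inl hb⟩, h5, .inr hb⟩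
          · exact absurd h4 c2
      · have key : ∀ a b, (a, b) ∈ prs (contract G u v) I' S' → a ≠ v ∧ b ≠ v ∧
            (¬ G.Adj a b → b ≠ u → a = u) := by
          intro a b hab
          have hab := mem_prs.1 hab
          refine ⟨?_, ?_, ?_⟩
          · rintro rfl
            exact hab.1.1.elim hvI' hvS'
          · rintro rfl
            exact hab.1.2.elim hvI' hvS'
          · intro c1 c2
            rcases hab.2.1 with h3 | ⟨h3, ⟨h4, h5⟩ | ⟨h4, _⟩⟩
            · exact absurd h3 c1
            · exact h4
            · exact absurd h4 c2
        rintro ⟨a, b⟩ hab ⟨a', b'⟩ hab' heq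
        obtain ⟨k1, k2, k3⟩ := key a b (Finset.mem_coe.1 hab)
        obtain ⟨k1', k2', k3'⟩ := key a' b' (Finset.mem_coe.1 hab')
        dsimp only at heq
        split_ifs at heq with c1 c2 c3 c4 c5 c6 c7 c8 <;> rw [Prod.mk.injEq] at heq ⊢
        · exact heq
        · exact absurd heq.2 k2
        · exact absurd heq.1 k1
        · exact absurd heq.2.symm k2'
        · exact ⟨heq.1, by rw [‹b = u›, ‹b' = u›]⟩
        · exact absurd heq.1 k1
        · exact absurd heq.1.symm k1'
        · exact absurd heq.1.symm k1'
        · exact ⟨by rw [k3 ‹_› ‹_›, k3' ‹_› ‹_›], heq.2⟩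
    have := hm.gt
    omega

/-- Adjacent vertices of `I` have many common neighbours. -/
theorem common_I (h : Bad G I S) {u v : V} (hu : u ∈ I) (hv : v ∈ I) (huv : G.Adj u v) :
    15 ≤ ((I ∪ S).filter fun w => G.Adj v w ∧ G.Adj u w).card := by
  have hu' : u ∈ I ∪ S := Finset.mem_union_left _ hu
  have h1 := h.cnt_contract_le hu' hv huv
  have h2 := cnt_contract hu' hv (Finset.disjoint_left.1 h.massed.disj hv) huv
  have h3 := h.massed.gt
  set W := (I ∪ S).filter fun w => w ≠ u ∧ G.Adj v w ∧ ¬ G.Adj u w ∧ (u ∈ I ∨ w ∈ I) with hW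
  have h4 : nb G (I ∪ S) v ≤ (insert u W).card +
      ((I ∪ S).filter fun w => G.Adj v w ∧ G.Adj u w).card := by
    refine (Finset.card_le_card ?_).trans (Finset.card_union_le _ _)
    intro w hw
    rw [Finset.mem_filter] at hw
    rw [Finset.mem_union, Finset.mem_insert, hW, Finset.mem_filter, Finset.mem_filter]
    by_cases e1 : w = u
    · exact .inl (.inl e1)
    by_cases e2 : G.Adj u w
    · exact .inr ⟨hw.1, hw.2, e2⟩
    · exact .inl (.inr ⟨hw.1, e1, hw.2, e2, .inl hu⟩)
  have h5 := Finset.card_insert_le u W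
  omega

/-- The corresponding statement for a vertex of `S` and a vertex of `I`. -/
theorem common_S (h : Bad G I S) {u v : V} (hu : u ∈ S) (hv : v ∈ I) (huv : G.Adj u v) :
    16 ≤ nb G S v + (I.filter fun w => G.Adj v w ∧ G.Adj u w).card := by
  have hu' : u ∈ I ∪ S := Finset.mem_union_right _ hu
  have h1 := h.cnt_contract_le hu' hv huv
  have h2 := cnt_contract hu' hv (Finset.disjoint_left.1 h.massed.disj hv) huv
  have h3 := h.massed.gt
  set W := (I ∪ S).filter fun w => w ≠ u ∧ G.Adj v w ∧ ¬ G.Adj u w ∧ (u ∈ I ∨ w ∈ I) with hW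
  have h4 : nb G (I ∪ S) v ≤ W.card + (nb G S v +
      (I.filter fun w => G.Adj v w ∧ G.Adj u w).card) := by
    refine (Finset.card_le_card ?_).trans ((Finset.card_union_le _ _).trans
      (Nat.add_le_add_left (Finset.card_union_le _ _) _))
    intro w hw
    rw [Finset.mem_filter] at hw
    rw [Finset.mem_union, Finset.mem_union, hW, Finset.mem_filter, Finset.mem_filter,
      Finset.mem_filter]
    by_cases e1 : w ∈ S
    · exact .inr (.inl ⟨e1, hw.2⟩)
    have e2 : w ∈ I := (Finset.mem_union.1 hw.1).resolve_right e1
    by_cases e3 : G.Adj u w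
    · exact .inr (.inr ⟨e2, hw.2, e3⟩)
    · exact .inl ⟨hw.1, fun e => e1 (e ▸ hu), hw.2, e3, .inr e2⟩
  omega

end Bad
end
end LinkProof

/-! ### Massed pairs are knitted -/

namespace LinkProof
section
open scoped Classical
variable {V : Type}

namespace Bad
variable {G : SimpleGraph V} {I S : Finset V}

/-- A vertex of `S` without neighbours in `I` could be dropped, giving a separation of smaller order
with the same edges. -/
theorem exists_nbr (h : Bad G I S) {s : V} (hs : s ∈ S) : ∃ v ∈ I, G.Adj s v := by
  by_contra hcon
  push Not at hcon
  have hd := h.massed.disj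
  have hsep : Sep G (I ∪ S) I (S.erase s) := by
    refine ⟨Finset.union_subset_union_right (Finset.erase_subset _ _),
      hd.mono_right (Finset.erase_subset _ _), fun a ha b hb hab => ?_⟩
    rw [Finset.mem_union, Finset.mem_erase]
    rcases Finset.mem_union.1 hb with hb | hb
    · exact .inl hb
    · exact .inr ⟨fun e => hcon a ha (e ▸ hab.symm), hb⟩
  have h1 := h.massed.le I _ subset_rfl hsep (Finset.card_erase_lt_of_mem hs)
  have h2 : cnt G I S ≤ cnt G I (S.erase s) := by
    refine Finset.card_le_card ?_
    rintro ⟨a, b⟩ hab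
    rw [mem_prs] at hab ⊢
    rw [Finset.mem_erase, Finset.mem_erase]
    obtain ⟨⟨h3, h4⟩, h5, h6⟩ := hab
    refine ⟨⟨h3.imp_right fun h => ⟨?_, h⟩, h4.imp_right fun h => ⟨?_, h⟩⟩, h5, h6⟩
    · rintro rfl
      exact hcon b (h6.resolve_left fun h' => Finset.disjoint_left.1 hd h' hs) h5
    · rintro rfl
      exact hcon a (h6.resolve_right fun h' => Finset.disjoint_left.1 hd h' hs) h5.symm
  have := h.massed.gt
  omega

/-- If all degrees were at least thirty, the degree sum over `I` together with the many neighbours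
in `I` of one vertex of `S` would exceed the edge count. -/
theorem exists_low_degree (h : Bad G I S) (hc : cnt G I S ≤ 30 * I.card + 2) :
    ∃ v ∈ I, nb G (I ∪ S) v ≤ 29 := by
  by_contra hcon
  push Not at hcon
  have hS : S.Nonempty := by
    rw [Finset.nonempty_iff_ne_empty]
    rintro rfl
    exact h.not_knit fun K κ _ => ⟨κ, by simp, by simp⟩
  obtain ⟨s, hs⟩ := hS
  obtain ⟨v, hv, hsv⟩ := h.exists_nbr hs
  have h1 := h.common_S hs hv hsv
  have h2 : nb G S v ≤ S.card := Finset.card_filter_le _ _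
  have h3 : (I.filter fun w => G.Adj v w ∧ G.Adj s w).card ≤ nb G I s := by
    refine Finset.card_le_card fun w hw => ?_
    rw [Finset.mem_filter] at hw ⊢
    exact ⟨hw.1, hw.2.2⟩
  have h4 := sum_le_cnt h.massed.disj (G := G) hs
  have h5 : I.card * 30 ≤ ∑ a ∈ I, nb G (I ∪ S) a := by
    rw [← smul_eq_mul]
    exact Finset.card_nsmul_le_sum _ _ _ hcon
  have := h.le8
  omega

theorem nb_union (h : Bad G I S) (v : V) : nb G (I ∪ S) v = nb G I v + nb G S v := by
  unfold nb
  rw [Finset.filter_union, Finset.card_union_of_disjoint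
    (Finset.disjoint_filter_filter h.massed.disj)]

/-- A vertex of `I` is not isolated, and `common_I` or `common_S` applies to any edge at it. -/
theorem sixteen_le (h : Bad G I S) {v : V} (hv : v ∈ I) : 16 ≤ nb G (I ∪ S) v := by
  by_cases hex : ∃ u ∈ I ∪ S, G.Adj v u
  · obtain ⟨u, hu, hvu⟩ := hex
    by_cases huI : u ∈ I
    · have h1 := h.common_I huI hv hvu.symm
      have h2 : (insert u ((I ∪ S).filter fun w => G.Adj v w ∧ G.Adj u w)).card ≤
          nb G (I ∪ S) v := by
        refine Finset.card_le_card fun w hw => ?_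
        rw [Finset.mem_insert, Finset.mem_filter] at hw
        rw [Finset.mem_filter]
        rcases hw with rfl | hw
        · exact ⟨hu, hvu⟩
        · exact ⟨hw.1, hw.2.1⟩
      rw [Finset.card_insert_of_notMem (by simp)] at h2
      omega
    · have h1 := h.common_S ((Finset.mem_union.1 hu).resolve_left huI) hv hvu.symm
      have h2 : (I.filter fun w => G.Adj v w ∧ G.Adj u w).card ≤ nb G I v := by
        refine Finset.card_le_card fun w hw => ?_
        rw [Finset.mem_filter] at hw ⊢
        exact ⟨hw.1, hw.2.1⟩
      rw [h.nb_union]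
      omega
  · -- an isolated vertex is a knitted piece with few edges
    push Not at hex
    have hsep : Sep G (I ∪ S) {v} ∅ := by
      refine ⟨?_, Finset.disjoint_empty_right _, ?_⟩
      · rw [Finset.union_empty, Finset.singleton_subset_iff]
        exact Finset.mem_union_left _ hv
      · intro a ha b hb hab
        rw [Finset.mem_singleton] at ha
        exact absurd (ha ▸ hab) (hex b hb)
    have hcnt : cnt G {v} ∅ = 0 := by
      rw [cnt, Finset.card_eq_zero, Finset.eq_empty_iff_forall_notMem]
      rintro ⟨a, b⟩ hab
      simp only [mem_prs, Finset.mem_singleton, Finset.notMem_empty, or_false] at hab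
      obtain ⟨⟨rfl, rfl⟩, hab, _⟩ := hab
      exact hab.ne rfl
    exact (h.no_rigid (Finset.singleton_subset_iff.2 hv) ⟨v, Finset.mem_singleton_self v⟩ hsep
      (by omega) fun K κ _ => ⟨κ, by simp, by simp⟩).elim

/-- The closed neighbourhood of a vertex of small degree is dense enough to finish. -/
theorem sparse_false (h : Bad G I S) (hc : cnt G I S ≤ 30 * I.card + 2) : False := by
  obtain ⟨v, hv, hdeg⟩ := h.exists_low_degree hc
  have hd := h.massed.disj
  have hvS : v ∉ S := Finset.disjoint_left.1 hd hv
  set N := (I ∪ S).filter fun z => G.Adj v z with hN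
  have hNc : N.card = nb G (I ∪ S) v := rfl
  have hNm : ∀ z, z ∈ N ↔ z ∈ I ∪ S ∧ G.Adj v z := fun z => by rw [hN, Finset.mem_filter]
  clear_value N
  have hvN : v ∉ N := fun hvN => ((hNm v).1 hvN).2.ne rfl
  set H := insert v N with hH
  have hHm : ∀ z, z ∈ H ↔ z = v ∨ z ∈ I ∪ S ∧ G.Adj v z := fun z => by
    rw [hH, Finset.mem_insert, hNm]
  have hHc : H.card ≤ 30 := by
    rw [hH, Finset.card_insert_of_notMem hvN]
    omega
  clear_value H
  have hHA : H ⊆ I ∪ S := by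
    intro z hz
    rcases (hHm z).1 hz with rfl | hz
    · exact Finset.mem_union_left _ hv
    · exact hz.1
  set X := S.filter fun z => G.Adj v z with hX
  have hXm : ∀ z, z ∈ X ↔ z ∈ S ∧ G.Adj v z := fun z => by rw [hX, Finset.mem_filter]
  have hXc : X.card = nb G S v := rfl
  clear_value X
  have hXH : ∀ z ∈ H, z ∈ S → z ∈ X := by
    intro z hz hzS
    rcases (hHm z).1 hz with rfl | hz
    · exact absurd hzS hvS
    · exact (hXm z).2 ⟨hzS, hz.2⟩
  have hmain := knit_or_hub (G := G) (H := H) (X := X) (v := v) ((hHm v).2 (.inl rfl)) hHc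
    (fun z hz hzv => (((hHm z).1 hz).resolve_left hzv).2) (fun hvX => hvS ((hXm v).1 hvX).1) ?_ ?_
  · rcases hmain with ⟨L, hLH, hL⟩ | ⟨h8, hk⟩
    · refine h.no_target (J := ∅) (T := L) (Finset.empty_subset _) (hLH.trans hHA)
        (Finset.disjoint_empty_left _) (by simp) (.inr hL.1) fun Z hZ hZ8 _ => ?_
      rw [Finset.empty_union]
      exact hL.knit hZ hZ8
    · refine h.no_target (J := ∅) (T := H) (Finset.empty_subset _) hHA
        (Finset.disjoint_empty_left _) (by simp) (.inr h8) fun Z hZ hZ8 hZS => ?_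
      rw [Finset.empty_union]
      refine hk Z hZ hZ8 fun z hz => hZS ?_
      obtain ⟨h1, h2⟩ := (hXm z).1 hz
      exact Finset.mem_inter.2 ⟨(hHm z).2 (.inr ⟨Finset.mem_union_right _ h1, h2⟩), h1⟩
  · intro u hu huX
    rcases (hHm u).1 hu with rfl | hu'
    · have h1 := h.sixteen_le hv
      refine h1.trans (Finset.card_le_card fun z hz => ?_)
      rw [Finset.mem_filter] at hz ⊢
      exact ⟨(hHm z).2 (.inr hz), hz.2⟩
    · have huI : u ∈ I := (Finset.mem_union.1 hu'.1).resolve_right fun huS => huX (hXH u hu huS)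
      have h1 := h.common_I huI hv hu'.2.symm
      have h2 : (insert v ((I ∪ S).filter fun w => G.Adj v w ∧ G.Adj u w)).card ≤ nb G H u := by
        refine Finset.card_le_card fun w hw => ?_
        rw [Finset.mem_insert, Finset.mem_filter] at hw
        rw [Finset.mem_filter, hHm]
        rcases hw with rfl | hw
        · exact ⟨.inl rfl, hu'.2.symm⟩
        · exact ⟨.inr ⟨hw.1, hw.2.1⟩, hw.2.2⟩
      rw [Finset.card_insert_of_notMem (by simp)] at h2
      omega
  · intro x hx
    obtain ⟨hxS, hvx⟩ := (hXm x).1 hx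
    have h1 := h.common_S hxS hv hvx.symm
    have h2 : (insert v (I.filter fun w => G.Adj v w ∧ G.Adj x w)).card ≤ nb G (H \ X) x := by
      refine Finset.card_le_card fun w hw => ?_
      rw [Finset.mem_insert, Finset.mem_filter] at hw
      rw [Finset.mem_filter, Finset.mem_sdiff, hHm, hXm]
      rcases hw with rfl | hw
      · exact ⟨⟨.inl rfl, fun h => hvS h.1⟩, hvx.symm⟩
      · exact ⟨⟨.inr ⟨Finset.mem_union_left _ hw.1, hw.2.1⟩,
          fun h => Finset.disjoint_left.1 hd hw.1 h.1⟩, hw.2.2⟩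
    rw [Finset.card_insert_of_notMem (by simp)] at h2
    omega

end Bad

/-- Massed pairs with at most eight roots are knitted. -/
theorem Massed.knit (n : ℕ) : ∀ (G : SimpleGraph V) (I S : Finset V), I.card = n → S.card ≤ 8 →
    Massed G I S → Knit G (I ∪ S) S := by
  induction n using Nat.strong_induction_on with
  | _ n ih =>
  intro G I S hn hS hm
  by_contra hk
  have h : Bad G I S := ⟨hm, hS, fun G' I' S' h1 h2 h3 => ih _ (hn ▸ h1) G' I' S' rfl h2 h3, hk⟩
  obtain ⟨G', h', hc⟩ := Bad.exists_sparse _ G rfl h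
  exact h'.sparse_false hc

theorem le_degree [Fintype V] {G : SimpleGraph V} {t : ℕ} (h : KConnected G t) (v : V) :
    t ≤ nb G Finset.univ v := by
  by_contra hlt
  push Not at hlt
  set N := Finset.univ.filter fun z => G.Adj v z with hN
  have hlt' : N.card < t := hlt
  have hvN : v ∉ N := by simp [hN]
  -- another vertex outside the neighbourhood cannot be reached from `v`
  have hex : ∃ w, w ∉ insert v N := by
    by_contra hcon
    push Not at hcon
    have h1 := Finset.card_le_card fun x (_ : x ∈ Finset.univ) => hcon x
    rw [Finset.card_insert_of_notMem hvN, Finset.card_univ] at h1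
    have := h.1
    omega
  obtain ⟨w, hw⟩ := hex
  rw [Finset.mem_insert, not_or] at hw
  obtain ⟨p⟩ := (h.2 N hlt').preconnected ⟨v, hvN⟩ ⟨w, hw.2⟩
  cases p with
  | nil => exact hw.1 rfl
  | @cons _ b _ hab _ => exact b.2 (by simpa [hN] using hab)

/-- All degrees are at least thirty, which gives the edge count; a separation of order less than
eight with nonempty inner part would disconnect `G`. -/
theorem massed_of_connected [Fintype V] {G : SimpleGraph V} (h : KConnected G 30) {S : Finset V}
    (hS : S.card = 8) : Massed G Sᶜ S := by
  have hun : Sᶜ ∪ S = Finset.univ := by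
    rw [Finset.union_comm]; exact Finset.union_compl S
  have hd : Disjoint Sᶜ S := disjoint_compl_left
  have hdeg := le_degree h
  refine ⟨hd, ?_, ?_⟩
  · obtain ⟨s, hs⟩ := Finset.card_pos.1 (by omega : 0 < S.card)
    have h1 := sum_le_cnt hd (G := G) hs
    have h2 : Sᶜ.card * 30 ≤ ∑ a ∈ Sᶜ, nb G (Sᶜ ∪ S) a := by
      rw [← smul_eq_mul, hun]
      exact Finset.card_nsmul_le_sum _ _ _ fun a _ => hdeg a
    have h3 : nb G Finset.univ s ≤ nb G Sᶜ s + S.card := by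
      refine le_trans (Finset.card_le_card ?_) (Finset.card_union_le _ _)
      intro w hw
      rw [Finset.mem_union, Finset.mem_filter, Finset.mem_compl]
      by_cases hwS : w ∈ S
      · exact .inr hwS
      · exact .inl ⟨hwS, (Finset.mem_filter.1 hw).2⟩
    have := hdeg s
    omega
  · intro I' S' hI' hsep hcard
    rcases I'.eq_empty_or_nonempty with rfl | ⟨a, ha⟩
    · simp [cnt_empty]
    -- some vertex of `S` avoids the separating set, but is cut off from `I'`
    exfalso
    have hex : ∃ s ∈ S, s ∉ S' := by
      by_contra hcon
      push Not at hcon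
      have := Finset.card_le_card (show S ⊆ S' from hcon)
      omega
    obtain ⟨s, hs, hs'⟩ := hex
    have haS' : a ∉ S' := Finset.disjoint_left.1 hsep.2.1 ha
    obtain ⟨p⟩ := (h.2 S' (by omega)).preconnected ⟨a, haS'⟩ ⟨s, hs'⟩
    have key : ∀ (x y : {v : V | v ∉ S'}) (_ : (G.induce {v : V | v ∉ S'}).Walk x y),
        x.1 ∈ I' → y.1 ∈ I' := by
      intro x y p
      induction p with
      | nil => exact id
      | @cons x b _ hab _ ih =>
        intro hx
        refine ih ((Finset.mem_union.1 (hsep.2.2 x hx b (by simp [hun]) hab)).resolve_right b.2)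
    exact Finset.mem_compl.1 (hI' (key _ _ p ha)) hs

end
end LinkProof

open LinkProof in
theorem stmt8 {V : Type} [Fintype V] (G : SimpleGraph V) (hG : KConnected G 30) :
    Linked G 4 := by
  classical
  intro u v hinj
  set e : Fin 4 ⊕ Fin 4 → V := Sum.elim u v with he
  set S : Finset V := Finset.univ.image e with hS
  have hSc : S.card = 8 := by
    rw [hS, Finset.card_image_of_injective _ hinj]
    simp
  have hm := massed_of_connected hG hSc
  have hk := Massed.knit _ G _ S rfl hSc.le hm
  -- each terminal is coloured by the index of its pair
  obtain ⟨κ, hκe⟩ : ∃ κ : V → Fin 4, ∀ p, κ (e p) = Sum.elim id id p :=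
    ⟨fun x => Sum.elim id id (Function.invFun e x), fun p => by
      dsimp only
      rw [Function.leftInverse_invFun hinj p]⟩
  have hmem : ∀ p, e p ∈ S := fun p => Finset.mem_image_of_mem _ (Finset.mem_univ p)
  obtain ⟨col, h1, h2⟩ := hk (Fin 4) κ (by
    intro x hx y hy z hz hxy hyz
    obtain ⟨p, _, rfl⟩ := Finset.mem_image.1 hx
    obtain ⟨q, _, rfl⟩ := Finset.mem_image.1 hy
    obtain ⟨r, _, rfl⟩ := Finset.mem_image.1 hz
    rw [hκe, hκe] at hxy hyz
    rw [hinj.eq_iff, hinj.eq_iff, hinj.eq_iff]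
    clear hm hk
    rcases p with p | p <;> rcases q with q | q <;> rcases r with r | r <;>
      simp only [Sum.elim_inl, Sum.elim_inr, id_eq] at hxy hyz <;> subst hxy <;> subst hyz <;>
      simp)
  have hpath : ∀ i, ∃ w : G.Walk (u i) (v i), w.IsPath ∧ ∀ x ∈ w.support, col x = i := by
    intro i
    have h3 := h2 _ (hmem (.inl i)) _ (hmem (.inr i)) (by rw [hκe, hκe]; rfl)
    obtain ⟨w, hw, hw'⟩ := h3.exists_path
    exact ⟨w, hw, fun x hx => (hw' x hx).2.trans (hκe (.inl i))⟩
  choose P hP hP' using hpath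
  exact ⟨P, hP, fun i j hij x hx hx' => hij ((hP' i x hx).symm.trans (hP' j x hx'))⟩
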